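/- There exists a function f : ℕ × ℕ → ℕ with the following property: for every prime p, every natural number n, every natural number m, every finite soluble group G, and every automorphism φ of G of order p^n, if for every φ-invariant elementary abelian p'-section A/B of G the fixed-point subgroup C_{A/B}(φ) has order at most m, then the Fitting height of G is at most f(p^n, m). -/

import Mathlib

/-- The Fitting height of `G` is at most `N`: there is a chain of normal subgroups
`⊥ = H 0 ≤ H 1 ≤ … ≤ H N = ⊤` with all factors nilpotent. -/
def FittingHeightLE (G : Type*) [Group G] (N : ℕ) : Prop :=
  ∃ H : ℕ → Subgroup G, H 0 = ⊥ ∧ H N = ⊤ ∧ (∀ i, (H i).Normal) ∧ (∀ i, H i ≤ H (i + 1)) ∧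
    ∀ i < N, ∀ hn : ((H i).subgroupOf (H (i + 1))).Normal,
      letI := hn
      Group.IsNilpotent (H (i + 1) ⧸ (H i).subgroupOf (H (i + 1)))

/-- The subgroup `A` is invariant under the automorphism `φ`. -/
def PhiInvariant {G : Type*} [Group G] (φ : MulAut G) (A : Subgroup G) : Prop :=
  A.map φ.toMonoidHom = A

/-- `B ⊴ A` and the section `A/B` is an elementary abelian `r`-group for some prime
`r ≠ p`. -/
def IsElemAbelianPPrimeSection (p : ℕ) {G : Type*} [Group G] (A B : Subgroup G) : Prop :=
  B ≤ A ∧ (∀ a ∈ A, ∀ b ∈ B, a * b * a⁻¹ ∈ B) ∧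
    ∃ r : ℕ, r.Prime ∧ r ≠ p ∧
      (∀ a ∈ A, ∀ b ∈ A, a⁻¹ * b⁻¹ * a * b ∈ B) ∧ (∀ a ∈ A, a ^ r ∈ B)

/-- The number of fixed points of the automorphism induced by `φ` on the section `A/B`
(a coset `aB` is fixed iff `a⁻¹ · φ(a) ∈ B`). -/
noncomputable def sectionFixedCard {G : Type*} [Group G] (φ : MulAut G) (A B : Subgroup G) : ℕ :=
  Nat.card {x : A ⧸ B.subgroupOf A // ∃ a : A, QuotientGroup.mk a = x ∧ (a : G)⁻¹ * φ a ∈ B}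

/-!
Work in `X = G ⋊ ⟨φ⟩` and induct on `n`, where `g = φ` has order dividing `p ^ (n + 1)`: fixed
points on chief factors are inherited by the quotient of `X` by the normal closure `N` of
`g ^ p ^ n`, so only `N` is left. On a `p'`-chief factor, `N` induces a linear group generated by
the conjugates `s` of `g ^ p ^ n`, where each `s` is the `p ^ n`-th power of an element with at
most `d`-dimensional fixed-point space.

Let `C` be an abelian normal subgroup of that linear group. Each orbit of `g` on the weights of
`C` that `g ^ p ^ n` moves has full length and so contributes to the fixed points of `g`. Hence
every `s` moves boundedly many weights, and in a soluble group generated by such elements a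
derived subgroup of bounded depth fixes all weights, so it centralizes `C`.

A nonabelian nilpotent residual `D` of a deep derived subgroup `P` of `N` would have a normal
subgroup `E` of class two, not central in `D`, over the centre `A` of `D`. Consider the weight
space `U` of a weight of `A`. If some `s` moves the weight, then `U` has dimension at most `d`,
and the at most `d ^ 2` weights of the commutator pairing of `E` are fixed by a derived subgroup
of bounded depth. Otherwise write `s = y ^ p ^ n`; some power of `y` preserves `U`, has few fixed
points on it, and permutes the lines spanned by the operators of `E` on `U`, and comparing
dimensions of centralizers in `End U` shows that every `s` centralizes a subgroup of bounded index
in `E` modulo the radical of the pairing; thus on chief factors between this radical and `E` the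
group `N` is generated by elements of small displacement rank, and has bounded derived length. In
both cases `[E, P, …, P]` reaches the radical for every weight, so `D` centralizes `E`, a
contradiction.

Therefore `Y = ⁅D, D⁆`, formed in `X`, centralizes every `p'`-chief factor. The nilpotent residual
of such a `Y` is abelian modulo its largest normal `p`-subgroup, so `Y` contributes at most three
to the Fitting height. For `g = 1` the `p'`-chief factors have order at most `m`, and a derived
subgroup of depth `m!` centralizes them.
-/

namespace AlmostFixedPointFree

open Module Subgroup
open scoped commutatorElement TensorProduct

/-! ### Derived series and nilpotent residual of a subgroup -/

section IteratedCommutators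

variable {G Q : Type*} [Group G] [Group Q]

/-- The derived series of a subgroup `N`, with all terms taken inside the ambient group. -/
def iteratedDerived (N : Subgroup G) : ℕ → Subgroup G
  | 0 => N
  | i + 1 => ⁅iteratedDerived N i, iteratedDerived N i⁆

/-- The left-normed commutator `[E, D, …, D]` with `i` entries `D`. -/
def iteratedCommutator (E D : Subgroup G) : ℕ → Subgroup G
  | 0 => E
  | i + 1 => ⁅iteratedCommutator E D i, D⁆

/-- The intersection of the lower central series of `D`; for finite `D` it is the smallest normal
subgroup of `D` with nilpotent quotient. -/
def nilpotentResidual (D : Subgroup G) : Subgroup G := ⨅ i, D.lowerCentralSeries i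

lemma iteratedDerived_succ (N : Subgroup G) (i : ℕ) :
    iteratedDerived N (i + 1) = ⁅iteratedDerived N i, iteratedDerived N i⁆ := rfl

lemma iteratedCommutator_succ (E D : Subgroup G) (i : ℕ) :
    iteratedCommutator E D (i + 1) = ⁅iteratedCommutator E D i, D⁆ := rfl

instance iteratedDerived_normal (N : Subgroup G) [N.Normal] (i : ℕ) :
    (iteratedDerived N i).Normal := by
  induction i with
  | zero => assumption
  | succ i ih => rw [iteratedDerived_succ]; infer_instance

instance iteratedCommutator_normal (E D : Subgroup G) [E.Normal] [D.Normal] (i : ℕ) :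
    (iteratedCommutator E D i).Normal := by
  induction i with
  | zero => assumption
  | succ i ih => rw [iteratedCommutator_succ]; infer_instance

instance nilpotentResidual_normal (D : Subgroup G) [D.Normal] : (nilpotentResidual D).Normal :=
  normal_iInf_normal fun i ↦ by infer_instance

lemma iteratedDerived_add (N : Subgroup G) (i j : ℕ) :
    iteratedDerived N (i + j) = iteratedDerived (iteratedDerived N i) j := by
  induction j with
  | zero => rfl
  | succ j ih => rw [← add_assoc, iteratedDerived_succ, iteratedDerived_succ, ih]

lemma iteratedDerived_antitone (N : Subgroup G) : Antitone (iteratedDerived N) :=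
  antitone_nat_of_succ_le fun _ ↦ commutator_le_self _

lemma iteratedDerived_le (N : Subgroup G) (i : ℕ) : iteratedDerived N i ≤ N :=
  iteratedDerived_antitone N (Nat.zero_le i)

lemma map_iteratedDerived (f : G →* Q) (N : Subgroup G) (i : ℕ) :
    (iteratedDerived N i).map f = iteratedDerived (N.map f) i := by
  induction i with
  | zero => rfl
  | succ i ih => rw [iteratedDerived_succ, iteratedDerived_succ, map_commutator, ih]

lemma iteratedDerived_top (i : ℕ) : iteratedDerived (⊤ : Subgroup G) i = derivedSeries G i := by
  induction i with
  | zero => rfl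
  | succ i ih => rw [iteratedDerived_succ, derivedSeries_succ, ih]

lemma iteratedDerived_eq_map_derivedSeries (N : Subgroup G) (i : ℕ) :
    iteratedDerived N i = (derivedSeries N i).map N.subtype := by
  rw [← iteratedDerived_top, map_iteratedDerived, ← MonoidHom.range_eq_map, range_subtype]

lemma exists_iteratedDerived_eq_bot (N : Subgroup G) [Group.IsSolvable N] :
    ∃ i, iteratedDerived N i = ⊥ := by
  obtain ⟨i, hi⟩ := Group.IsSolvable.solvable (G := N)
  exact ⟨i, by rw [iteratedDerived_eq_map_derivedSeries, hi, Subgroup.map_bot]⟩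

lemma iteratedCommutator_antitone (E D : Subgroup G) [E.Normal] [D.Normal] :
    Antitone (iteratedCommutator E D) :=
  antitone_nat_of_succ_le fun _ ↦ commutator_le_left _ _

lemma iteratedCommutator_mono {D D' : Subgroup G} (E : Subgroup G) (h : D ≤ D') (i : ℕ) :
    iteratedCommutator E D i ≤ iteratedCommutator E D' i := by
  induction i with
  | zero => exact le_rfl
  | succ i ih => exact commutator_mono ih h

lemma iteratedCommutator_commutator (E D : Subgroup G) (i : ℕ) :
    iteratedCommutator ⁅E, D⁆ D i = iteratedCommutator E D (i + 1) := by
  induction i with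
  | zero => rfl
  | succ i ih => rw [iteratedCommutator_succ, ih, ← iteratedCommutator_succ]

lemma map_iteratedCommutator (f : G →* Q) (E D : Subgroup G) (i : ℕ) :
    (iteratedCommutator E D i).map f = iteratedCommutator (E.map f) (D.map f) i := by
  induction i with
  | zero => rfl
  | succ i ih => rw [iteratedCommutator_succ, iteratedCommutator_succ, map_commutator, ih]

lemma lowerCentralSeries_mono {S T : Subgroup G} (h : S ≤ T) (i : ℕ) :
    S.lowerCentralSeries i ≤ T.lowerCentralSeries i := by
  induction i with
  | zero => exact h
  | succ i ih => exact commutator_mono ih h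

lemma nilpotentResidual_le (D : Subgroup G) : nilpotentResidual D ≤ D := iInf_le _ 0

lemma map_nilpotentResidual_le (f : G →* Q) (D : Subgroup G) :
    (nilpotentResidual D).map f ≤ nilpotentResidual (D.map f) := by
  refine le_iInf fun i ↦ ?_
  rw [← map_lowerCentralSeries]
  exact map_mono (iInf_le _ i)

lemma exists_nilpotentResidual_eq [Finite G] (D : Subgroup G) :
    ∃ i, nilpotentResidual D = D.lowerCentralSeries i := by
  obtain ⟨i, hi⟩ := WellFoundedLT.antitone_chain_condition D.lowerCentralSeries_antitone
  refine ⟨i, le_antisymm (iInf_le _ i) (le_iInf fun j ↦ ?_)⟩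
  rcases le_total i j with h | h
  · exact (hi j h).le
  · exact D.lowerCentralSeries_antitone h

lemma commutator_commutator_le_of_rotate {A B C : Subgroup G} (K : Subgroup G) [K.Normal]
    (h1 : ⁅⁅B, C⁆, A⁆ ≤ K) (h2 : ⁅⁅C, A⁆, B⁆ ≤ K) : ⁅⁅A, B⁆, C⁆ ≤ K := by
  have le_iff_map (H : Subgroup G) : H ≤ K ↔ H.map (QuotientGroup.mk' K) = ⊥ := by
    rw [Subgroup.map_eq_bot_iff, QuotientGroup.ker_mk']
  rw [le_iff_map, map_commutator, map_commutator] at *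
  exact commutator_commutator_eq_bot_of_rotate h1 h2

lemma commutator_lowerCentralSeries_le (E D : Subgroup G) [E.Normal] [D.Normal] (i : ℕ) :
    ⁅E, D.lowerCentralSeries i⁆ ≤ iteratedCommutator E D (i + 1) := by
  induction i generalizing E with
  | zero => exact le_rfl
  | succ i ih =>
    rw [commutator_comm, Subgroup.lowerCentralSeries_succ]
    apply commutator_commutator_le_of_rotate
    · rw [commutator_comm D E, ← iteratedCommutator_commutator]
      exact ih ⁅E, D⁆
    · exact commutator_mono (ih E) le_rfl

lemma commutator_nilpotentResidual_le (E D : Subgroup G) [E.Normal] [D.Normal] (i : ℕ) :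
    ⁅E, nilpotentResidual D⁆ ≤ iteratedCommutator E D i :=
  (commutator_mono le_rfl (iInf_le _ i)).trans <|
    (commutator_lowerCentralSeries_le E D i).trans (iteratedCommutator_antitone E D i.le_succ)

lemma card_derivedSeries_add_le_or_eq_bot [Finite G] [Group.IsSolvable G] (i : ℕ) :
    Nat.card (derivedSeries G i) + i ≤ Nat.card G ∨ derivedSeries G i = ⊥ := by
  induction i with
  | zero => simp
  | succ i ih =>
    by_cases hb : derivedSeries G i = ⊥
    · exact .inr (le_bot_iff.1 (hb ▸ derivedSeries_antitone G i.le_succ))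
    · have hlt : derivedSeries G (i + 1) < derivedSeries G i :=
        Group.IsSolvable.commutator_lt_of_ne_bot hb
      have hcard : Nat.card (derivedSeries G (i + 1)) < Nat.card (derivedSeries G i) :=
        Set.Finite.card_lt_card (Set.toFinite _) (SetLike.coe_ssubset_coe.2 hlt)
      have := ih.resolve_right hb
      omega

lemma derivedSeries_eq_bot_of_card_le [Finite G] [Group.IsSolvable G] {k : ℕ}
    (hk : Nat.card G ≤ k) : derivedSeries G k = ⊥ := by
  refine (card_derivedSeries_add_le_or_eq_bot k).resolve_left fun h ↦ ?_
  have : 0 < Nat.card (derivedSeries G k) := Nat.card_pos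
  omega

lemma exists_derivedSeries_not_le [Group.IsSolvable G] {Y : Subgroup G} (hY : Y ≠ ⊤) :
    ∃ i, ¬ derivedSeries G i ≤ Y ∧ derivedSeries G (i + 1) ≤ Y := by
  by_contra! hstep
  have not_le (i : ℕ) : ¬ derivedSeries G i ≤ Y := by
    induction i with
    | zero => exact fun h ↦ hY (top_le_iff.1 h)
    | succ i ih => exact hstep i ih
  obtain ⟨n, hn⟩ := Group.IsSolvable.solvable (G := G)
  exact not_le n (hn ▸ bot_le)

end IteratedCommutators

/-! ### Soluble permutation groups generated by elements of small support -/

section PermutationActions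

variable {Γ : Type*} [Group Γ] {α : Type*} [MulAction Γ α]

lemma iteratedDerived_factorial_smul_eq {K : Subgroup Γ} [Group.IsSolvable K] {T : Set α}
    (hfin : T.Finite) {n : ℕ} (hT : T.ncard ≤ n) (hK : ∀ k ∈ K, ∀ t ∈ T, k • t ∈ T) :
    ∀ x ∈ iteratedDerived K n.factorial, ∀ t ∈ T, x • t = t := by
  have : Finite T := hfin
  let f : K →* Equiv.Perm T :=
    { toFun := fun k ↦ ⟨fun t ↦ ⟨(k : Γ) • (t : α), hK k k.2 t t.2⟩,
        fun t ↦ ⟨(k : Γ)⁻¹ • (t : α), hK _ (K.inv_mem k.2) t t.2⟩,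
        fun t ↦ by simp, fun t ↦ by simp⟩
      map_one' := by ext; simp
      map_mul' := fun a b ↦ by ext; simp [mul_smul] }
  have : Group.IsSolvable f.range := Group.isSolvable_of_surjective f.rangeRestrict_surjective
  have hcard : Nat.card f.range ≤ n.factorial := by
    refine (Nat.le_of_dvd Nat.card_pos (card_subgroup_dvd_card f.range)).trans ?_
    rw [Nat.card_perm]
    exact Nat.factorial_le hT
  intro x hx t ht
  rw [iteratedDerived_eq_map_derivedSeries] at hx
  obtain ⟨y, hy, rfl⟩ := hx
  have hfy : f.rangeRestrict y ∈ derivedSeries f.range n.factorial :=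
    map_derivedSeries_le_derivedSeries f.rangeRestrict _ ⟨y, hy, rfl⟩
  rw [derivedSeries_eq_bot_of_card_le hcard, Subgroup.mem_bot] at hfy
  exact congrArg (fun e : Equiv.Perm T ↦ ((e ⟨t, ht⟩ : T) : α)) (congrArg Subtype.val hfy)

lemma card_le_two_mul_ncard_moved [Finite α] (A : Subgroup Γ) [A.Normal]
    (htrans : ∀ x y : α, ∃ a ∈ A, a • x = y)
    (hcomm : ∀ a ∈ A, ∀ b ∈ A, ∀ x : α, a • b • x = b • a • x) {s : Γ} (hs : ∃ x : α, s • x ≠ x) :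
    Nat.card α ≤ 2 * {x : α | s • x ≠ x}.ncard := by
  have hsum := Set.ncard_add_ncard_compl {x : α | s • x ≠ x}
  suffices {x : α | s • x ≠ x}ᶜ.ncard ≤ {x : α | s • x ≠ x}.ncard by omega
  rcases {x : α | s • x ≠ x}ᶜ.eq_empty_or_nonempty with hempty | ⟨x₀, hx₀⟩
  · simp [hempty]
  have hx₀ : s • x₀ = x₀ := by simpa using hx₀
  have hx₀' : s⁻¹ • x₀ = x₀ := by rw [inv_smul_eq_iff, hx₀]
  obtain ⟨y, hy⟩ := hs
  obtain ⟨b, hb, rfl⟩ := htrans x₀ y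
  -- `b` moves every fixed point of `s` to a moved one: otherwise the commutator of `b` and `s`
  -- fixes a point, hence by commutativity and transitivity all points, and then `s` fixes `b • x₀`.
  refine Set.ncard_le_ncard_of_injOn (b • ·) ?_ (MulAction.injective b).injOn (Set.toFinite _)
  intro x hx (hbx : s • b • x = b • x)
  have hx : s • x = x := by simpa using hx
  apply hy
  have hw : b⁻¹ * (s * b * s⁻¹) ∈ A := A.mul_mem (A.inv_mem hb) (Normal.conj_mem ‹_› b hb s)
  obtain ⟨a, ha, rfl⟩ := htrans x₀ x
  have hfix : (b⁻¹ * (s * b * s⁻¹)) • a • x₀ = a • x₀ := by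
    have : s⁻¹ • a • x₀ = a • x₀ := by rw [inv_smul_eq_iff, hx]
    rw [mul_smul, mul_smul, mul_smul, this, hbx, inv_smul_smul]
  rw [hcomm _ hw _ ha] at hfix
  have hfix₀ := smul_left_cancel _ hfix
  rwa [mul_smul, mul_smul, mul_smul, inv_smul_eq_iff, hx₀'] at hfix₀

lemma index_le_two_mul_ncard_moved_of_isCoatom [Group.IsSolvable Γ] {Y : Subgroup Γ}
    [Y.FiniteIndex] (hY : IsCoatom Y) {s : Γ} (hs : s ∉ Y) :
    Y.index ≤ 2 * {x : Γ ⧸ Y | s • x ≠ x}.ncard := by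
  obtain ⟨i, hi, hi'⟩ := exists_derivedSeries_not_le hY.1
  set A := derivedSeries Γ i
  have hAY : A ⊔ Y = ⊤ := hY.2 _ (right_lt_sup.2 hi)
  refine card_le_two_mul_ncard_moved A (fun x y ↦ ?_) (fun a ha b hb x ↦ ?_)
    ⟨((1 : Γ) : Γ ⧸ Y), fun h ↦ hs ?_⟩
  · induction x using QuotientGroup.induction_on with | H g =>
    induction y using QuotientGroup.induction_on with | H h =>
    have hgh : g⁻¹ * h ∈ A ⊔ Y := hAY ▸ mem_top _
    rw [mem_sup_of_normal_left] at hgh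
    obtain ⟨a, ha, y, hy, hay⟩ := hgh
    refine ⟨g * a * g⁻¹, Normal.conj_mem inferInstance a ha g, QuotientGroup.eq.2 ?_⟩
    have : (g * a * g⁻¹ * g)⁻¹ * h = a⁻¹ * (g⁻¹ * h) := by group
    simpa only [smul_eq_mul, this, ← hay, inv_mul_cancel_left] using hy
  · induction x using QuotientGroup.induction_on with | H g =>
    refine QuotientGroup.eq.2 (hi' ?_)
    have : (a * (b * g))⁻¹ * (b * (a * g)) = g⁻¹ * ⁅b⁻¹, a⁻¹⁆ * (g⁻¹)⁻¹ := by
      rw [commutatorElement_def]; group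
    simp only [smul_eq_mul, this]
    exact Normal.conj_mem inferInstance _
      (commutator_mem_commutator (A.inv_mem hb) (A.inv_mem ha)) _
  · simpa using QuotientGroup.eq.1 (h : ((s * 1 : Γ) : Γ ⧸ Y) = ((1 : Γ) : Γ ⧸ Y))

lemma ncard_moved_mul_relIndex_le {Y Y' : Subgroup Γ} [Y.FiniteIndex] (hle : Y ≤ Y') (s : Γ) :
    {x : Γ ⧸ Y' | s • x ≠ x}.ncard * Y.relIndex Y' ≤ {x : Γ ⧸ Y | s • x ≠ x}.ncard := by
  let e := quotientEquivProdOfLE hle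
  have he (z : Γ ⧸ Y) : (e (s • z)).1 = s • (e z).1 := by
    induction z using QuotientGroup.induction_on with | H g => rfl
  rw [relIndex, index, ← Nat.card_coe_set_eq, ← Nat.card_coe_set_eq, ← Nat.card_prod]
  refine Nat.card_le_card_of_injective
    (fun uv : {x : Γ ⧸ Y' | s • x ≠ x} × (Y' ⧸ Y.subgroupOf Y') ↦
      (⟨e.symm (uv.1.1, uv.2), fun h ↦ uv.1.2 ?_⟩ : {x : Γ ⧸ Y | s • x ≠ x})) ?_
  · simpa only [he, Equiv.apply_symm_apply] using congrArg (fun z ↦ (e z).1) h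
  · rintro ⟨⟨u, hu⟩, v⟩ ⟨⟨u', hu'⟩, v'⟩ h
    simpa using e.symm.injective (congrArg Subtype.val h)

lemma index_le_two_mul_of_ncard_moved_le [Finite Γ] [Group.IsSolvable Γ] {Y : Subgroup Γ}
    (hY : Y ≠ ⊤) {S : Set Γ} (hS : closure S = ⊤) {c : ℕ}
    (hc : ∀ s ∈ S, {x : Γ ⧸ Y | s • x ≠ x}.ncard ≤ c) : Y.index ≤ 2 * c := by
  obtain ⟨Y', hY', hle⟩ := (eq_top_or_exists_le_coatom Y).resolve_left hY
  obtain ⟨s, hsS, hs⟩ : ∃ s ∈ S, s ∉ Y' := by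
    by_contra! hSY
    exact hY'.1 (top_le_iff.1 (hS ▸ (closure_le _).2 hSY))
  calc Y.index = Y'.index * Y.relIndex Y' := by rw [mul_comm, relIndex_mul_index hle]
    _ ≤ 2 * {x : Γ ⧸ Y' | s • x ≠ x}.ncard * Y.relIndex Y' :=
      Nat.mul_le_mul_right _ (index_le_two_mul_ncard_moved_of_isCoatom hY' hs)
    _ ≤ 2 * c := by
      rw [mul_assoc]
      exact Nat.mul_le_mul_left _ ((ncard_moved_mul_relIndex_le hle s).trans (hc s hsS))

lemma ncard_orbit_le_of_ncard_moved_le {K : Subgroup Γ} [Finite K] [Group.IsSolvable K]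
    {S : Set Γ} (hS : closure S = K) {T : Set α} (hT : ∀ k ∈ K, ∀ t ∈ T, k • t ∈ T)
    (hTf : T.Finite) {c : ℕ} (hc : ∀ s ∈ S, {x ∈ T | s • x ≠ x}.ncard ≤ c) {a : α} (ha : a ∈ T) :
    (MulAction.orbit K a).ncard ≤ 2 * c + 1 := by
  rw [← Nat.card_coe_set_eq, Nat.card_congr (MulAction.orbitEquivQuotientStabilizer K a)]
  change (MulAction.stabilizer K a).index ≤ _
  by_cases hY : MulAction.stabilizer K a = ⊤
  · rw [hY, index_top]; omega
  have hSK : closure (Subtype.val ⁻¹' S : Set K) = ⊤ := by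
    subst hS; exact closure_closure_coe_preimage
  refine (index_le_two_mul_of_ncard_moved_le hY hSK fun s hs ↦ ?_).trans (Nat.le_succ _)
  let e := MulAction.orbitEquivQuotientStabilizer K a
  refine (Set.ncard_le_ncard_of_injOn (fun x ↦ (e.symm x : α)) (fun x hx ↦ ?_)
    (fun x _ y _ h ↦ e.symm.injective (Subtype.ext h))
    (hTf.subset (Set.sep_subset _ _))).trans (hc s hs)
  induction x using QuotientGroup.induction_on with | H g =>
  refine ⟨hT g g.2 a ha, fun h ↦ hx (QuotientGroup.eq.2 ?_)⟩
  have h : s • g • a = g • a := h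
  rw [MulAction.mem_stabilizer_iff, mul_smul, inv_smul_eq_iff, eq_comm]
  exact (mul_smul s g a).trans h

lemma iteratedDerived_smul_eq_of_ncard_moved_le {K : Subgroup Γ} [Finite K] [Group.IsSolvable K]
    {S : Set Γ} (hS : closure S = K) {T : Set α} (hT : ∀ k ∈ K, ∀ t ∈ T, k • t ∈ T)
    (hTf : T.Finite) {c : ℕ} (hc : ∀ s ∈ S, {x ∈ T | s • x ≠ x}.ncard ≤ c) {a : α} (ha : a ∈ T) :
    ∀ x ∈ iteratedDerived K (2 * c + 1).factorial, x • a = a := by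
  intro x hx
  refine iteratedDerived_factorial_smul_eq (T := MulAction.orbit K a) (hTf.subset ?_)
    (ncard_orbit_le_of_ncard_moved_le hS hT hTf hc ha) ?_ x hx a (MulAction.mem_orbit_self a)
  · rintro _ ⟨k, rfl⟩
    exact hT k k.2 a ha
  · rintro k hk _ ⟨l, rfl⟩
    exact ⟨⟨k, hk⟩ * l, mul_smul _ _ _⟩

end PermutationActions

/-! ### Permuted direct sum decompositions -/

section CycleRepresentatives

variable {α : Type*} {τ : Equiv.Perm α} {q p a : ℕ}

lemma exists_cycle_representatives (τ : Equiv.Perm α) (X : Finset α) :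
    ∃ R ⊆ X, (∀ r ∈ R, ∀ r' ∈ R, τ.SameCycle r r' → r = r') ∧
      ∀ x ∈ X, ∃ r ∈ R, τ.SameCycle r x := by
  classical
  let cycle : α → Quotient (Equiv.Perm.SameCycle.setoid τ) := Quotient.mk _
  obtain ⟨R, hRX, hinj, himg⟩ := Finset.exists_subset_injOn_image_eq_of_surjOn (f := cycle) X
    (X.image cycle) (by rw [Finset.coe_image]; exact Set.surjOn_image _ _)
  refine ⟨R, hRX, fun r hr r' hr' h ↦ hinj hr hr' (Quotient.sound h), fun x hx ↦ ?_⟩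
  obtain ⟨r, hr, hrx⟩ := Finset.mem_image.1 (himg ▸ Finset.mem_image_of_mem cycle hx)
  exact ⟨r, hr, Quotient.eq.1 hrx⟩

lemma exists_pow_apply_eq_of_sameCycle (hq : 0 < q) (hτ : τ ^ q = 1) {x y : α}
    (h : τ.SameCycle x y) : ∃ i < q, (τ ^ i) x = y := by
  obtain ⟨j, rfl⟩ := h
  have hq0 : (q : ℤ) ≠ 0 := by positivity
  have hτ' : τ ^ (q : ℤ) = 1 := by rw [zpow_natCast, hτ]
  lift j % q to ℕ using Int.emod_nonneg j hq0 with i hi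
  refine ⟨i, by exact_mod_cast hi ▸ Int.emod_lt_of_pos j (by positivity), ?_⟩
  rw [← zpow_natCast, hi, ← Int.emod_add_mul_ediv j q, zpow_add, zpow_mul, hτ', one_zpow, mul_one]
  simp

lemma card_le_mul_card_of_sameCycle (hq : 0 < q) (hτ : τ ^ q = 1) {X R : Finset α}
    (h : ∀ x ∈ X, ∃ r ∈ R, τ.SameCycle r x) : X.card ≤ q * R.card := by
  classical
  have hX : X ⊆ (Finset.range q ×ˢ R).image fun z ↦ (τ ^ z.1) z.2 := by
    intro x hx
    obtain ⟨r, hr, hrx⟩ := h x hx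
    obtain ⟨i, hi, rfl⟩ := exists_pow_apply_eq_of_sameCycle hq hτ hrx
    exact Finset.mem_image.2 ⟨(i, r), by simp [hi, hr], rfl⟩
  refine (Finset.card_le_card hX).trans (Finset.card_image_le.trans ?_)
  simp

lemma pow_apply_ne_of_pow_prime_pow_apply_ne (hp : p.Prime) (hτ : τ ^ p ^ a = 1) {x : α}
    (hx : (τ ^ p ^ (a - 1)) x ≠ x) {i : ℕ} (hi0 : 0 < i) (hi : i < p ^ a) : (τ ^ i) x ≠ x := by
  have isPeriodicPt_iff (k : ℕ) : Function.IsPeriodicPt τ k x ↔ (τ ^ k) x = x := by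
    rw [Function.IsPeriodicPt, Function.IsFixedPt, Equiv.Perm.iterate_eq_pow]
  intro h
  obtain ⟨j, hj, hper⟩ := (Nat.dvd_prime_pow hp).1
    ((isPeriodicPt_iff (p ^ a)).2 (by rw [hτ]; rfl)).minimalPeriod_dvd
  have hle := Nat.le_of_dvd hi0 ((isPeriodicPt_iff i).2 h).minimalPeriod_dvd
  have hja : j ≠ a := by rintro rfl; omega
  refine hx ((isPeriodicPt_iff _).1 <| (Function.isPeriodicPt_minimalPeriod τ x).trans_dvd ?_)
  rw [hper]
  exact pow_dvd_pow _ (by omega)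

lemma mul_card_le_card_of_regular {R B : Finset α} (hB : ∀ x ∈ B, τ x ∈ B) (hRB : R ⊆ B)
    (hR : ∀ r ∈ R, ∀ r' ∈ R, τ.SameCycle r r' → r = r')
    (hreg : ∀ r ∈ R, ∀ i, 0 < i → i < q → (τ ^ i) r ≠ r) : q * R.card ≤ B.card := by
  have hBi (i : ℕ) {x : α} (hx : x ∈ B) : (τ ^ i) x ∈ B := by
    induction i with
    | zero => simpa
    | succ i ih => rw [pow_succ']; exact hB _ ih
  have eq_of_le {i j : ℕ} {r r' : α} (hij : i ≤ j) (hj : j < q) (hr : r ∈ R) (hr' : r' ∈ R)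
      (h : (τ ^ i) r = (τ ^ j) r') : i = j ∧ r = r' := by
    have hsub : (τ ^ (j - i)) r' = r := by
      apply (τ ^ i).injective
      rw [h, ← Equiv.Perm.mul_apply, ← pow_add, Nat.add_sub_cancel' hij]
    obtain rfl := hR r' hr' r hr ⟨(j - i : ℕ), by rw [zpow_natCast, hsub]⟩
    by_contra! hne
    have : i ≠ j := fun h ↦ hne h rfl
    exact hreg r' hr' (j - i) (by omega) (by omega) hsub
  suffices (Finset.range q ×ˢ R).card ≤ B.card by simpa using this
  refine Finset.card_le_card_of_injOn (fun z ↦ (τ ^ z.1) z.2) ?_ ?_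
  · rintro ⟨i, r⟩ h
    simp only [Finset.coe_product, Set.mem_prod] at h
    exact hBi i (hRB h.2)
  · rintro ⟨i, r⟩ h ⟨j, r'⟩ h' (heq : (τ ^ i) r = (τ ^ j) r')
    simp only [Finset.coe_product, Set.mem_prod, Finset.coe_range, Set.mem_Iio, Finset.mem_coe]
      at h h'
    rcases le_total i j with hij | hij
    · obtain ⟨rfl, rfl⟩ := eq_of_le hij h'.1 h.2 h'.2 heq
      rfl
    · obtain ⟨rfl, rfl⟩ := eq_of_le hij h.1 h'.2 h.2 heq.symm
      rfl

lemma mul_card_representatives_le (hp : p.Prime) (hτ : τ ^ p ^ a = 1) {R B Bs : Finset α}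
    (hB : ∀ x ∈ B, τ x ∈ B) (hRB : R ⊆ B) (hR : ∀ r ∈ R, ∀ r' ∈ R, τ.SameCycle r r' → r = r')
    (hBs : ∀ x ∈ B, (τ ^ p ^ (a - 1)) x = x → x ∈ Bs) :
    p ^ a * R.card ≤ B.card + p ^ a * Bs.card := by
  classical
  have hfixed : (R.filter fun x ↦ ¬ (τ ^ p ^ (a - 1)) x ≠ x).card ≤ Bs.card := by
    refine Finset.card_le_card fun x hx ↦ ?_
    simp only [Finset.mem_filter, not_not] at hx
    exact hBs x (hRB hx.1) hx.2
  have hmoved : p ^ a * (R.filter fun x ↦ (τ ^ p ^ (a - 1)) x ≠ x).card ≤ B.card := by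
    refine mul_card_le_card_of_regular hB ((Finset.filter_subset _ _).trans hRB)
      (fun r hr r' hr' ↦ hR r (Finset.mem_of_mem_filter r hr) r' (Finset.mem_of_mem_filter r' hr'))
      fun r hr i hi0 hi ↦ pow_apply_ne_of_pow_prime_pow_apply_ne hp hτ ?_ hi0 hi
    exact (Finset.mem_filter.1 hr).2
  rw [← Finset.card_filter_add_card_filter_not fun x ↦ (τ ^ p ^ (a - 1)) x ≠ x, mul_add]
  exact Nat.add_le_add hmoved (Nat.mul_le_mul_left _ hfixed)

end CycleRepresentatives

section ProjectionFamily

variable {L : Type*} [Field L] {M : Type*} [AddCommGroup M] [Module L M] {α : Type*}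

/-- A decomposition of `M` as the direct sum of the submodules `W x`, encoded by the projections
onto the summands and the finite set of indices of the nonzero summands. -/
structure ProjectionFamily (W : α → Submodule L M) where
  proj : α → M →ₗ[L] M
  support : Finset α
  proj_mem : ∀ x v, proj x v ∈ W x
  proj_self : ∀ x v, v ∈ W x → proj x v = v
  proj_of_ne : ∀ x y v, x ≠ y → v ∈ W y → proj x v = 0
  mem_support : ∀ x, x ∈ support ↔ W x ≠ ⊥
  sum_proj : ∀ v, ∑ x ∈ support, proj x v = v

lemma nonempty_projectionFamily [FiniteDimensional L M] {W : α → Submodule L M}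
    (hindep : iSupIndep W) (htop : ⨆ x, W x = ⊤) : Nonempty (ProjectionFamily W) := by
  classical
  have hinternal : DirectSum.IsInternal W :=
    DirectSum.isInternal_submodule_of_iSupIndep_of_iSup_eq_top hindep htop
  have hfin : {x | W x ≠ ⊥}.Finite := WellFoundedGT.finite_ne_bot_of_iSupIndep hindep
  let e : DirectSum α (fun x ↦ W x) ≃ₗ[L] M :=
    LinearEquiv.ofBijective (DirectSum.coeLinearMap W) hinternal
  have he (x) (v : W x) : e.symm (v : M) = DirectSum.lof L α (fun x ↦ W x) x v := by
    rw [LinearEquiv.symm_apply_eq]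
    exact (DirectSum.coeLinearMap_lof W x v).symm
  let π (x : α) : M →ₗ[L] M :=
    (W x).subtype ∘ₗ DirectSum.component L α (fun x ↦ W x) x ∘ₗ e.symm.toLinearMap
  have hself (x v) (hv : v ∈ W x) : π x v = v := by
    simp only [π, LinearMap.comp_apply, LinearEquiv.coe_coe]
    rw [he x ⟨v, hv⟩, DirectSum.component.lof_self, Submodule.subtype_apply]
  have hne (x y v) (hxy : x ≠ y) (hv : v ∈ W y) : π x v = 0 := by
    simp only [π, LinearMap.comp_apply, LinearEquiv.coe_coe]
    rw [he y ⟨v, hv⟩, DirectSum.component.of, dif_neg hxy.symm, map_zero]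
  have hsupp (x) : x ∈ hfin.toFinset ↔ W x ≠ ⊥ := hfin.mem_toFinset
  refine ⟨⟨π, hfin.toFinset, fun x v ↦ (W x).coe_mem _, hself, hne, hsupp, fun v ↦ ?_⟩⟩
  have hv : v ∈ ⨆ x, W x := htop ▸ Submodule.mem_top
  induction hv using Submodule.iSup_induction' with
  | mem x v hv =>
    rw [Finset.sum_eq_single x (fun y _ hy ↦ hne y x v hy hv), hself x v hv]
    intro hx
    rw [not_not.1 (mt (hsupp x).2 hx), Submodule.mem_bot] at hv
    rw [hv, map_zero]
  | zero => simp
  | add u v _ _ hu hv => simp only [map_add, Finset.sum_add_distrib, hu, hv]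

variable {W : α → Submodule L M}

lemma ProjectionFamily.exists_ne_bot [Nontrivial M] (D : ProjectionFamily W) : ∃ x, W x ≠ ⊥ := by
  obtain ⟨v, hv⟩ := exists_ne (0 : M)
  rw [← D.sum_proj v] at hv
  obtain ⟨x, hx, -⟩ := Finset.exists_ne_zero_of_sum_ne_zero hv
  exact ⟨x, (D.mem_support x).1 hx⟩

lemma ProjectionFamily.linearIndependent (D : ProjectionFamily W) {ι : Type*} (u : ι → M)
    (x : ι → α) (h0 : ∀ i, D.proj (x i) (u i) ≠ 0)
    (h1 : ∀ i j, i ≠ j → D.proj (x i) (u j) = 0) : LinearIndependent L u := by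
  classical
  rw [linearIndependent_iff']
  intro s c hs i hi
  have hsum := congrArg (D.proj (x i)) hs
  rw [map_sum, map_zero, Finset.sum_eq_single i] at hsum
  · rw [map_smul] at hsum
    exact (smul_eq_zero.1 hsum).resolve_right (h0 i)
  · intro j _ hj
    rw [map_smul, h1 i j hj.symm, smul_zero]
  · exact fun h ↦ (h hi).elim

lemma geomSum_apply_mem_ker {g : Module.End L M} {t : ℕ} {v : M} (hv : (g ^ t) v = v) :
    (∑ i ∈ Finset.range t, g ^ i) v ∈ LinearMap.ker (g - 1) := by
  rw [LinearMap.mem_ker, ← Module.End.mul_apply, mul_geom_sum]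
  simp [hv]

variable {g : Module.End L M} {τ : Equiv.Perm α} (hg : ∀ x, ∀ v ∈ W x, g v ∈ W (τ x))
include hg

lemma pow_apply_mem (i : ℕ) {x : α} {v : M} (hv : v ∈ W x) : (g ^ i) v ∈ W ((τ ^ i) x) := by
  induction i with
  | zero => simpa
  | succ i ih =>
    rw [pow_succ', pow_succ']
    exact hg _ _ ih

namespace ProjectionFamily

lemma proj_geomSum_apply (D : ProjectionFamily W) {t : ℕ} (ht0 : 0 < t) {x : α}
    (ht : ∀ i, 0 < i → i < t → (τ ^ i) x ≠ x) {v : M} (hv : v ∈ W x) :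
    D.proj x ((∑ i ∈ Finset.range t, g ^ i) v) = v := by
  rw [LinearMap.sum_apply, map_sum, Finset.sum_eq_single 0]
  · exact D.proj_self x v hv
  · intro i hi hi0
    exact D.proj_of_ne x _ _ (ht i (Nat.pos_of_ne_zero hi0) (Finset.mem_range.1 hi)).symm
      (pow_apply_mem hg i hv)
  · exact fun h ↦ (h (Finset.mem_range.2 ht0)).elim

lemma proj_apply (D : ProjectionFamily W) (x : α) (v : M) :
    D.proj (τ x) (g v) = g (D.proj x v) := by
  conv_lhs => rw [← D.sum_proj v, map_sum, map_sum]
  rw [Finset.sum_eq_single x, D.proj_self _ _ (hg _ _ (D.proj_mem x v))]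
  · intro y _ hy
    exact D.proj_of_ne _ (τ y) _ (fun h ↦ hy (τ.injective h).symm) (hg _ _ (D.proj_mem y v))
  · intro hx
    have hv := D.proj_mem x v
    rw [not_not.1 (mt (D.mem_support x).2 hx), Submodule.mem_bot] at hv
    rw [hv, map_zero, map_zero]

lemma proj_pow_apply (D : ProjectionFamily W) (i : ℕ) (x : α) (v : M) :
    D.proj ((τ ^ i) x) ((g ^ i) v) = (g ^ i) (D.proj x v) := by
  induction i with
  | zero => simp
  | succ i ih =>
    rw [pow_succ', pow_succ', Equiv.Perm.mul_apply, Module.End.mul_apply, D.proj_apply hg, ih,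
      Module.End.mul_apply]

variable [FiniteDimensional L M]

lemma finrank_ker_pow_inf_le (D : ProjectionFamily W) {t : ℕ} (ht0 : 0 < t) {x : α}
    (ht : ∀ i, 0 < i → i < t → (τ ^ i) x ≠ x) :
    finrank L ↥(LinearMap.ker (g ^ t - 1) ⊓ W x) ≤ finrank L (LinearMap.ker (g - 1)) := by
  let f : ↥(LinearMap.ker (g ^ t - 1) ⊓ W x) →ₗ[L] LinearMap.ker (g - 1) :=
    LinearMap.codRestrict _ ((∑ i ∈ Finset.range t, g ^ i) ∘ₗ Submodule.subtype _) fun v ↦ by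
      have hv : (g ^ t - 1) v = 0 := v.2.1
      exact geomSum_apply_mem_ker (by simpa [sub_eq_zero] using hv)
  refine LinearMap.finrank_le_finrank_of_injective (f := f) fun u v huv ↦ Subtype.ext ?_
  have h := congrArg (fun z : LinearMap.ker (g - 1) ↦ D.proj x (z : M)) huv
  simpa only [f, LinearMap.codRestrict_apply, LinearMap.comp_apply, Submodule.subtype_apply,
    D.proj_geomSum_apply hg ht0 ht u.2.2, D.proj_geomSum_apply hg ht0 ht v.2.2] using h

lemma finrank_le_finrank_ker (D : ProjectionFamily W) {t : ℕ} (ht0 : 0 < t) {x : α}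
    (ht : ∀ i, 0 < i → i < t → (τ ^ i) x ≠ x) (hgt : g ^ t = 1) :
    finrank L (W x) ≤ finrank L (LinearMap.ker (g - 1)) := by
  have hker : LinearMap.ker (g ^ t - 1) = ⊤ := by rw [hgt, sub_self, LinearMap.ker_zero]
  have h := D.finrank_ker_pow_inf_le hg ht0 ht
  rwa [hker, top_inf_eq] at h

lemma card_le_mul_finrank_ker (D : ProjectionFamily W) {p a : ℕ} (hp : p.Prime)
    (hτ : τ ^ p ^ a = 1) (hgq : g ^ p ^ a = 1) (X : Finset α)
    (hX : ∀ x ∈ X, W x ≠ ⊥ ∧ (τ ^ p ^ (a - 1)) x ≠ x) :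
    X.card ≤ p ^ a * finrank L (LinearMap.ker (g - 1)) := by
  have hq : 0 < p ^ a := pow_pos hp.pos _
  obtain ⟨R, hRX, hR, hcov⟩ := exists_cycle_representatives τ X
  refine (card_le_mul_card_of_sameCycle hq hτ hcov).trans (Nat.mul_le_mul_left _ ?_)
  choose v hv hv0 using fun r : R ↦ (Submodule.ne_bot_iff _).1 (hX r (hRX r.2)).1
  have hmem (r : R) := geomSum_apply_mem_ker (g := g) (t := p ^ a) (v := v r) (by rw [hgq]; rfl)
  have hli : LinearIndependent L fun r : R ↦ (∑ i ∈ Finset.range (p ^ a), g ^ i) (v r) := by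
    refine D.linearIndependent _ (fun r ↦ (r : α)) (fun r ↦ ?_) fun r r' hne ↦ ?_
    · rw [D.proj_geomSum_apply hg hq (fun i ↦ pow_apply_ne_of_pow_prime_pow_apply_ne hp hτ
        (hX r (hRX r.2)).2) (hv r)]
      exact hv0 r
    · rw [LinearMap.sum_apply, map_sum]
      refine Finset.sum_eq_zero fun i _ ↦
        D.proj_of_ne _ _ _ (fun h ↦ hne (Subtype.ext ?_)) (pow_apply_mem hg i (hv r'))
      exact (hR r' r'.2 r r.2 ⟨i, by rw [zpow_natCast, h]⟩).symm
  have hli' : LinearIndependent L fun r : R ↦ (⟨_, hmem r⟩ : LinearMap.ker (g - 1)) :=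
    LinearIndependent.of_comp (Submodule.subtype _) hli
  simpa using hli'.fintype_card_le_finrank

lemma finrank_le_finrank_range (D : ProjectionFamily W) {x : α} (hx : τ x ≠ x) :
    finrank L (W x) ≤ finrank L (LinearMap.range (g - 1)) := by
  let f : W x →ₗ[L] LinearMap.range (g - 1) := (g - 1).rangeRestrict ∘ₗ (W x).subtype
  refine LinearMap.finrank_le_finrank_of_injective (f := f) fun u v huv ↦ Subtype.ext ?_
  have hproj (w : W x) : D.proj x ((g - 1) w) = -w := by
    rw [LinearMap.sub_apply, map_sub, Module.End.one_apply, D.proj_self x _ w.2,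
      D.proj_of_ne x (τ x) _ hx.symm (hg x _ w.2), zero_sub]
  have h : (g - 1) (u : M) = (g - 1) (v : M) := congrArg Subtype.val huv
  rw [← neg_inj, ← hproj, ← hproj, h]

lemma card_le_mul_finrank_range (D : ProjectionFamily W) {q : ℕ} (hq : 0 < q) (hτ : τ ^ q = 1)
    (X : Finset α) (hX : ∀ x ∈ X, W x ≠ ⊥ ∧ τ x ≠ x) :
    X.card ≤ q * finrank L (LinearMap.range (g - 1)) := by
  obtain ⟨R, hRX, hR, hcov⟩ := exists_cycle_representatives τ X
  refine (card_le_mul_card_of_sameCycle hq hτ hcov).trans (Nat.mul_le_mul_left _ ?_)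
  choose v hv hv0 using fun r : R ↦ (Submodule.ne_bot_iff _).1 (hX r (hRX r.2)).1
  have hli : LinearIndependent L fun r : R ↦ (g - 1) (v r) := by
    refine D.linearIndependent _ (fun r ↦ (r : α)) (fun r ↦ ?_) fun r r' hne ↦ ?_
    · rw [LinearMap.sub_apply, map_sub, Module.End.one_apply, D.proj_self _ _ (hv r),
        D.proj_of_ne _ _ _ (hX r (hRX r.2)).2.symm (hg _ _ (hv r)), zero_sub, neg_ne_zero]
      exact hv0 r
    · rw [LinearMap.sub_apply, map_sub, Module.End.one_apply,
        D.proj_of_ne _ _ _ (fun h ↦ hne (Subtype.ext h)) (hv r'), sub_zero]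
      refine D.proj_of_ne _ _ _ (fun h ↦ hne (Subtype.ext ?_)) (hg _ _ (hv r'))
      exact (hR r' r'.2 r r.2 ⟨1, by rw [zpow_one, h]⟩).symm
  have hli' : LinearIndependent L fun r : R ↦ (g - 1).rangeRestrict (v r) :=
    LinearIndependent.of_comp (Submodule.subtype _) hli
  simpa using hli'.fintype_card_le_finrank

-- A fixed vector is determined by its components at one index from each cycle.
lemma finrank_ker_le_card_mul (D : ProjectionFamily W) {q δ : ℕ} (hq : 0 < q) (hτ : τ ^ q = 1)
    (hδ : ∀ x, finrank L (W x) ≤ δ) {R : Finset α}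
    (hR : ∀ x ∈ D.support, ∃ r ∈ R, τ.SameCycle r x) :
    finrank L (LinearMap.ker (g - 1)) ≤ R.card * δ := by
  let f : LinearMap.ker (g - 1) →ₗ[L] ((r : R) → W r) :=
    LinearMap.pi fun r ↦ LinearMap.codRestrict (W r) (D.proj r ∘ₗ Submodule.subtype _)
      fun v ↦ D.proj_mem _ _
  have hf : Function.Injective f := by
    rw [injective_iff_map_eq_zero]
    intro v hv
    have hgv : g v = v := sub_eq_zero.1 (LinearMap.mem_ker.1 v.2)
    have hgv_pow (i : ℕ) : (g ^ i) (v : M) = v := by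
      induction i with
      | zero => rfl
      | succ i ih => rw [pow_succ, Module.End.mul_apply, hgv, ih]
    rw [← Submodule.coe_eq_zero, ← D.sum_proj (v : M)]
    refine Finset.sum_eq_zero fun x hx ↦ ?_
    obtain ⟨r, hr, hrx⟩ := hR x hx
    obtain ⟨i, _, rfl⟩ := exists_pow_apply_eq_of_sameCycle hq hτ hrx
    have hrv : D.proj r (v : M) = 0 := congrArg Subtype.val (congrFun hv ⟨r, hr⟩)
    simpa [hgv_pow i, hrv] using D.proj_pow_apply hg i r v
  calc finrank L (LinearMap.ker (g - 1)) ≤ ∑ r : R, finrank L (W (r : α)) := by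
        rw [← Module.finrank_pi_fintype]; exact LinearMap.finrank_le_finrank_of_injective hf
    _ ≤ R.card * δ := by
        simpa using Finset.sum_le_card_nsmul Finset.univ _ δ fun (r : R) _ ↦ hδ (r : α)

lemma mul_finrank_ker_le (D : ProjectionFamily W) {p a δ : ℕ} (hp : p.Prime)
    (hτ : τ ^ p ^ a = 1) (hδ : ∀ x, finrank L (W x) ≤ δ) {B : Finset α} (hB : ∀ x ∈ B, τ x ∈ B)
    (hsB : D.support ⊆ B) {Bs : Finset α} (hBs : ∀ x ∈ B, (τ ^ p ^ (a - 1)) x = x → x ∈ Bs) :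
    p ^ a * finrank L (LinearMap.ker (g - 1)) ≤ (B.card + p ^ a * Bs.card) * δ := by
  obtain ⟨R, hRB, hR, hcov⟩ := exists_cycle_representatives τ B
  calc p ^ a * finrank L (LinearMap.ker (g - 1)) ≤ p ^ a * (R.card * δ) :=
        Nat.mul_le_mul_left _ <|
          D.finrank_ker_le_card_mul hg (pow_pos hp.pos _) hτ hδ fun x hx ↦ hcov x (hsB hx)
    _ = (p ^ a * R.card) * δ := by ring
    _ ≤ _ := Nat.mul_le_mul_right _ (mul_card_representatives_le hp hτ hB hRB hR hBs)

end ProjectionFamily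

end ProjectionFamily

/-! ### Weights of a normal abelian subgroup -/

/-- The action of the permutations of the index set `ι` on systems of eigenvalues `ι → L`. -/
def permWeight (ι L : Type*) : Equiv.Perm ι →* Equiv.Perm (ι → L) where
  toFun σ := σ.arrowCongr (Equiv.refl L)
  map_one' := rfl
  map_mul' _ _ := rfl

lemma permWeight_apply {ι L : Type*} (σ : Equiv.Perm ι) (χ : ι → L) (i : ι) :
    permWeight ι L σ χ i = χ (σ⁻¹ i) := rfl

section JointEigenspace

variable {L M ι : Type*} [Field L] [AddCommGroup M] [Module L M]

/-- The space of vectors on which every member `T i` of a family of endomorphisms acts as the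
scalar `χ i`. -/
def jointEigenspace (T : ι → Module.End L M) (χ : ι → L) : Submodule L M :=
  ⨅ i, (T i).eigenspace (χ i)

lemma mem_jointEigenspace {T : ι → Module.End L M} {χ : ι → L} {v : M} :
    v ∈ jointEigenspace T χ ↔ ∀ i, T i v = χ i • v := by
  simp only [jointEigenspace, Submodule.mem_iInf, Module.End.mem_eigenspace_iff]

lemma nonempty_projectionFamily_jointEigenspace [IsAlgClosed L] [FiniteDimensional L M]
    {T : ι → Module.End L M} (hcomm : ∀ i j, Commute (T i) (T j))
    (hfin : ∀ i, ∃ k : ℕ, (k : L) ≠ 0 ∧ T i ^ k = 1) :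
    Nonempty (ProjectionFamily (jointEigenspace T)) := by
  have hss (i : ι) : (T i).IsSemisimple := by
    obtain ⟨k, hk0, hk⟩ := hfin i
    refine Module.End.isSemisimple_of_squarefree_aeval_eq_zero (p := Polynomial.X ^ k - 1)
      (Polynomial.X_pow_sub_one_separable_iff.2 hk0).squarefree ?_
    simp [hk]
  have heig (i : ι) (μ : L) : (T i).maxGenEigenspace μ = (T i).eigenspace μ :=
    (hss i).isFinitelySemisimple.maxGenEigenspace_eq_eigenspace μ
  have hindep := Module.End.independent_iInf_maxGenEigenspace_of_forall_mapsTo T fun i j φ ↦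
    Module.End.mapsTo_maxGenEigenspace_of_comm (hcomm j i) φ
  have htop :=
    Module.End.iSup_iInf_maxGenEigenspace_eq_top_of_iSup_maxGenEigenspace_eq_top_of_commute T
      (fun i j _ ↦ hcomm i j) fun i ↦ Module.End.iSup_maxGenEigenspace_eq_top _
  simp only [heig] at hindep htop
  exact nonempty_projectionFamily hindep htop

lemma eq_of_mem_jointEigenspace {T : ι → Module.End L M} {χ ψ : ι → L} {v : M} (hv : v ≠ 0)
    (hχ : v ∈ jointEigenspace T χ) (hψ : v ∈ jointEigenspace T ψ) : χ = ψ :=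
  funext fun i ↦ smul_left_injective L hv
    ((mem_jointEigenspace.1 hχ i).symm.trans (mem_jointEigenspace.1 hψ i))

lemma map_mem_jointEigenspace {T : ι → Module.End L M} {g : Module.End L M} {σ : Equiv.Perm ι}
    (hg : ∀ i v, g (T i v) = T (σ i) (g v)) {χ : ι → L} {v : M} (hv : v ∈ jointEigenspace T χ) :
    g v ∈ jointEigenspace T (permWeight ι L σ χ) := by
  rw [mem_jointEigenspace] at hv ⊢
  intro i
  have h := hg (σ⁻¹ i) v
  rw [hv, map_smul, Equiv.Perm.inv_def, Equiv.apply_symm_apply] at h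
  rw [permWeight_apply, Equiv.Perm.inv_def, h]

end JointEigenspace

section PrimePowerOrder

variable {L M α : Type*} [Field L] [AddCommGroup M] [Module L M] [FiniteDimensional L M]
  {W : α → Submodule L M} {g : Module.End L M} {τ : Equiv.Perm α}

lemma ProjectionFamily.finrank_le_or_exists_pow_fixes (D : ProjectionFamily W)
    (hg : ∀ x, ∀ v ∈ W x, g v ∈ W (τ x)) {p a : ℕ} (hp : p.Prime) (ha : 0 < a)
    (hτ : τ ^ p ^ a = 1) (hgq : g ^ p ^ a = 1) (x : α) :
    ((τ ^ p ^ (a - 1)) x ≠ x ∧ finrank L (W x) ≤ finrank L (LinearMap.ker (g - 1))) ∨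
    ∃ j < a, (τ ^ p ^ j) x = x ∧
      finrank L ↥(LinearMap.ker (g ^ p ^ j - 1) ⊓ W x) ≤ finrank L (LinearMap.ker (g - 1)) := by
  have periodic_iff (n : ℕ) : Function.IsPeriodicPt τ n x ↔ (τ ^ n) x = x := by
    rw [Function.IsPeriodicPt, Function.IsFixedPt, Equiv.Perm.iterate_eq_pow]
  by_cases hx : (τ ^ p ^ (a - 1)) x = x
  · obtain ⟨j, hj, hj'⟩ := (Nat.dvd_prime_pow hp).1 ((periodic_iff _).2 hx).minimalPeriod_dvd
    refine .inr ⟨j, by omega, ?_, ?_⟩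
    · exact (periodic_iff _).1 (hj' ▸ Function.isPeriodicPt_minimalPeriod τ x)
    · refine D.finrank_ker_pow_inf_le hg (pow_pos hp.pos _) fun i hi0 hi h ↦ ?_
      have := Nat.le_of_dvd hi0 ((periodic_iff i).2 h).minimalPeriod_dvd
      omega
  · exact .inl ⟨hx, D.finrank_le_finrank_ker hg (pow_pos hp.pos _)
      (fun _ ↦ pow_apply_ne_of_pow_prime_pow_apply_ne hp hτ hx) hgq⟩

end PrimePowerOrder

section Weight

variable {Γ : Type*} [Group Γ]

/-- A system of scalars, one for each element of the subgroup `C`. It is a type synonym, so that it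
carries the conjugation action of the ambient group when `C` is normal. -/
def Weight (C : Subgroup Γ) (L : Type*) : Type _ := C → L

/-- The conjugation action of a group on a normal subgroup, by permutations. -/
def conjPerm (C : Subgroup Γ) [C.Normal] : Γ →* Equiv.Perm C :=
  (MulAut.toPerm C).comp MulAut.conjNormal

lemma conjPerm_apply (C : Subgroup Γ) [C.Normal] (x : Γ) (c : C) :
    (conjPerm C x c : Γ) = x * c * x⁻¹ := MulAut.conjNormal_apply x c

instance (C : Subgroup Γ) [C.Normal] (L : Type*) : MulAction Γ (Weight C L) :=
  MulAction.compHom (C → L) ((permWeight C L).comp (conjPerm C))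

lemma weight_smul_apply {C : Subgroup Γ} [C.Normal] {L : Type*} (x : Γ) (χ : Weight C L) (c : C) :
    (x • χ) c = χ ((conjPerm C x)⁻¹ c) := rfl

variable {L M : Type*} [Field L] [AddCommGroup M] [Module L M] (ρ : Γ →* Module.End L M)

/-- The subspace of a representation on which the subgroup `C` acts through the scalars `χ`. -/
def weightSpace (C : Subgroup Γ) (χ : Weight C L) : Submodule L M :=
  jointEigenspace (fun c : C ↦ ρ c) χ

variable {ρ} {C : Subgroup Γ}

lemma mem_weightSpace {χ : Weight C L} {v : M} :
    v ∈ weightSpace ρ C χ ↔ ∀ c : C, ρ c v = χ c • v := mem_jointEigenspace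

lemma nonempty_projectionFamily_weightSpace [IsAlgClosed L] [FiniteDimensional L M]
    [IsMulCommutative C] (hC : (Nat.card C : L) ≠ 0) :
    Nonempty (ProjectionFamily (weightSpace ρ C)) := by
  refine nonempty_projectionFamily_jointEigenspace (fun a b ↦ ?_) fun a ↦ ⟨Nat.card C, hC, ?_⟩
  · have hab : Commute a b := IsMulCommutative.is_comm.comm a b
    exact (hab.map C.subtype).map ρ
  · rw [← map_pow, ← Subgroup.coe_pow, pow_card_eq_one', Subgroup.coe_one, map_one]

variable [C.Normal]

lemma map_mem_weightSpace (x : Γ) {χ : Weight C L} {v : M} (hv : v ∈ weightSpace ρ C χ) :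
    ρ x v ∈ weightSpace ρ C (x • χ) := by
  refine map_mem_jointEigenspace (fun c v ↦ ?_) hv
  rw [conjPerm_apply, ← Module.End.mul_apply, ← Module.End.mul_apply, ← map_mul, ← map_mul,
    inv_mul_cancel_right]

lemma apply_mem_weightSpace_of_smul_eq {x : Γ} {χ : Weight C L} (hx : x • χ = χ) :
    ∀ v ∈ weightSpace ρ C χ, ρ x v ∈ weightSpace ρ C χ := fun v hv ↦ by
  simpa only [hx] using map_mem_weightSpace x hv

lemma smul_weightSpace_ne_bot (x : Γ) {χ : Weight C L} (hχ : weightSpace ρ C χ ≠ ⊥) :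
    weightSpace ρ C (x • χ) ≠ ⊥ := by
  obtain ⟨v, hv, hv0⟩ := (Submodule.ne_bot_iff _).1 hχ
  refine (Submodule.ne_bot_iff _).2 ⟨ρ x v, map_mem_weightSpace x hv, fun h ↦ hv0 ?_⟩
  simpa only [map_zero, ← Module.End.mul_apply, ← map_mul, inv_mul_cancel, map_one,
    Module.End.one_apply] using congrArg (ρ x⁻¹) h

lemma commute_of_smul_weight_eq (hρ : Function.Injective ρ)
    (D : ProjectionFamily (weightSpace ρ C)) {x : Γ} (hx : ∀ χ ∈ D.support, x • χ = χ) :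
    ∀ c ∈ C, x * c = c * x := by
  intro c hc
  refine mul_inv_eq_iff_eq_mul.1 (hρ (LinearMap.ext fun v ↦ ?_))
  rw [← D.sum_proj v, map_sum, map_sum]
  refine Finset.sum_congr rfl fun χ hχ ↦ ?_
  have hscalar := mem_weightSpace.1 (D.proj_mem χ v)
  have hconj : χ ((conjPerm C x) ⟨c, hc⟩) = χ ⟨c, hc⟩ := by
    have h := congrFun (hx χ hχ) (conjPerm C x ⟨c, hc⟩)
    rw [weight_smul_apply, Equiv.Perm.inv_def, Equiv.symm_apply_apply] at h
    exact h.symm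
  rw [← conjPerm_apply C x ⟨c, hc⟩, hscalar, hconj, ← hscalar]

lemma iteratedDerived_commute_of_card_moved_weights_le [Finite Γ] [Group.IsSolvable Γ]
    (hρ : Function.Injective ρ) (D : ProjectionFamily (weightSpace ρ C)) {S : Set Γ} {k : ℕ}
    (hk : ∀ s ∈ S, ∀ X : Finset (Weight C L),
      (∀ χ ∈ X, weightSpace ρ C χ ≠ ⊥ ∧ s • χ ≠ χ) → X.card ≤ k) :
    ∀ x ∈ iteratedDerived (closure S) (2 * k + 1).factorial, ∀ c ∈ C, x * c = c * x := by
  classical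
  refine fun x hx ↦ commute_of_smul_weight_eq hρ D fun χ hχ ↦ ?_
  refine iteratedDerived_smul_eq_of_ncard_moved_le (S := S) rfl
    (T := (D.support : Set (Weight C L))) ?_ (Finset.finite_toSet _) (c := k) ?_ hχ x hx
  · exact fun y _ χ hχ ↦ (D.mem_support _).2 (smul_weightSpace_ne_bot y ((D.mem_support _).1 hχ))
  · intro s hs
    have hcard := hk s hs (D.support.filter fun χ ↦ s • χ ≠ χ) fun χ hχ ↦
      ⟨(D.mem_support _).1 (Finset.mem_filter.1 hχ).1, (Finset.mem_filter.1 hχ).2⟩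
    rw [← Set.ncard_coe_finset, Finset.coe_filter] at hcard
    exact hcard

end Weight

/-! ### Centralizers of operators of finite order -/

namespace ProjectionFamily

variable {L M α : Type*} [Field L] [AddCommGroup M] [Module L M] {W : α → Submodule L M}

/-- The projection onto a summand, with codomain restricted to that summand. -/
def component (D : ProjectionFamily W) (x : α) : M →ₗ[L] W x :=
  (D.proj x).codRestrict (W x) (D.proj_mem x)

lemma component_coe_self (D : ProjectionFamily W) (x : α) (v : W x) : D.component x v = v :=
  Subtype.ext (D.proj_self x v v.2)

lemma component_coe_of_ne (D : ProjectionFamily W) {x y : α} (hxy : x ≠ y) (v : W y) :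
    D.component x v = 0 :=
  Subtype.ext (D.proj_of_ne x y v hxy v.2)

variable [FiniteDimensional L M]

lemma sum_finrank_le (D : ProjectionFamily W) (X : Finset α) :
    ∑ x ∈ X, finrank L (W x) ≤ finrank L M := by
  classical
  let f : ((x : X) → W x) →ₗ[L] M := ∑ x : X, (W x).subtype ∘ₗ LinearMap.proj x
  have hf : Function.Injective f := by
    refine (injective_iff_map_eq_zero f).2 fun v hv ↦ funext fun x ↦ ?_
    have h := congrArg (D.component x) hv
    simp only [f, LinearMap.sum_apply, LinearMap.comp_apply, LinearMap.proj_apply,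
      Submodule.subtype_apply, map_sum, map_zero] at h
    rwa [Finset.sum_eq_single x (fun y _ hy ↦
        D.component_coe_of_ne (fun h ↦ hy (Subtype.ext h.symm)) (v y)) (by simp),
      D.component_coe_self] at h
  have hle := LinearMap.finrank_le_finrank_of_injective hf
  rwa [Module.finrank_pi_fintype, Finset.sum_coe_sort X fun x ↦ finrank L (W x)] at hle

lemma finrank_le_sum_finrank (D : ProjectionFamily W) :
    finrank L M ≤ ∑ x ∈ D.support, finrank L (W x) := by
  let f : M →ₗ[L] ((x : D.support) → W x) := LinearMap.pi fun x ↦ D.component x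
  have hf : Function.Injective f := by
    refine (injective_iff_map_eq_zero f).2 fun v hv ↦ ?_
    rw [← D.sum_proj v]
    exact Finset.sum_eq_zero fun x hx ↦ congrArg Subtype.val (congrFun hv ⟨x, hx⟩)
  have hle := LinearMap.finrank_le_finrank_of_injective hf
  rwa [Module.finrank_pi_fintype, Finset.sum_coe_sort D.support fun x ↦ finrank L (W x)] at hle

end ProjectionFamily

section Centralizer

variable {L M : Type*} [Field L] [AddCommGroup M] [Module L M] {g : Module.End L M}

lemma card_lt_of_subset_support_of_one_notMem (D : ProjectionFamily g.eigenspace) {q : ℕ}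
    (hq : 0 < q) (hgq : g ^ q = 1) {X : Finset L} (hX : X ⊆ D.support) (h1 : 1 ∉ X) :
    X.card < q := by
  classical
  have hsub : insert 1 X ⊆ Polynomial.nthRootsFinset q (1 : L) := by
    intro μ hμ
    rw [Polynomial.mem_nthRootsFinset hq]
    rcases Finset.mem_insert.1 hμ with rfl | hμ
    · exact one_pow q
    · obtain ⟨v, hv⟩ := (Submodule.ne_bot_iff _).1 ((D.mem_support μ).1 (hX hμ))
      have hpow := (Module.End.hasEigenvector_iff.2 hv).pow_apply q
      rw [hgq, Module.End.one_apply] at hpow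
      have hzero : (μ ^ q - 1) • v = 0 := by rw [sub_smul, one_smul, ← hpow, sub_self]
      exact sub_eq_zero.1 ((smul_eq_zero.1 hzero).resolve_right hv.2)
  rw [Nat.lt_iff_add_one_le, ← Finset.card_insert_of_notMem h1]
  exact (Finset.card_le_card hsub).trans
    ((Multiset.toFinset_card_le _).trans (Polynomial.card_nthRoots q 1))

variable [FiniteDimensional L M]

lemma sum_finrank_eigenspace_sq_le (D : ProjectionFamily g.eigenspace) (X : Finset L) :
    ∑ μ ∈ X, finrank L (g.eigenspace μ) ^ 2 ≤ finrank L (Subalgebra.centralizer L {g}) := by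
  classical
  let f : ((μ : X) → Module.End L (g.eigenspace (μ : L))) →ₗ[L] Module.End L M :=
    ∑ μ : X, ((g.eigenspace (μ : L)).subtype.compRight L ∘ₗ (D.component μ).lcomp L _) ∘ₗ
      LinearMap.proj μ
  have f_apply (Y v) : f Y v = ∑ μ : X, (Y μ (D.component μ v) : M) := by simp [f]
  have g_apply {μ v} (hv : v ∈ g.eigenspace μ) : g v = μ • v := Module.End.mem_eigenspace_iff.1 hv
  have component_g (μ v) : D.component μ (g v) = μ • D.component μ v := by
    refine Subtype.ext ((D.proj_apply (τ := 1) (fun ν w hw ↦ ?_) μ v).trans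
      (g_apply (D.proj_mem μ v)))
    rw [g_apply hw]
    exact Submodule.smul_mem _ _ hw
  have hfZ (Y) : f Y ∈ Subalgebra.toSubmodule (Subalgebra.centralizer L {g}) := by
    refine (Subalgebra.mem_centralizer_iff L).2 fun h hg ↦ LinearMap.ext fun v ↦ ?_
    rw [Set.mem_singleton_iff.1 hg, Module.End.mul_apply, Module.End.mul_apply, f_apply,
      f_apply, map_sum]
    refine Finset.sum_congr rfl fun μ _ ↦ ?_
    rw [component_g, map_smul, g_apply (Y μ (D.component μ v)).2, Submodule.coe_smul]
  have hf : Function.Injective (LinearMap.codRestrict _ f hfZ) := by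
    refine (injective_iff_map_eq_zero _).2 fun Y hY ↦ funext fun μ ↦ LinearMap.ext fun v ↦ ?_
    have h := f_apply Y v
    rw [show f Y = 0 from congrArg Subtype.val hY, LinearMap.zero_apply,
      Finset.sum_eq_single μ (fun ν _ hν ↦ ?_) (by simp), D.component_coe_self] at h
    · exact Subtype.ext h.symm
    · rw [D.component_coe_of_ne fun h ↦ hν (Subtype.ext h), map_zero, Submodule.coe_zero]
  calc ∑ μ ∈ X, finrank L (g.eigenspace μ) ^ 2
      = finrank L ((μ : X) → Module.End L (g.eigenspace (μ : L))) := by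
        simp only [Module.finrank_pi_fintype, Module.finrank_linearMap, ← sq]
        exact (Finset.sum_coe_sort X fun μ ↦ finrank L (g.eigenspace μ) ^ 2).symm
    _ ≤ _ := LinearMap.finrank_le_finrank_of_injective hf

lemma sq_finrank_sub_finrank_ker_le [IsAlgClosed L] {q : ℕ} (hq : (q : L) ≠ 0) (hgq : g ^ q = 1) :
    (finrank L M - finrank L (LinearMap.ker (g - 1))) ^ 2 ≤
      (q - 1) * finrank L (Subalgebra.centralizer L {g}) := by
  classical
  have hq0 : 0 < q := Nat.pos_of_ne_zero fun h ↦ hq (by rw [h, Nat.cast_zero])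
  have hss : g.IsSemisimple := Module.End.isSemisimple_of_squarefree_aeval_eq_zero
    (p := Polynomial.X ^ q - 1) (Polynomial.X_pow_sub_one_separable_iff.2 hq).squarefree
    (by simp [hgq])
  obtain ⟨D⟩ := nonempty_projectionFamily (Module.End.eigenspaces_iSupIndep g)
    hss.iSup_eigenspace_eq_top
  have hone : LinearMap.ker (g - 1) = g.eigenspace 1 := by rw [Module.End.eigenspace_def, one_smul]
  have hdim : finrank L M - finrank L (LinearMap.ker (g - 1)) ≤
      ∑ μ ∈ D.support.erase 1, finrank L (g.eigenspace μ) := by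
    rw [tsub_le_iff_left, hone]
    refine D.finrank_le_sum_finrank.trans ?_
    by_cases h : (1 : L) ∈ D.support
    · rw [Finset.add_sum_erase _ (fun μ ↦ finrank L (g.eigenspace μ)) h]
    · rw [Finset.erase_eq_of_notMem h]
      exact Nat.le_add_left _ _
  calc (finrank L M - finrank L (LinearMap.ker (g - 1))) ^ 2
      ≤ (∑ μ ∈ D.support.erase 1, finrank L (g.eigenspace μ)) ^ 2 := Nat.pow_le_pow_left hdim 2
    _ ≤ (D.support.erase 1).card * ∑ μ ∈ D.support.erase 1, finrank L (g.eigenspace μ) ^ 2 :=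
        sq_sum_le_card_mul_sum_sq
    _ ≤ (q - 1) * finrank L (Subalgebra.centralizer L {g}) :=
        Nat.mul_le_mul (Nat.le_sub_one_of_lt (card_lt_of_subset_support_of_one_notMem D hq0 hgq
          (Finset.erase_subset _ _) (Finset.notMem_erase _ _))) (sum_finrank_eigenspace_sq_le D _)

end Centralizer

/-! ### Scalar conjugation pairings -/

section Duality

lemma finite_monoidHom (G L : Type*) [Group G] [Finite G] [CommRing L] [IsDomain L] :
    Finite (G →* L) := (linearIndependent_monoidHom G L).finite

lemma card_monoidHom_le (G L : Type*) [Group G] [Finite G] [CommRing L] [IsDomain L] :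
    Nat.card (G →* L) ≤ Nat.card G := by
  have := Fintype.ofFinite G
  have := finite_monoidHom G L
  have := Fintype.ofFinite (G →* L)
  have hle := (linearIndependent_monoidHom G L).fintype_card_le_finrank
  rwa [Module.finrank_fintype_fun_eq_card, ← Nat.card_eq_fintype_card,
    ← Nat.card_eq_fintype_card] at hle

lemma exists_map_eq_of_ker_le_ker {E L : Type*} [Group E] [Finite E] [CommRing L] [IsDomain L]
    (b : E →* E →* L) (hb : ∀ e, b.ker ≤ (b e).ker) {χ : E →* L} (hχ : b.ker ≤ χ.ker) :
    ∃ e, b e = χ := by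
  let lift (e : E) : E ⧸ b.ker →* L := QuotientGroup.lift b.ker (b e) (hb e)
  have := finite_monoidHom (E ⧸ b.ker) L
  have hinj : Function.Injective fun z : E ⧸ b.ker ↦ lift z.out := by
    intro z z' h
    have hzz' : b z.out = b z'.out := MonoidHom.ext fun f ↦ DFunLike.congr_fun h (f : E ⧸ b.ker)
    rw [← z.out_eq', ← z'.out_eq']
    refine QuotientGroup.eq.2 (MonoidHom.mem_ker.2 ?_)
    rw [map_mul, ← hzz', ← map_mul, inv_mul_cancel, map_one]
  have hsurj := ((Nat.bijective_iff_injective_and_card _).2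
    ⟨hinj, le_antisymm (Nat.card_le_card_of_injective _ hinj) (card_monoidHom_le _ _)⟩).2
  obtain ⟨z, hz⟩ := hsurj (QuotientGroup.lift b.ker χ hχ)
  exact ⟨z.out, MonoidHom.ext fun f ↦ DFunLike.congr_fun hz (f : E ⧸ b.ker)⟩

lemma card_filter_map_mem {E N : Type*} [Group E] [Fintype E] [Monoid N] [DecidableEq N]
    (b : E →* N) {X : Finset N} (hX : ∀ x ∈ X, x ∈ Set.range b) :
    (Finset.univ.filter fun e ↦ b e ∈ X).card =
      X.card * (Finset.univ.filter fun e ↦ b e = 1).card := by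
  have hmaps : Set.MapsTo b (Finset.univ.filter fun e ↦ b e ∈ X : Finset E) X :=
    fun e he ↦ (Finset.mem_filter.1 he).2
  rw [Finset.card_eq_sum_card_fiberwise hmaps]
  refine Finset.sum_const_nat fun x hx ↦ ?_
  rw [← MonoidHom.card_fiber_eq_of_mem_range b (hX x hx) ⟨1, map_one b⟩, Finset.filter_filter]
  refine congrArg Finset.card (Finset.filter_congr fun e _ ↦ ?_)
  exact ⟨fun h ↦ h.2, fun h ↦ ⟨h ▸ hx, h⟩⟩

end Duality

section ConjPairing

variable {E L U : Type*} [Group E] [Field L] [AddCommGroup U] [Module L U]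

/-- The conjugation action of the invertible endomorphisms on all endomorphisms. -/
def conjEnd (L U : Type*) [Field L] [AddCommGroup U] [Module L U] :
    (Module.End L U)ˣ →* Module.End L (Module.End L U) :=
  Representation.linHom (Units.coeHom _) (Units.coeHom _)

lemma conjEnd_apply (u : (Module.End L U)ˣ) (X : Module.End L U) :
    conjEnd L U u X = u * X * (u⁻¹ : (Module.End L U)ˣ) := (mul_assoc _ _ _).symm

lemma conjEnd_eq_of_eq_smul {u u' : (Module.End L U)ˣ} {c : L}
    (h : (u : Module.End L U) = c • (u' : Module.End L U)) : conjEnd L U u = conjEnd L U u' := by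
  have hinv : ((u'⁻¹ : (Module.End L U)ˣ) : Module.End L U) = c • (u⁻¹ : (Module.End L U)ˣ) :=
    Units.inv_eq_of_mul_eq_one_right <| by
      rw [mul_smul_comm, ← smul_mul_assoc, ← h, Units.mul_inv]
  ext1 X
  rw [conjEnd_apply, conjEnd_apply, hinv, h, smul_mul_assoc, smul_mul_assoc, mul_smul_comm]

lemma finrank_centralizer_le_finrank_ker_conjEnd [FiniteDimensional L U]
    (g : (Module.End L U)ˣ) :
    finrank L (Subalgebra.centralizer L {(g : Module.End L U)}) ≤
      finrank L (LinearMap.ker (conjEnd L U g - 1)) := by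
  refine Submodule.finrank_mono (s := Subalgebra.toSubmodule (Subalgebra.centralizer L {_}))
    fun X hX ↦ ?_
  rw [LinearMap.mem_ker, LinearMap.sub_apply, conjEnd_apply,
    (Subalgebra.mem_centralizer_iff L).1 hX _ rfl, Units.mul_inv_cancel_right,
    Module.End.one_apply, sub_self]

/-- The space of endomorphisms `X` satisfying `(r f)⁻¹ * X * r f = χ f • X` for all `f`. -/
def conjWeightSpace (r : E →* (Module.End L U)ˣ) (χ : E → L) : Submodule L (Module.End L U) :=
  jointEigenspace (fun f ↦ conjEnd L U (r f)⁻¹) χ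

variable {r : E →* (Module.End L U)ˣ} {χ ψ : E → L} {X Y : Module.End L U}

lemma mem_conjWeightSpace : X ∈ conjWeightSpace r χ ↔
    ∀ f, ((r f)⁻¹ : (Module.End L U)ˣ) * X * r f = χ f • X := by
  simp only [conjWeightSpace, mem_jointEigenspace, conjEnd_apply, inv_inv]

lemma one_mem_conjWeightSpace : 1 ∈ conjWeightSpace r (1 : E → L) :=
  mem_conjWeightSpace.2 fun f ↦ by simp

lemma mul_mem_conjWeightSpace (hX : X ∈ conjWeightSpace r χ) (hY : Y ∈ conjWeightSpace r ψ) :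
    X * Y ∈ conjWeightSpace r (χ * ψ) := by
  rw [mem_conjWeightSpace] at *
  intro f
  rw [Pi.mul_apply, ← smul_mul_smul_comm, ← hX, ← hY]
  simp only [mul_assoc, Units.mul_inv_cancel_left]

lemma exists_monoidHom_eq_of_conjWeightSpace_ne_bot (hχ : conjWeightSpace r χ ≠ ⊥) :
    ∃ ψ : E →* L, ψ = χ := by
  obtain ⟨X, hX, hX0⟩ := (Submodule.ne_bot_iff _).1 hχ
  rw [mem_conjWeightSpace] at hX
  refine ⟨⟨⟨χ, smul_left_injective L hX0 ?_⟩, fun f f' ↦ smul_left_injective L hX0 ?_⟩, rfl⟩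
  · simp [← hX]
  · simp only
    rw [mul_smul, ← hX f', ← smul_mul_assoc, ← mul_smul_comm, ← hX f, ← hX (f * f')]
    simp only [map_mul, mul_inv_rev, Units.val_mul, mul_assoc]

lemma eq_one_of_scalar_of_conjWeightSpace_ne_bot (hχ : conjWeightSpace r χ ≠ ⊥) {f : E} {c : L}
    (hf : (r f : Module.End L U) = c • 1) : χ f = 1 := by
  obtain ⟨X, hX, hX0⟩ := (Submodule.ne_bot_iff _).1 hχ
  refine smul_left_injective L hX0 ?_
  simp only
  rw [one_smul, ← mem_conjWeightSpace.1 hX f, mul_assoc,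
    show X * r f = r f * X by simp [hf], Units.inv_mul_cancel_left]

/-- Conjugation by `E` multiplies each operator `r e` by a scalar, and `β` records these scalars. -/
def IsConjPairing (r : E →* (Module.End L U)ˣ) (β : E → E → L) : Prop :=
  ∀ e f, (r (f⁻¹ * e * f) : Module.End L U) = β e f • (r e : Module.End L U)

namespace IsConjPairing

variable {β : E → E → L} (hβ : IsConjPairing r β)

include hβ

lemma apply_mem (e : E) : (r e : Module.End L U) ∈ conjWeightSpace r (β e) :=
  mem_conjWeightSpace.2 fun f ↦ by
    rw [← hβ, map_mul, map_mul, map_inv, Units.val_mul, Units.val_mul]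

lemma commute_conjEnd (f f' : E) : Commute (conjEnd L U (r f)⁻¹) (conjEnd L U (r f')⁻¹) := by
  rw [Commute, SemiconjBy, ← map_mul, ← map_mul]
  refine conjEnd_eq_of_eq_smul (c := β f⁻¹ f'⁻¹) ?_
  have hconj : f⁻¹ * f'⁻¹ = f'⁻¹ * (f'⁻¹⁻¹ * f⁻¹ * f'⁻¹) := by group
  rw [← map_inv, ← map_inv, ← map_mul, hconj, map_mul, Units.val_mul, hβ, mul_smul_comm,
    Units.val_mul]

lemma finrank_conjWeightSpace_le [FiniteDimensional L U] (e : E) (χ : E → L) :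
    finrank L (conjWeightSpace r χ) ≤ finrank L (conjWeightSpace r (β e * χ)) := by
  let f : conjWeightSpace r χ →ₗ[L] conjWeightSpace r (β e * χ) :=
    ((LinearMap.mulLeft L (r e : Module.End L U)) ∘ₗ Submodule.subtype _).codRestrict _
      fun X ↦ mul_mem_conjWeightSpace (hβ.apply_mem e) X.2
  refine LinearMap.finrank_le_finrank_of_injective (f := f) fun X Y hXY ↦ Subtype.ext ?_
  exact (Units.mul_right_inj (r e)).1 (congrArg Subtype.val hXY)

lemma nonempty_projectionFamily [IsAlgClosed L] [FiniteDimensional L U]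
    (hE : (Nat.card E : L) ≠ 0) : Nonempty (ProjectionFamily (conjWeightSpace r)) := by
  refine nonempty_projectionFamily_jointEigenspace hβ.commute_conjEnd fun f ↦
    ⟨Nat.card E, hE, ?_⟩
  rw [← map_pow, inv_pow, ← map_pow, pow_card_eq_one', map_one, inv_one, map_one]

variable [Nontrivial U]

lemma conjWeightSpace_ne_bot (e : E) : conjWeightSpace r (β e) ≠ ⊥ :=
  (Submodule.ne_bot_iff _).2 ⟨_, hβ.apply_mem e, (r e).ne_zero⟩

lemma eq_of_mem {e : E} (h : (r e : Module.End L U) ∈ conjWeightSpace r χ) : β e = χ :=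
  eq_of_mem_jointEigenspace (r e).ne_zero (hβ.apply_mem e) h

/-- A conjugation pairing as a homomorphism to the monoid of functions. -/
def toHom : E →* E → L where
  toFun := β
  map_one' := hβ.eq_of_mem <| by
    rw [map_one, Units.val_one]
    exact one_mem_conjWeightSpace
  map_mul' e e' := hβ.eq_of_mem <| by
    rw [map_mul, Units.val_mul]
    exact mul_mem_conjWeightSpace (hβ.apply_mem e) (hβ.apply_mem e')

lemma finrank_conjWeightSpace_eq [FiniteDimensional L U] (e : E) :
    finrank L (conjWeightSpace r (β e)) = finrank L (conjWeightSpace r (1 : E → L)) := by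
  apply le_antisymm
  · have h := hβ.finrank_conjWeightSpace_le e⁻¹ (β e)
    rwa [show β e⁻¹ * β e = 1 from (map_mul hβ.toHom e⁻¹ e).symm.trans (by simp)] at h
  · exact (hβ.finrank_conjWeightSpace_le e 1).trans_eq (by rw [mul_one])

variable [Finite E]

lemma exists_eq_of_conjWeightSpace_ne_bot
    (hscalar : ∀ e, β e = 1 → ∃ c : L, (r e : Module.End L U) = c • 1) {χ : E → L}
    (hχ : conjWeightSpace r χ ≠ ⊥) : ∃ e, β e = χ := by
  choose b hb using fun e ↦
    exists_monoidHom_eq_of_conjWeightSpace_ne_bot (hβ.conjWeightSpace_ne_bot e)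
  let b' : E →* E →* L :=
    { toFun := b
      map_one' := DFunLike.coe_injective ((hb 1).trans (map_one hβ.toHom))
      map_mul' := fun e e' ↦ DFunLike.coe_injective <| (hb _).trans <|
        (map_mul hβ.toHom e e').trans (congrArg₂ _ (hb e).symm (hb e').symm) }
  have hker {ψ : E →* L} (hψ : conjWeightSpace r ψ ≠ ⊥) : b'.ker ≤ ψ.ker := by
    intro f hf
    obtain ⟨c, hc⟩ := hscalar f (by rw [← hb, show b f = 1 from hf]; rfl)
    exact eq_one_of_scalar_of_conjWeightSpace_ne_bot hψ hc
  obtain ⟨ψ, rfl⟩ := exists_monoidHom_eq_of_conjWeightSpace_ne_bot hχ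
  obtain ⟨e, rfl⟩ := exists_map_eq_of_ker_le_ker b'
    (fun e ↦ hker ((hb e).symm ▸ hβ.conjWeightSpace_ne_bot e)) (hker hχ)
  exact ⟨e, (hb e).symm⟩

end IsConjPairing

end ConjPairing

lemma le_of_sq_sub_le {n f D d δ q c : ℝ} (hq : 2 ≤ q) (hf : 1 ≤ f) (hδ : 1 ≤ δ) (hd : 0 ≤ d)
    (hn : 0 ≤ n) (hD0 : 0 ≤ D) (hker : q * c ≤ (n + q * f) * δ) (hsum : n * δ ≤ D ^ 2)
    (hcent : (D - d) ^ 2 ≤ (q - 1) * c) : n ≤ 16 * q ^ 2 * (d + 1) ^ 2 * f := by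
  by_contra! hcon
  have hD : 4 * q * (d + 1) < D := by
    refine lt_of_pow_lt_pow_left₀ 2 hD0 ?_
    calc (4 * q * (d + 1)) ^ 2 = 16 * q ^ 2 * (d + 1) ^ 2 := by ring
      _ ≤ 16 * q ^ 2 * (d + 1) ^ 2 * f := le_mul_of_one_le_right (by positivity) hf
      _ < n := hcon
      _ ≤ D ^ 2 := (le_mul_of_one_le_right hn hδ).trans hsum
  have hsmall : 16 * q * (q * f) ≤ n := by
    nlinarith [mul_nonneg (mul_nonneg (sq_nonneg q) (zero_le_one.trans hf)) hd,
      mul_nonneg (mul_nonneg (sq_nonneg q) (zero_le_one.trans hf)) (sq_nonneg d)]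
  have hsub : (2 * q - 1) * D ^ 2 ≤ 2 * q * (D - d) ^ 2 := by
    nlinarith [mul_nonneg hD0 (show 0 ≤ D - 4 * q * d by linarith), sq_nonneg d,
      mul_nonneg (show 0 ≤ q by linarith) (sq_nonneg d)]
  have hcombined : n * (2 * q - 1) * D ^ 2 ≤ 2 * ((q - 1) * (n + q * f)) * D ^ 2 :=
    calc n * (2 * q - 1) * D ^ 2 = n * ((2 * q - 1) * D ^ 2) := by ring
      _ ≤ n * (2 * q * ((q - 1) * c)) :=
        mul_le_mul_of_nonneg_left (hsub.trans (by gcongr)) hn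
      _ = 2 * (n * (q - 1) * (q * c)) := by ring
      _ ≤ 2 * (n * (q - 1) * ((n + q * f) * δ)) := by
        gcongr
        exact mul_nonneg hn (by linarith)
      _ = 2 * ((q - 1) * (n + q * f) * (n * δ)) := by ring
      _ ≤ 2 * ((q - 1) * (n + q * f) * D ^ 2) := by
        gcongr
        exact mul_nonneg (by linarith) (by nlinarith)
      _ = 2 * ((q - 1) * (n + q * f)) * D ^ 2 := by ring
  have hDpos : 0 < D := lt_of_le_of_lt (by positivity) hD
  have hlin := le_of_mul_le_mul_right hcombined (by positivity)
  have hqf : 0 < q * f := by positivity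
  nlinarith

namespace IsConjPairing

variable {E L U : Type*} [Group E] [Field L] [AddCommGroup U] [Module L U]
  {r : E →* (Module.End L U)ˣ} {β : E → E → L} {g : (Module.End L U)ˣ} {σ : MulAut E}

section Equivariance

variable (hσ : ∀ f, g * r f = r (σ f) * g)

include hσ

lemma conjEnd_mem_conjWeightSpace (χ : E → L) (X : Module.End L U)
    (hX : X ∈ conjWeightSpace r χ) :
    conjEnd L U g X ∈ conjWeightSpace r (permWeight E L (MulAut.toPerm E σ) χ) := by
  refine map_mem_jointEigenspace (fun f v ↦ ?_) hX
  rw [← Module.End.mul_apply, ← Module.End.mul_apply, ← map_mul, ← map_mul]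
  have hcomm : g * (r f)⁻¹ = (r (σ f))⁻¹ * g := by
    rw [← map_inv, ← map_inv, hσ, map_inv]
  rw [hcomm]
  rfl

variable [Nontrivial U] (hβ : IsConjPairing r β)

include hβ

lemma permWeight_apply_eq (e : E) : permWeight E L (MulAut.toPerm E σ) (β e) = β (σ e) := by
  refine (hβ.eq_of_mem ?_).symm
  have hconj : conjEnd L U g (r e) = r (σ e) := by
    rw [conjEnd_apply, ← Units.val_mul, hσ, ← Units.val_mul, mul_inv_cancel_right]
  rw [← hconj]
  exact conjEnd_mem_conjWeightSpace hσ _ _ (hβ.apply_mem e)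

lemma permWeight_pow_apply_eq (i : ℕ) (e : E) :
    (permWeight E L (MulAut.toPerm E σ) ^ i) (β e) = β ((σ ^ i) e) := by
  induction i with
  | zero => rfl
  | succ i ih =>
    rw [pow_succ', pow_succ', Equiv.Perm.mul_apply, ih, permWeight_apply_eq hσ hβ]
    rfl

end Equivariance

lemma card_eq_card_mul_card_ker [Nontrivial U] [Fintype E] [DecidableEq L] (hβ : IsConjPairing r β)
    {B : Finset (E → L)} (hB : ∀ b, b ∈ B ↔ ∃ e, β e = b) :
    Nat.card E = B.card * (Finset.univ.filter fun e ↦ β e = 1).card := by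
  rw [Nat.card_eq_fintype_card, ← Finset.card_univ]
  refine Eq.trans ?_ (card_filter_map_mem hβ.toHom fun b hb ↦ (hB b).1 hb)
  exact congrArg _ (Finset.filter_true_of_mem fun e _ ↦ (hB _).2 ⟨e, rfl⟩).symm

variable [IsAlgClosed L] [FiniteDimensional L U] [Nontrivial U]

lemma card_mul_finrank_le (hβ : IsConjPairing r β) (hE : (Nat.card E : L) ≠ 0)
    {B : Finset (E → L)} (hB : ∀ b ∈ B, ∃ e, β e = b) :
    B.card * finrank L (conjWeightSpace r (1 : E → L)) ≤ finrank L U ^ 2 := by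
  obtain ⟨D⟩ := hβ.nonempty_projectionFamily hE
  calc B.card * finrank L (conjWeightSpace r (1 : E → L))
      = ∑ b ∈ B, finrank L (conjWeightSpace r b) := by
        rw [← smul_eq_mul, ← Finset.sum_const]
        refine Finset.sum_congr rfl fun b hb ↦ ?_
        obtain ⟨e, rfl⟩ := hB b hb
        exact (hβ.finrank_conjWeightSpace_eq e).symm
    _ ≤ finrank L (Module.End L U) := D.sum_finrank_le B
    _ = finrank L U ^ 2 := by rw [Module.finrank_linearMap, sq]

variable [Finite E] {p a : ℕ}

lemma mul_finrank_ker_conjEnd_le (hβ : IsConjPairing r β) (hE : (Nat.card E : L) ≠ 0)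
    (hscalar : ∀ e, β e = 1 → ∃ c : L, (r e : Module.End L U) = c • 1)
    (hσ : ∀ f, g * r f = r (σ f) * g) (hp : p.Prime) (hσq : σ ^ p ^ a = 1) {B Bs : Finset (E → L)}
    (hB : ∀ b, b ∈ B ↔ ∃ e, β e = b)
    (hBs : ∀ e, β ((σ ^ p ^ (a - 1)) e) = β e → β e ∈ Bs) :
    p ^ a * finrank L (LinearMap.ker (conjEnd L U g - 1)) ≤
      (B.card + p ^ a * Bs.card) * finrank L (conjWeightSpace r (1 : E → L)) := by
  obtain ⟨D⟩ := hβ.nonempty_projectionFamily hE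
  refine D.mul_finrank_ker_le (conjEnd_mem_conjWeightSpace hσ) hp
    (by rw [← map_pow, ← map_pow, hσq, map_one, map_one]) (fun χ ↦ ?_) (fun b hb ↦ ?_)
    (fun b hb ↦ ?_) (fun b hb hfix ↦ ?_)
  · rcases eq_or_ne (conjWeightSpace r χ) ⊥ with hχ | hχ
    · rw [hχ, finrank_bot]
      exact Nat.zero_le _
    · obtain ⟨e, rfl⟩ := hβ.exists_eq_of_conjWeightSpace_ne_bot hscalar hχ
      exact (hβ.finrank_conjWeightSpace_eq e).le
  · obtain ⟨e, rfl⟩ := (hB b).1 hb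
    exact (hB _).2 ⟨σ e, (permWeight_apply_eq hσ hβ e).symm⟩
  · exact (hB b).2 (hβ.exists_eq_of_conjWeightSpace_ne_bot hscalar ((D.mem_support b).1 hb))
  · obtain ⟨e, rfl⟩ := (hB b).1 hb
    exact hBs e (by rwa [permWeight_pow_apply_eq hσ hβ] at hfix)

/-- With `q = p ^ a`, the centralizer of `g` has dimension at least about `(dim U) ^ 2 / (q - 1)`,
whereas it would have dimension at most about `(dim U) ^ 2 / q` if few weights were fixed. -/
lemma card_image_le_mul_card_fixed (hβ : IsConjPairing r β) (hE : (Nat.card E : L) ≠ 0)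
    (hscalar : ∀ e, β e = 1 → ∃ c : L, (r e : Module.End L U) = c • 1)
    (hσ : ∀ f, g * r f = r (σ f) * g) (hp : p.Prime) (ha : 0 < a) (hpL : (p : L) ≠ 0)
    (hσq : σ ^ p ^ a = 1) (hgq : g ^ p ^ a = 1) {B Bs : Finset (E → L)}
    (hB : ∀ b, b ∈ B ↔ ∃ e, β e = b)
    (hBs : ∀ e, β ((σ ^ p ^ (a - 1)) e) = β e → β e ∈ Bs) :
    B.card ≤ 16 * (p ^ a) ^ 2 *
      (finrank L (LinearMap.ker ((g : Module.End L U) - 1)) + 1) ^ 2 * Bs.card := by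
  have hker := hβ.mul_finrank_ker_conjEnd_le hE hscalar hσ hp hσq hB hBs
  have hsum := hβ.card_mul_finrank_le hE fun b hb ↦ (hB b).1 hb
  have hcent := (sq_finrank_sub_finrank_ker_le (q := p ^ a)
    (by push_cast; exact pow_ne_zero _ hpL)
    (by rw [← Units.val_pow_eq_pow_val, hgq, Units.val_one])).trans
      (Nat.mul_le_mul_left _ (finrank_centralizer_le_finrank_ker_conjEnd g))
  have hq : 2 ≤ p ^ a := hp.two_le.trans (Nat.le_self_pow ha.ne' p)
  have hf : 1 ≤ Bs.card := by
    refine Finset.card_pos.2 ⟨β 1, hBs 1 ?_⟩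
    rw [map_one]
  have hδ : 1 ≤ finrank L (conjWeightSpace r (1 : E → L)) := by
    rw [← hβ.finrank_conjWeightSpace_eq 1]
    exact Submodule.one_le_finrank_iff.2 (hβ.conjWeightSpace_ne_bot 1)
  have hd := Submodule.finrank_le (LinearMap.ker ((g : Module.End L U) - 1))
  have key := le_of_sq_sub_le (n := B.card) (f := Bs.card) (D := finrank L U)
    (d := finrank L (LinearMap.ker ((g : Module.End L U) - 1)))
    (δ := finrank L (conjWeightSpace r (1 : E → L))) (q := (p ^ a : ℕ))
    (c := finrank L (LinearMap.ker (conjEnd L U g - 1))) (by exact_mod_cast hq)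
    (by exact_mod_cast hf) (by exact_mod_cast hδ) (by positivity) (by positivity) (by positivity)
    (by exact_mod_cast hker) (by exact_mod_cast hsum)
    (by rw [← Nat.cast_sub hd, ← Nat.cast_pred (by lia)]; exact_mod_cast hcent)
  exact_mod_cast key

lemma card_le_mul_card_fixed_of_scalar (hβ : IsConjPairing r β) (hE : (Nat.card E : L) ≠ 0)
    (hscalar : ∀ e, β e = 1 → ∃ c : L, (r e : Module.End L U) = c • 1)
    (hσ : ∀ f, g * r f = r (σ f) * g) (hp : p.Prime) (ha : 0 < a) (hpL : (p : L) ≠ 0)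
    (hσq : σ ^ p ^ a = 1) (hgq : g ^ p ^ a = 1) :
    Nat.card E ≤ 16 * (p ^ a) ^ 2 *
      (finrank L (LinearMap.ker ((g : Module.End L U) - 1)) + 1) ^ 2 *
        Nat.card {e : E // β ((σ ^ p ^ (a - 1)) e) = β e} := by
  classical
  have : Fintype E := Fintype.ofFinite E
  let B : Finset (E → L) := Finset.univ.image β
  let Bs : Finset (E → L) :=
    B.filter fun b ↦ (permWeight E L (MulAut.toPerm E σ) ^ p ^ (a - 1)) b = b
  have hB (b : E → L) : b ∈ B ↔ ∃ e, β e = b := by simp [B]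
  have hBs (e : E) : β e ∈ Bs ↔ β ((σ ^ p ^ (a - 1)) e) = β e := by
    rw [Finset.mem_filter, permWeight_pow_apply_eq hσ hβ, and_iff_right ((hB _).2 ⟨e, rfl⟩)]
  have hcardFix : Nat.card {e : E // β ((σ ^ p ^ (a - 1)) e) = β e} =
      Bs.card * (Finset.univ.filter fun e ↦ β e = 1).card := by
    rw [Nat.card_eq_fintype_card, Fintype.card_subtype]
    refine Eq.trans ?_
      (card_filter_map_mem hβ.toHom fun b hb ↦ (hB b).1 (Finset.mem_filter.1 hb).1)
    exact congrArg _ (Finset.filter_congr fun e _ ↦ (hBs e).symm)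
  rw [hβ.card_eq_card_mul_card_ker hB, hcardFix, ← mul_assoc]
  exact Nat.mul_le_mul_right _ <|
    hβ.card_image_le_mul_card_fixed hE hscalar hσ hp ha hpL hσq hgq hB fun e ↦ (hBs e).2

end IsConjPairing

/-! ### Chief factors and chains with nilpotent factors -/

section ChiefFactor

variable {Γ : Type*} [Group Γ]

/-- `M₀ / M₁` is a chief factor: `M₁ < M₀` are consecutive normal subgroups. -/
structure IsChiefFactor (M₁ M₀ : Subgroup Γ) : Prop where
  normal_bot : M₁.Normal
  normal_top : M₀.Normal
  lt : M₁ < M₀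
  eq_or_eq : ∀ M : Subgroup Γ, M.Normal → M₁ ≤ M → M ≤ M₀ → M = M₁ ∨ M = M₀

lemma exists_isChiefFactor [Finite Γ] {B M₀ : Subgroup Γ} [hB : B.Normal] [hM₀ : M₀.Normal]
    (h : B < M₀) : ∃ M₁, B ≤ M₁ ∧ IsChiefFactor M₁ M₀ := by
  obtain ⟨M₁, hmax⟩ := (Set.toFinite {M : Subgroup Γ | M.Normal ∧ B ≤ M ∧ M < M₀}).exists_maximal
    ⟨B, hB, le_rfl, h⟩
  obtain ⟨hnormal, hle, hlt⟩ := hmax.1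
  refine ⟨M₁, hle, hnormal, hM₀, hlt, fun M hM hM₁ hMM₀ ↦ ?_⟩
  exact hMM₀.eq_or_lt.symm.imp_left
    fun hlt ↦ le_antisymm (hmax.2 ⟨hM, hle.trans hM₁, hlt⟩ hM₁) hM₁

lemma exists_iteratedCommutator_le [Finite Γ] {B E : Subgroup Γ} [B.Normal] [E.Normal]
    (Y : Subgroup Γ) [Y.Normal] (hBE : B ≤ E)
    (h : ∀ M₁ M₀, IsChiefFactor M₁ M₀ → B ≤ M₁ → M₀ ≤ E → ⁅M₀, Y⁆ ≤ M₁) :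
    ∃ i, iteratedCommutator E Y i ≤ B := by
  obtain ⟨i, hi⟩ := WellFoundedLT.antitone_chain_condition
    (f := fun i ↦ iteratedCommutator E Y i ⊔ B)
    fun i j hij ↦ sup_le_sup_right (iteratedCommutator_antitone E Y hij) _
  refine ⟨i, (le_sup_left (b := B)).trans (le_of_eq ?_)⟩
  by_contra hne
  obtain ⟨M₁, hBM₁, hchief⟩ := exists_isChiefFactor (lt_of_le_of_ne' le_sup_right hne)
  have hcomm := h M₁ _ hchief hBM₁
    (sup_le (iteratedCommutator_antitone E Y (Nat.zero_le i)) hBE)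
  have hnext : iteratedCommutator E Y (i + 1) ⊔ B ≤ M₁ :=
    sup_le ((Subgroup.commutator_mono le_sup_left le_rfl).trans hcomm) hBM₁
  rw [← hi (i + 1) (Nat.le_succ i)] at hnext
  exact hchief.lt.not_ge hnext

lemma exists_normal_commutator_le [Group.IsSolvable Γ] {A D : Subgroup Γ} [A.Normal] [D.Normal]
    (h : ¬ D ≤ A) :
    ∃ E : Subgroup Γ, E.Normal ∧ A ≤ E ∧ ¬ E ≤ A ∧ E ≤ A ⊔ D ∧ ⁅E, E⁆ ≤ A := by
  classical
  have hex : ∃ i, iteratedDerived D i ≤ A := by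
    obtain ⟨i, hi⟩ := exists_iteratedDerived_eq_bot D
    exact ⟨i, hi.trans_le bot_le⟩
  obtain ⟨j, hj⟩ : ∃ j, Nat.find hex = j + 1 :=
    Nat.exists_eq_succ_of_ne_zero fun h0 ↦ h ((Nat.find_eq_zero hex).1 h0)
  have hnot : ¬ iteratedDerived D j ≤ A := Nat.find_min hex (by lia)
  have hle : iteratedDerived D (j + 1) ≤ A := hj ▸ Nat.find_spec hex
  refine ⟨A ⊔ iteratedDerived D j, inferInstance, le_sup_left,
    fun h ↦ hnot (le_sup_right.trans h), sup_le_sup_left (iteratedDerived_le D j) _, ?_⟩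
  have hmap (X : Subgroup Γ) : X ≤ A ↔ X.map (QuotientGroup.mk' A) = ⊥ := by
    rw [Subgroup.map_eq_bot_iff, QuotientGroup.ker_mk']
  rwa [hmap, Subgroup.map_commutator, Subgroup.map_sup, (hmap A).1 le_rfl, bot_sup_eq,
    ← Subgroup.map_commutator, ← hmap]

lemma not_dvd_card_of_isNilpotent [Finite Γ] {l : ℕ} [Fact l.Prime] (C : Subgroup Γ) [C.Normal]
    [hC : Group.IsNilpotent C] (hcore : ∀ P : Subgroup Γ, P.Normal → P ≤ C → IsPGroup l P → P = ⊥) :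
    ¬ l ∣ Nat.card C := by
  intro hdvd
  have P : Sylow l C := default
  have hPnormal : (P : Subgroup C).Normal :=
    ((Group.isNilpotent_of_finite_tfae (G := C)).out 0 3 rfl rfl).1 hC l inferInstance P
  have := P.characteristic_of_normal hPnormal
  have hbot := hcore ((P : Subgroup C).map C.subtype) inferInstance (Subgroup.map_subtype_le _)
    (P.isPGroup'.map C.subtype)
  rw [Subgroup.map_eq_bot_iff, Subgroup.ker_subtype, le_bot_iff] at hbot
  exact P.ne_bot_of_dvd_card hdvd hbot

/-- The group `Γ` has no nontrivial normal `l`-subgroup. -/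
def HasTrivialPCore (l : ℕ) (Γ : Type*) [Group Γ] : Prop :=
  ∀ P : Subgroup Γ, P.Normal → IsPGroup l P → P = ⊥

lemma HasTrivialPCore.card_ne_zero [Finite Γ] {l : ℕ} [Fact l.Prime] (hΓ : HasTrivialPCore l Γ)
    (L : Type*) [Field L] [CharP L l] (C : Subgroup Γ) [C.Normal] [Group.IsNilpotent C] :
    (Nat.card C : L) ≠ 0 := by
  rw [Ne, CharP.cast_eq_zero_iff L l]
  exact not_dvd_card_of_isNilpotent C fun P hP _ ↦ hΓ P hP

end ChiefFactor

section NilpotentChain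

variable {G Q : Type*} [Group G] [Group Q]

/-- A chain of `k` normal subgroups descends from `A` into `B`, each term modulo the next one
being nilpotent. -/
def NilpotentChain (B : Subgroup G) : Subgroup G → ℕ → Prop
  | A, 0 => A ≤ B
  | A, k + 1 => ∃ C : Subgroup G, C.Normal ∧ C ≤ A ∧ (∃ n, A.lowerCentralSeries n ≤ C) ∧
      NilpotentChain B C k

namespace NilpotentChain

variable {A B C : Subgroup G} {k l : ℕ}

lemma mono {A' : Subgroup G} (hA' : A'.Normal) (hle : A' ≤ A) (h : NilpotentChain B A k) :
    NilpotentChain B A' k := by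
  induction k generalizing A A' with
  | zero => exact hle.trans h
  | succ k ih =>
    obtain ⟨C, hC, -, ⟨n, hn⟩, hchain⟩ := h
    refine ⟨C ⊓ A', inferInstance, inf_le_right, ⟨n, le_inf ?_ ?_⟩,
      ih inferInstance inf_le_left hchain⟩
    · exact (lowerCentralSeries_mono hle n).trans hn
    · exact A'.lowerCentralSeries_antitone (Nat.zero_le n)

lemma trans (hA : A.Normal) (hAB : NilpotentChain B A k) (hBC : NilpotentChain C B l) :
    NilpotentChain C A (k + l) := by
  induction k generalizing A with
  | zero =>
    rw [Nat.zero_add]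
    exact hBC.mono hA hAB
  | succ k ih =>
    obtain ⟨D, hD, hDA, hn, hDB⟩ := hAB
    rw [Nat.succ_add]
    exact ⟨D, hD, hDA, hn, ih hD hDB⟩

lemma comap (f : G →* Q) {A B : Subgroup Q} (h : NilpotentChain B A k) :
    NilpotentChain (B.comap f) (A.comap f) k := by
  induction k generalizing A with
  | zero => exact Subgroup.comap_mono h
  | succ k ih =>
    obtain ⟨C, hC, hCA, ⟨n, hn⟩, hchain⟩ := h
    refine ⟨C.comap f, inferInstance, Subgroup.comap_mono hCA, ⟨n, ?_⟩, ih hchain⟩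
    rw [← Subgroup.map_le_iff_le_comap, map_lowerCentralSeries]
    exact (lowerCentralSeries_mono (Subgroup.map_comap_le _ _) n).trans hn

lemma one [C.Normal] (hCA : C ≤ A) {n : ℕ} (hn : A.lowerCentralSeries n ≤ C) :
    NilpotentChain C A 1 :=
  ⟨C, ‹_›, hCA, ⟨n, hn⟩, le_rfl⟩

lemma iteratedDerived (A : Subgroup G) [A.Normal] (k : ℕ) :
    NilpotentChain (iteratedDerived A k) A k := by
  induction k with
  | zero => exact le_rfl
  | succ k ih =>
    exact ih.trans inferInstance (one (n := 1) (iteratedDerived_antitone A k.le_succ) le_rfl)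

lemma nilpotentResidual [Finite G] (A : Subgroup G) [A.Normal] :
    NilpotentChain (nilpotentResidual A) A 1 := by
  obtain ⟨i, hi⟩ := exists_nilpotentResidual_eq A
  exact one (nilpotentResidual_le A) hi.ge

lemma exists_seq (hA : A.Normal) (h : NilpotentChain ⊥ A k) :
    ∃ H : ℕ → Subgroup G, H 0 = ⊥ ∧ H k = A ∧ (∀ i, (H i).Normal) ∧ (∀ i, H i ≤ H (i + 1)) ∧
      ∀ i < k, ∃ n, (H (i + 1)).lowerCentralSeries n ≤ H i := by
  induction k generalizing A with
  | zero =>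
    exact ⟨fun _ ↦ ⊥, rfl, (le_bot_iff.1 h).symm, fun _ ↦ inferInstance, fun _ ↦ le_rfl, by simp⟩
  | succ k ih =>
    obtain ⟨C, hC, hCA, hn, hchain⟩ := h
    obtain ⟨H, hbot, rfl, hnormal, hle, hnil⟩ := ih hC hchain
    have hH {i : ℕ} (hi : i ≤ k) : (if i ≤ k then H i else A) = H i := if_pos hi
    have hHA {i : ℕ} (hi : k < i) : (if i ≤ k then H i else A) = A := if_neg hi.not_ge
    refine ⟨fun i ↦ if i ≤ k then H i else A, (hH k.zero_le).trans hbot, hHA k.lt_succ_self,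
      fun i ↦ ?_, fun i ↦ ?_, fun i hi ↦ ?_⟩ <;> dsimp only
    · split_ifs
      exacts [hnormal i, hA]
    · rcases lt_trichotomy i k with hik | rfl | hik
      · rw [hH hik.le, hH hik]
        exact hle i
      · rwa [hH le_rfl, hHA i.lt_succ_self]
      · rw [hHA hik, hHA (by lia)]
    · rcases Nat.lt_succ_iff_lt_or_eq.1 hi with hik | rfl
      · rw [hH hik.le, hH hik]
        exact hnil i hik
      · rwa [hH le_rfl, hHA i.lt_succ_self]

end NilpotentChain

lemma isNilpotent_quotient_subgroupOf {A C : Subgroup G} [(C.subgroupOf A).Normal] {n : ℕ}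
    (h : A.lowerCentralSeries n ≤ C) : Group.IsNilpotent (A ⧸ C.subgroupOf A) := by
  rw [Subgroup.nilpotent_iff_lowerCentralSeries]
  refine ⟨n, ?_⟩
  rw [← Subgroup.map_top_of_surjective _ (QuotientGroup.mk'_surjective (C.subgroupOf A)),
    ← map_lowerCentralSeries, Subgroup.map_eq_bot_iff, QuotientGroup.ker_mk', subgroupOf,
    ← Subgroup.map_le_iff_le_comap, top_subtype_lowerCentralSeries]
  exact h

lemma NilpotentChain.fittingHeightLE {k : ℕ} (h : NilpotentChain (⊥ : Subgroup G) ⊤ k) :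
    FittingHeightLE G k := by
  obtain ⟨H, hbot, htop, hnormal, hle, hnil⟩ := h.exists_seq inferInstance
  refine ⟨H, hbot, htop, hnormal, hle, fun i hi _ ↦ ?_⟩
  obtain ⟨n, hn⟩ := hnil i hi
  exact isNilpotent_quotient_subgroupOf hn

end NilpotentChain

/-! ### Restriction to stable subspaces -/

section Restriction

variable {G L M : Type*} [Group G] [Field L] [AddCommGroup M] [Module L M]

/-- The action of a group on a stable subspace `U` of a representation, by invertible operators. -/
def restrictUnits (ρ : Representation L G M) (U : Submodule L M) (hU : ∀ g, ∀ v ∈ U, ρ g v ∈ U) :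
    G →* (Module.End L U)ˣ :=
  (Subrepresentation.toRepresentation ⟨U, hU⟩).toHomUnits

lemma finrank_ker_restrict_sub_one {f : Module.End L M} {U : Submodule L M}
    (hf : ∀ v ∈ U, f v ∈ U) :
    finrank L (LinearMap.ker (f.restrict hf - 1)) =
      finrank L ↥(LinearMap.ker (f - 1) ⊓ U) := by
  have hker : LinearMap.ker (f.restrict hf - 1) = (LinearMap.ker (f - 1)).comap U.subtype := by
    ext v
    exact Subtype.ext_iff
  rw [← Submodule.finrank_map_subtype_eq, hker, Submodule.map_comap_subtype, inf_comm]

/-- The restriction of an operator of finite order to a stable subspace, as a unit. -/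
def restrictUnit {f : Module.End L M} {q : ℕ} (hfq : f ^ q = 1) (hq : q ≠ 0) {U : Submodule L M}
    (hf : ∀ v ∈ U, f v ∈ U) : (Module.End L U)ˣ :=
  Units.ofPowEqOne (f.restrict hf) q
    (by rw [Module.End.pow_restrict]; ext v; exact LinearMap.congr_fun hfq v) hq

end Restriction

namespace IsConjPairing

variable {E L U : Type*} [Group E] [Field L] [AddCommGroup U] [Module L U]
  {r : E →* (Module.End L U)ˣ} {β : E → E → L}

lemma restrictUnits (hβ : IsConjPairing r β) {V : Submodule L U}
    (hV : ∀ e, ∀ v ∈ V, (r e : Module.End L U) v ∈ V) :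
    IsConjPairing (restrictUnits ((Units.coeHom _).comp r) V hV) β := fun e f ↦
  LinearMap.ext fun v ↦ Subtype.ext (LinearMap.congr_fun (hβ e f) v)

lemma commute_of_eq_one (hβ : IsConjPairing r β) {e : E} (he : β e = 1) (f : E) :
    Commute (r e : Module.End L U) (r f) := by
  have h : r (f⁻¹ * e * f) = r e := Units.ext (by rw [hβ, he, Pi.one_apply, one_smul])
  rw [map_mul, map_mul, map_inv, mul_assoc, inv_mul_eq_iff_eq_mul] at h
  exact congrArg Units.val h

variable {g : (Module.End L U)ˣ} {σ : MulAut E}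

lemma pow_mul_apply_eq (hσ : ∀ f, g * r f = r (σ f) * g) (i : ℕ) (f : E) :
    g ^ i * r f = r ((σ ^ i) f) * g ^ i := by
  induction i with
  | zero => simp
  | succ i ih =>
    rw [pow_succ', mul_assoc, ih, ← mul_assoc, hσ, mul_assoc, pow_succ' σ, MulAut.mul_apply]

variable [Nontrivial U]

/-- The common eigenspaces of the operators `r e` for `e` in the radical of the pairing. -/
def kerEigenspace (hβ : IsConjPairing r β) (μ : hβ.toHom.ker → L) : Submodule L U :=
  jointEigenspace (fun e : hβ.toHom.ker ↦ (r e : Module.End L U)) μ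

lemma mem_kerEigenspace {hβ : IsConjPairing r β} {μ : hβ.toHom.ker → L} {v : U} :
    v ∈ hβ.kerEigenspace μ ↔ ∀ e : hβ.toHom.ker, (r e : Module.End L U) v = μ e • v :=
  mem_jointEigenspace

lemma apply_mem_kerEigenspace (hβ : IsConjPairing r β) {μ : hβ.toHom.ker → L} (e : E) {v : U}
    (hv : v ∈ hβ.kerEigenspace μ) : (r e : Module.End L U) v ∈ hβ.kerEigenspace μ := by
  rw [mem_kerEigenspace] at hv ⊢
  intro f
  rw [← map_smul, ← hv f]
  exact LinearMap.congr_fun (hβ.commute_of_eq_one f.2 e) v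

lemma nonempty_projectionFamily_kerEigenspace [IsAlgClosed L] [FiniteDimensional L U]
    (hβ : IsConjPairing r β) (hE : (Nat.card E : L) ≠ 0) :
    Nonempty (ProjectionFamily hβ.kerEigenspace) := by
  refine nonempty_projectionFamily_jointEigenspace
    (T := fun e : hβ.toHom.ker ↦ (r e : Module.End L U))
    (fun e f ↦ hβ.commute_of_eq_one e.2 f) fun e ↦ ⟨Nat.card E, hE, ?_⟩
  rw [← Units.val_pow_eq_pow_val, ← map_pow, pow_card_eq_one', map_one, Units.val_one]

/-- The automorphism `σ` as a permutation of the radical of the pairing `β`. -/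
def kerPerm (hβ : IsConjPairing r β) (hσ : ∀ f, g * r f = r (σ f) * g) :
    Equiv.Perm hβ.toHom.ker :=
  (MulAut.toPerm E σ).subtypePerm fun e ↦ by
    change β (σ e) = 1 ↔ β e = 1
    rw [← permWeight_apply_eq hσ hβ]
    exact (Equiv.eq_symm_apply _).symm

lemma kerPerm_pow_eq_one (hβ : IsConjPairing r β) (hσ : ∀ f, g * r f = r (σ f) * g) {q : ℕ}
    (hσq : σ ^ q = 1) : hβ.kerPerm hσ ^ q = 1 := by
  rw [kerPerm, Equiv.Perm.subtypePerm_pow]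
  ext e
  exact DFunLike.congr_fun ((map_pow (MulAut.toPerm E) σ q).symm.trans (congrArg _ hσq)) (e : E)

lemma apply_mem_kerEigenspace_permWeight (hβ : IsConjPairing r β)
    (hσ : ∀ f, g * r f = r (σ f) * g) (μ : hβ.toHom.ker → L) :
    ∀ v ∈ hβ.kerEigenspace μ,
      (g : Module.End L U) v ∈ hβ.kerEigenspace (permWeight _ L (hβ.kerPerm hσ) μ) := fun _ ↦
  map_mem_jointEigenspace (T := fun e : hβ.toHom.ker ↦ (r e : Module.End L U))
    fun e v ↦ LinearMap.congr_fun (congrArg Units.val (hσ e)) v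

variable [Finite E]

lemma card_eq_ncard_range_mul (hβ : IsConjPairing r β) :
    Nat.card E = (Set.range β).ncard * Nat.card {e // β e = 1} := by
  classical
  have := Fintype.ofFinite E
  rw [hβ.card_eq_card_mul_card_ker (B := (Set.finite_range β).toFinset) (by simp),
    Set.ncard_eq_toFinset_card _ (Set.finite_range β), Nat.card_eq_fintype_card,
    Fintype.card_subtype]

variable [IsAlgClosed L] [FiniteDimensional L U]

lemma ncard_range_le (hβ : IsConjPairing r β) (hE : (Nat.card E : L) ≠ 0) :
    (Set.range β).ncard ≤ finrank L U ^ 2 := by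
  have h := hβ.card_mul_finrank_le hE (B := (Set.finite_range β).toFinset) (by simp)
  rw [← Set.ncard_eq_toFinset_card _ (Set.finite_range β)] at h
  refine (Nat.le_mul_of_pos_right _ ?_).trans h
  rw [← hβ.finrank_conjWeightSpace_eq 1]
  exact Submodule.one_le_finrank_iff.2 (hβ.conjWeightSpace_ne_bot 1)

lemma card_le_of_finrank_kerEigenspace_le (hβ : IsConjPairing r β) (hE : (Nat.card E : L) ≠ 0)
    (hσ : ∀ f, g * r f = r (σ f) * g) {μ : hβ.toHom.ker → L} (hμ : hβ.kerEigenspace μ ≠ ⊥) {d : ℕ}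
    (hd : finrank L (hβ.kerEigenspace μ) ≤ d) (i : ℕ) :
    Nat.card E ≤ d ^ 2 * Nat.card {e : E // β ((σ ^ i) e) = β e} := by
  have : Nontrivial (hβ.kerEigenspace μ) := Submodule.nontrivial_iff_ne_bot.2 hμ
  have hrange :=
    (hβ.restrictUnits fun e _ ↦ hβ.apply_mem_kerEigenspace (μ := μ) e).ncard_range_le hE
  rw [hβ.card_eq_ncard_range_mul]
  refine Nat.mul_le_mul (hrange.trans (Nat.pow_le_pow_left hd 2)) ?_
  refine Nat.card_le_card_of_injective (fun e ↦ ⟨e.1, ?_⟩) fun e f hef ↦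
    Subtype.ext (congrArg (fun x : {e : E // β ((σ ^ i) e) = β e} ↦ x.1) hef)
  have h1 : permWeight E L (MulAut.toPerm E σ) 1 = 1 := rfl
  rw [← permWeight_pow_apply_eq hσ hβ, e.2]
  exact Equiv.Perm.pow_apply_eq_self_of_apply_eq_self h1 i

variable {p a : ℕ}

lemma card_le_of_pow_fixes (hβ : IsConjPairing r β) (hE : (Nat.card E : L) ≠ 0)
    (hσ : ∀ f, g * r f = r (σ f) * g) (hp : p.Prime) (hpL : (p : L) ≠ 0) (hσq : σ ^ p ^ a = 1)
    (hgq : g ^ p ^ a = 1) {μ : hβ.toHom.ker → L} (hμ : hβ.kerEigenspace μ ≠ ⊥) {j : ℕ} (hj : j < a)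
    (hfix : (permWeight _ L (hβ.kerPerm hσ) ^ p ^ j) μ = μ) :
    Nat.card E ≤ 16 * (p ^ a) ^ 2 *
      (finrank L ↥(LinearMap.ker ((g : Module.End L U) ^ p ^ j - 1) ⊓ hβ.kerEigenspace μ) + 1) ^ 2 *
        Nat.card {e : E // β ((σ ^ p ^ (a - 1)) e) = β e} := by
  have : Nontrivial (hβ.kerEigenspace μ) := Submodule.nontrivial_iff_ne_bot.2 hμ
  obtain ⟨b, rfl⟩ : ∃ b, a = j + (b + 1) := ⟨a - j - 1, by omega⟩
  have hstable : ∀ v ∈ hβ.kerEigenspace μ,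
      ((g : Module.End L U) ^ p ^ j) v ∈ hβ.kerEigenspace μ := fun v hv ↦ by
    simpa only [hfix] using
      pow_apply_mem (hβ.apply_mem_kerEigenspace_permWeight hσ) (p ^ j) hv
  have hgq' : ((g : Module.End L U) ^ p ^ j) ^ p ^ (b + 1) = 1 := by
    rw [← pow_mul, ← pow_add, ← Units.val_pow_eq_pow_val, hgq, Units.val_one]
  have key := (hβ.restrictUnits fun e _ ↦
    hβ.apply_mem_kerEigenspace (μ := μ) e).card_le_mul_card_fixed_of_scalar (σ := σ ^ p ^ j)
      (a := b + 1) (g := restrictUnit hgq' (pow_pos hp.pos _).ne' hstable) hE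
      (fun e he ↦ ⟨μ ⟨e, he⟩, LinearMap.ext fun v ↦ Subtype.ext (mem_kerEigenspace.1 v.2 ⟨e, he⟩)⟩)
      (fun f ↦ Units.ext (LinearMap.ext fun v ↦ Subtype.ext
        (LinearMap.congr_fun (congrArg Units.val (pow_mul_apply_eq hσ (p ^ j) f)) v))) hp
      (Nat.add_one_pos b) hpL (by rw [← pow_mul, ← pow_add, hσq]) (Units.pow_ofPowEqOne _ _)
  have hσb : (σ ^ p ^ j) ^ p ^ (b + 1 - 1) = σ ^ p ^ (j + (b + 1) - 1) := by
    rw [← pow_mul, ← pow_add, Nat.add_sub_cancel, ← add_assoc, Nat.add_sub_cancel]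
  have hfin := finrank_ker_restrict_sub_one hstable
  rw [hσb] at key
  rw [← hfin]
  refine key.trans ?_
  gcongr 16 * ?_ ^ 2 * _ * _
  exact Nat.pow_le_pow_right hp.pos (Nat.le_add_left _ _)

lemma card_le_mul_card_fixed (hβ : IsConjPairing r β) (hE : (Nat.card E : L) ≠ 0)
    (hσ : ∀ f, g * r f = r (σ f) * g) (hp : p.Prime) (ha : 0 < a) (hpL : (p : L) ≠ 0)
    (hσq : σ ^ p ^ a = 1) (hgq : g ^ p ^ a = 1) :
    Nat.card E ≤ 16 * (p ^ a) ^ 2 *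
      (finrank L (LinearMap.ker ((g : Module.End L U) - 1)) + 1) ^ 2 *
        Nat.card {e : E // β ((σ ^ p ^ (a - 1)) e) = β e} := by
  obtain ⟨D⟩ := hβ.nonempty_projectionFamily_kerEigenspace hE
  obtain ⟨μ, hμ⟩ := D.exists_ne_bot
  rcases D.finrank_le_or_exists_pow_fixes (hβ.apply_mem_kerEigenspace_permWeight hσ) hp ha
    (by rw [← map_pow, hβ.kerPerm_pow_eq_one hσ hσq, map_one])
    (by rw [← Units.val_pow_eq_pow_val, hgq, Units.val_one]) μ with ⟨-, hle⟩ | ⟨j, hj, hfix, hle⟩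
  · refine (hβ.card_le_of_finrank_kerEigenspace_le hE hσ hμ hle _).trans (Nat.mul_le_mul_right _ ?_)
    have : 1 ≤ (p ^ a) ^ 2 := Nat.one_le_pow _ _ (pow_pos hp.pos _)
    nlinarith
  · refine (hβ.card_le_of_pow_fixes hE hσ hp hpL hσq hgq hμ hj hfix).trans ?_
    gcongr

end IsConjPairing

/-! ### Class two subgroups -/

section ClassTwo

variable {Γ : Type*} [Group Γ] {A E : Subgroup Γ}

/-- `E` is nilpotent of class at most two because its derived subgroup is contained in a subgroup
`A` that centralizes it. -/
structure IsClassTwoOver (A E : Subgroup Γ) : Prop where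
  le_centralizer : A ≤ centralizer E
  commutator_le : ⁅E, E⁆ ≤ A

namespace IsClassTwoOver

lemma isNilpotent (h : IsClassTwoOver A E) : Group.IsNilpotent E := by
  refine (Subgroup.isNilpotent_iff_lowerCentralSeries E).2 ⟨2, ?_⟩
  rw [Subgroup.lowerCentralSeries_succ, Subgroup.lowerCentralSeries_succ,
    Subgroup.lowerCentralSeries_zero, commutator_eq_bot_iff_le_centralizer]
  exact h.commutator_le.trans h.le_centralizer

lemma commutatorElement_mem (h : IsClassTwoOver A E) {e f : Γ} (hf : f ∈ E) (he : e ∈ E) :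
    ⁅f, e⁆ ∈ A := h.commutator_le (commutator_mem_commutator hf he)

lemma commutatorElement_mul_right (h : IsClassTwoOver A E) {e e' f : Γ} (hf : f ∈ E) (he : e ∈ E)
    (he' : e' ∈ E) : ⁅f, e * e'⁆ = ⁅f, e⁆ * ⁅f, e'⁆ := by
  have hcomm := mem_centralizer_iff.1 (h.le_centralizer (h.commutatorElement_mem hf he')) e he
  calc ⁅f, e * e'⁆ = ⁅f, e⁆ * (e * ⁅f, e'⁆ * e⁻¹) := by simp only [commutatorElement_def]; group
    _ = ⁅f, e⁆ * ⁅f, e'⁆ := by rw [hcomm, mul_inv_cancel_right]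

lemma commutatorElement_inv_right (h : IsClassTwoOver A E) {e f : Γ} (hf : f ∈ E) (he : e ∈ E) :
    ⁅f, e⁻¹⁆ = ⁅f, e⁆⁻¹ := by
  refine eq_inv_of_mul_eq_one_right ?_
  rw [← h.commutatorElement_mul_right hf he (E.inv_mem he), mul_inv_cancel,
    commutatorElement_one_right]

variable {L M : Type*} [Field L] [AddCommGroup M] [Module L M]

/-- The elements `e` of `E` whose commutators with `E` act trivially on the weight space of `χ`:
the radical of the commutator pairing `E × E → A → Lˣ` attached to the weight `χ` of `A`. -/
def weightRadical (h : IsClassTwoOver A E) (ρ : Γ →* Module.End L M) (χ : Weight A L) :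
    Subgroup Γ where
  carrier := {e | e ∈ E ∧ ∀ f ∈ E, ∀ v ∈ weightSpace ρ A χ, ρ ⁅f, e⁆ v = v}
  one_mem' := ⟨E.one_mem, fun f _ v _ ↦ by rw [commutatorElement_one_right, map_one]; rfl⟩
  mul_mem' := fun ⟨ha, ha'⟩ ⟨hb, hb'⟩ ↦ ⟨E.mul_mem ha hb, fun f hf v hv ↦ by
    rw [h.commutatorElement_mul_right hf ha hb, map_mul, Module.End.mul_apply, hb' f hf v hv,
      ha' f hf v hv]⟩
  inv_mem' := fun {a} ⟨ha, ha'⟩ ↦ ⟨E.inv_mem ha, fun f hf v hv ↦ by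
    rw [h.commutatorElement_inv_right hf ha]
    conv_lhs => rw [← ha' f hf v hv]
    exact Representation.inv_self_apply ρ _ v⟩

/-- The commutator pairing of `E` composed with the weight `χ`, as a function of its second
argument. The inverse makes it a conjugation pairing, see `isConjPairing`. -/
def commutatorWeight (h : IsClassTwoOver A E) (χ : Weight A L) (e : E) : Weight E L := fun f ↦
  χ ⟨⁅(f : Γ)⁻¹, (e : Γ)⁆, h.commutatorElement_mem (E.inv_mem f.2) e.2⟩

variable {ρ : Γ →* Module.End L M}

lemma weightRadical_le (h : IsClassTwoOver A E) (ρ : Γ →* Module.End L M) (χ : Weight A L) :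
    h.weightRadical ρ χ ≤ E := fun _ he ↦ he.1

lemma mem_weightRadical_iff (h : IsClassTwoOver A E) {χ : Weight A L} (hχ : weightSpace ρ A χ ≠ ⊥)
    (e : E) : (e : Γ) ∈ h.weightRadical ρ χ ↔ ∀ f, h.commutatorWeight χ e f = 1 := by
  obtain ⟨v, hv, hv0⟩ := (Submodule.ne_bot_iff _).1 hχ
  have fixes_iff (a : A) : (∀ v ∈ weightSpace ρ A χ, ρ a v = v) ↔ χ a = 1 := by
    refine ⟨fun ha ↦ ?_, fun ha v hv ↦ by rw [mem_weightSpace.1 hv, ha, one_smul]⟩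
    have h1 := ha v hv
    rw [mem_weightSpace.1 hv] at h1
    exact smul_left_injective L hv0 (h1.trans (one_smul L v).symm)
  have hmem (f : E) := h.commutatorElement_mem (E.inv_mem f.2) e.2
  refine ⟨fun he f ↦ (fixes_iff ⟨_, hmem f⟩).1 (he.2 _ (E.inv_mem f.2)),
    fun he ↦ ⟨e.2, fun f hf ↦ ?_⟩⟩
  simpa only [Subgroup.coe_inv, inv_inv] using
    (fixes_iff ⟨_, hmem (⟨f, hf⟩⁻¹)⟩).2 (he (⟨f, hf⟩⁻¹))

lemma mem_inf_centralizer_of_forall_mem_weightRadical (h : IsClassTwoOver A E)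
    (hρ : Function.Injective ρ) (D : ProjectionFamily (weightSpace ρ A)) {e : Γ} (he : e ∈ E)
    (hrad : ∀ χ ∈ D.support, e ∈ h.weightRadical ρ χ) : e ∈ E ⊓ centralizer E := by
  refine ⟨he, mem_centralizer_iff.2 fun f hf ↦ ?_⟩
  rw [← commutatorElement_eq_one_iff_mul_comm]
  refine hρ (LinearMap.ext fun v ↦ ?_)
  rw [← D.sum_proj v, map_sum, map_sum]
  refine Finset.sum_congr rfl fun χ hχ ↦ ?_
  rw [(hrad χ hχ).2 f hf _ (D.proj_mem χ v), map_one, Module.End.one_apply]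

lemma isConjPairing (h : IsClassTwoOver A E) (χ : Weight A L)
    (hE : ∀ e : E, ∀ v ∈ weightSpace ρ A χ, ρ e v ∈ weightSpace ρ A χ) :
    IsConjPairing (restrictUnits (ρ.comp E.subtype) (weightSpace ρ A χ) hE)
      (h.commutatorWeight χ) := fun e f ↦ by
  refine LinearMap.ext fun v ↦ Subtype.ext ?_
  have hconj : ((f⁻¹ * e * f : E) : Γ) = ⁅(f : Γ)⁻¹, (e : Γ)⁆ * e := by
    simp [commutatorElement_def]
  change ρ ((f⁻¹ * e * f : E) : Γ) v = h.commutatorWeight χ e f • ρ e v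
  rw [hconj, map_mul, Module.End.mul_apply]
  exact mem_weightSpace.1 (hE e v v.2) ⟨_, h.commutatorElement_mem (E.inv_mem f.2) e.2⟩

end IsClassTwoOver

lemma smul_weight_eq_of_commute [A.Normal] {L : Type*} {x : Γ} (hx : ∀ a ∈ A, x * a = a * x)
    (χ : Weight A L) : x • χ = χ := by
  have hfix : conjPerm A x = 1 := by
    ext a
    rw [conjPerm_apply, hx a a.2, mul_inv_cancel_right, Equiv.Perm.one_apply]
  funext a
  rw [weight_smul_apply, hfix, inv_one, Equiv.Perm.one_apply]

lemma IsClassTwoOver.smul_commutatorWeight [A.Normal] [E.Normal] {L : Type*}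
    (h : IsClassTwoOver A E) {x : Γ} {χ : Weight A L} (hx : x • χ = χ) (e : E) :
    x • h.commutatorWeight χ e = h.commutatorWeight χ (conjPerm E x e) := by
  funext f
  have hxa := congrFun hx ⟨_, h.commutatorElement_mem (E.inv_mem f.2) (conjPerm E x e).2⟩
  rw [weight_smul_apply] at hxa ⊢
  refine Eq.trans (congrArg χ (Subtype.ext ?_)) hxa
  simp only [← map_inv, conjPerm_apply, commutatorElement_def]
  group

namespace IsClassTwoOver

variable [A.Normal] {L M : Type*} [Field L] [AddCommGroup M] [Module L M]
  {ρ : Γ →* Module.End L M}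

lemma map_mem_weightSpace (h : IsClassTwoOver A E) (χ : Weight A L) (e : E) :
    ∀ v ∈ weightSpace ρ A χ, ρ e v ∈ weightSpace ρ A χ :=
  apply_mem_weightSpace_of_smul_eq <| smul_weight_eq_of_commute (fun _ ha ↦
    mem_centralizer_iff.1 (h.le_centralizer ha) e e.2) χ

lemma commutatorWeight_eq_iff (h : IsClassTwoOver A E) {χ : Weight A L}
    (hχ : weightSpace ρ A χ ≠ ⊥) (e e' : E) :
    h.commutatorWeight χ e = h.commutatorWeight χ e' ↔
      (e : Γ) * (e' : Γ)⁻¹ ∈ h.weightRadical ρ χ := by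
  have : Nontrivial (weightSpace ρ A χ) := Submodule.nontrivial_iff_ne_bot.2 hχ
  let β := (h.isConjPairing χ (h.map_mem_weightSpace (ρ := ρ) χ)).toHom
  calc β e = β e' ↔ e'⁻¹ * e ∈ β.ker := β.eq_iff
    _ ↔ e * e'⁻¹ ∈ β.ker := β.normal_ker.mem_comm_iff
    _ ↔ _ := funext_iff.trans (h.mem_weightRadical_iff hχ (e * e'⁻¹)).symm

variable [E.Normal]

lemma conj_mem_weightRadical (h : IsClassTwoOver A E) {χ : Weight A L} {x e : Γ} (hx : x • χ = χ)
    (he : e ∈ h.weightRadical ρ χ) : x * e * x⁻¹ ∈ h.weightRadical ρ χ := by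
  refine ⟨‹E.Normal›.conj_mem e he.1 x, fun f hf v hv ↦ ?_⟩
  have hconj : ⁅f, x * e * x⁻¹⁆ = x * ⁅x⁻¹ * f * x, e⁆ * x⁻¹ := by
    simp only [commutatorElement_def]; group
  have hv' := apply_mem_weightSpace_of_smul_eq (inv_smul_eq_iff.2 hx.symm) v hv
  have hf' : x⁻¹ * f * x ∈ E := by simpa only [inv_inv] using ‹E.Normal›.conj_mem f hf x⁻¹
  rw [hconj, map_mul, map_mul, Module.End.mul_apply, Module.End.mul_apply, he.2 _ hf' _ hv']
  exact Representation.self_inv_apply ρ x v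

lemma commutator_le_weightRadical (h : IsClassTwoOver A E) {χ : Weight A L}
    (hχ : weightSpace ρ A χ ≠ ⊥) {D : Subgroup Γ} (hD : ∀ x ∈ D, x • χ = χ)
    (hfix : ∀ x ∈ D, ∀ e, x • h.commutatorWeight χ e = h.commutatorWeight χ e) :
    ⁅E, D⁆ ≤ h.weightRadical ρ χ := by
  rw [Subgroup.commutator_comm, Subgroup.commutator_le]
  intro x hx e he
  have heq := hfix x hx ⟨e, he⟩
  rwa [h.smul_commutatorWeight (hD x hx), h.commutatorWeight_eq_iff (ρ := ρ) hχ,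
    conjPerm_apply] at heq

lemma smul_commutatorWeight_eq_of_mem_iteratedDerived [Finite Γ] [Group.IsSolvable Γ]
    [IsAlgClosed L] [FiniteDimensional L M] (h : IsClassTwoOver A E) {χ : Weight A L}
    (hχ : weightSpace ρ A χ ≠ ⊥) (hE : (Nat.card E : L) ≠ 0) {d : ℕ}
    (hd : finrank L (weightSpace ρ A χ) ≤ d) {K : Subgroup Γ} (hK : ∀ x ∈ K, x • χ = χ) :
    ∀ x ∈ iteratedDerived K (d ^ 2).factorial, ∀ e,
      x • h.commutatorWeight χ e = h.commutatorWeight χ e := by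
  intro x hx e
  have : Nontrivial (weightSpace ρ A χ) := Submodule.nontrivial_iff_ne_bot.2 hχ
  refine iteratedDerived_factorial_smul_eq (T := Set.range (h.commutatorWeight χ))
    (Set.finite_range _) ?_ ?_ x hx _ ⟨e, rfl⟩
  · exact ((h.isConjPairing χ (h.map_mem_weightSpace (ρ := ρ) χ)).ncard_range_le hE).trans
      (Nat.pow_le_pow_left hd 2)
  · rintro k hk _ ⟨e, rfl⟩
    exact ⟨_, (h.smul_commutatorWeight (hK k hk) e).symm⟩

end IsClassTwoOver

end ClassTwo

section DisplacementRank

variable {Γ L M : Type*} [Group Γ] [Field L] [AddCommGroup M] [Module L M]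

/-- The codimension of the space of fixed points of `x`. -/
noncomputable def displacementRank (ρ : Γ →* Module.End L M) (x : Γ) : ℕ :=
  finrank L (LinearMap.range (ρ x - 1))

variable [FiniteDimensional L M] (ρ : Γ →* Module.End L M)

lemma displacementRank_mul_le (x y : Γ) :
    displacementRank ρ (x * y) ≤ displacementRank ρ x + displacementRank ρ y := by
  have hle : LinearMap.range (ρ (x * y) - 1) ≤
      LinearMap.range (ρ x - 1) ⊔ (LinearMap.range (ρ y - 1)).map (ρ x) := by
    rintro _ ⟨v, rfl⟩
    have hsum : (ρ (x * y) - 1) v = (ρ x - 1) v + ρ x ((ρ y - 1) v) := by simp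
    rw [hsum]
    exact Submodule.add_mem_sup ⟨v, rfl⟩ ⟨_, ⟨v, rfl⟩, rfl⟩
  refine (Submodule.finrank_mono hle).trans
    ((Submodule.finrank_add_le_finrank_add_finrank _ _).trans ?_)
  exact Nat.add_le_add_left (Submodule.finrank_map_le _ _) _

lemma displacementRank_inv_le (x : Γ) : displacementRank ρ x⁻¹ ≤ displacementRank ρ x := by
  have hle : LinearMap.range (ρ x⁻¹ - 1) ≤ (LinearMap.range (ρ x - 1)).map (ρ x⁻¹) := by
    rintro _ ⟨v, rfl⟩
    refine ⟨(ρ x - 1) (-v), ⟨_, rfl⟩, ?_⟩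
    simp only [LinearMap.sub_apply, map_neg, map_sub, Module.End.one_apply,
      Representation.inv_self_apply]
    abel
  exact (Submodule.finrank_mono hle).trans (Submodule.finrank_map_le _ _)

lemma displacementRank_conj_le (x y : Γ) :
    displacementRank ρ (y * x * y⁻¹) ≤ displacementRank ρ x := by
  have hle : LinearMap.range (ρ (y * x * y⁻¹) - 1) ≤ (LinearMap.range (ρ x - 1)).map (ρ y) := by
    rintro _ ⟨v, rfl⟩
    refine ⟨(ρ x - 1) (ρ y⁻¹ v), ⟨_, rfl⟩, ?_⟩
    simp
  exact (Submodule.finrank_mono hle).trans (Submodule.finrank_map_le _ _)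

lemma displacementRank_commutatorElement_le (x y : Γ) :
    displacementRank ρ ⁅x, y⁆ ≤ 2 * displacementRank ρ y := by
  calc displacementRank ρ ⁅x, y⁆
      ≤ displacementRank ρ (x * y * x⁻¹) + displacementRank ρ y⁻¹ := displacementRank_mul_le ρ _ _
    _ ≤ displacementRank ρ y + displacementRank ρ y :=
        add_le_add (displacementRank_conj_le ρ y x) (displacementRank_inv_le ρ y)
    _ = 2 * displacementRank ρ y := (two_mul _).symm

end DisplacementRank

/-! ### Groups generated by elements of small displacement rank -/

section RelCenter

variable {Γ : Type*} [Group Γ]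

/-- The centre of the subgroup `D`, as a subgroup of the ambient group. -/
def relCenter (D : Subgroup Γ) : Subgroup Γ := D ⊓ centralizer D

instance relCenter_normal (D : Subgroup Γ) [D.Normal] : (relCenter D).Normal := by
  unfold relCenter; infer_instance

instance relCenter_isMulCommutative (D : Subgroup Γ) : IsMulCommutative (relCenter D) :=
  commutator_self_eq_bot_iff.1 <| commutator_eq_bot_iff_le_centralizer.2 <|
    inf_le_right.trans (centralizer_le inf_le_left)

instance isNilpotent_of_isMulCommutative (C : Subgroup Γ) [IsMulCommutative C] :
    Group.IsNilpotent C :=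
  (Subgroup.isNilpotent_iff_lowerCentralSeries C).2 ⟨1, commutator_self_eq_bot_iff.2 ‹_›⟩

lemma exists_isClassTwoOver_relCenter [Group.IsSolvable Γ] {D : Subgroup Γ} [D.Normal]
    (h : ¬ D ≤ relCenter D) :
    ∃ E, E.Normal ∧ E ≤ D ∧ ¬ E ≤ relCenter D ∧ IsClassTwoOver (relCenter D) E := by
  obtain ⟨E, hE, -, hnot, hED, hEE⟩ := exists_normal_commutator_le h
  have hED : E ≤ D := hED.trans (sup_le inf_le_left le_rfl)
  exact ⟨E, hE, hED, hnot, inf_le_right.trans (centralizer_le hED), hEE⟩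

/-- If `D` were not abelian, a normal subgroup `E` of class two just above the centre of `D` would
be centralized by a term of the lower central series of `P` containing `D`. -/
lemma commutator_self_eq_bot_of_forall_isClassTwoOver [Group.IsSolvable Γ] {P D : Subgroup Γ}
    [P.Normal] [D.Normal] (hP : ∀ C : Subgroup Γ, C.Normal → IsMulCommutative C → P ≤ centralizer C)
    (h : ∀ E : Subgroup Γ, E.Normal → E ≤ D → IsClassTwoOver (relCenter D) E →
      ∃ i, D ≤ P.lowerCentralSeries i ∧ iteratedCommutator E P i ≤ relCenter E) :
    ⁅D, D⁆ = ⊥ := by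
  by_contra hD
  obtain ⟨E, hE, hED, hnot, hclass⟩ := exists_isClassTwoOver_relCenter (D := D) fun hle ↦
    hD (commutator_eq_bot_iff_le_centralizer.2 (hle.trans inf_le_right))
  obtain ⟨i, hDi, hi⟩ := h E hE hED hclass
  refine hnot (le_inf hED (commutator_eq_bot_iff_le_centralizer.1 (le_bot_iff.1 ?_)))
  calc ⁅E, D⁆ ≤ ⁅E, P.lowerCentralSeries i⁆ := commutator_mono le_rfl hDi
    _ ≤ iteratedCommutator E P (i + 1) := commutator_lowerCentralSeries_le E P i
    _ ≤ ⁅relCenter E, P⁆ := commutator_mono hi le_rfl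
    _ ≤ ⊥ := by
      rw [commutator_comm,
        commutator_eq_bot_iff_le_centralizer.2 (hP _ inferInstance inferInstance)]

lemma IsClassTwoOver.iteratedCommutator_le_relCenter {A E P : Subgroup Γ} [E.Normal] [P.Normal]
    (h : IsClassTwoOver A E) {L M : Type*} [Field L] [AddCommGroup M] [Module L M]
    {ρ : Γ →* Module.End L M} (hρ : Function.Injective ρ) (D : ProjectionFamily (weightSpace ρ A))
    {i : ℕ}
    (hi : ∀ χ ∈ D.support, iteratedCommutator E P i ≤ h.weightRadical ρ χ) :
    iteratedCommutator E P i ≤ relCenter E := fun _ he ↦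
  h.mem_inf_centralizer_of_forall_mem_weightRadical hρ D
    (iteratedCommutator_antitone E P i.zero_le he) fun χ hχ ↦ hi χ hχ he

end RelCenter

section SmallDisplacementRank

variable {Γ : Type*} [Group Γ] {L : Type*} [Field L] {M : Type*} [AddCommGroup M] [Module L M]
  {ρ : Γ →* Module.End L M} {A E : Subgroup Γ}

lemma weightSpace_le_range_sub_one {χ : Weight A L} {a : A} (ha : χ a ≠ 1) :
    weightSpace ρ A χ ≤ LinearMap.range (ρ a - 1) := by
  refine fun v hv ↦ ⟨(χ a - 1)⁻¹ • v, ?_⟩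
  have hsub : (ρ a - 1) v = (χ a - 1) • v := by
    rw [LinearMap.sub_apply, mem_weightSpace.1 hv, Module.End.one_apply, sub_smul, one_smul]
  rw [map_smul, hsub, inv_smul_smul₀ (sub_ne_zero.2 ha)]

variable [FiniteDimensional L M] [A.Normal] [E.Normal]

lemma finrank_weightSpace_le_of_smul_ne (D : ProjectionFamily (weightSpace ρ A)) {χ : Weight A L}
    {s : Γ} (hs : s • χ ≠ χ) : finrank L (weightSpace ρ A χ) ≤ displacementRank ρ s :=
  D.finrank_le_finrank_range (g := ρ s) (τ := MulAction.toPermHom Γ (Weight A L) s)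
    (fun _ _ hv ↦ map_mem_weightSpace s hv) hs

/-- If `s` moves the commutator weight of `e`, then a commutator of an element of `E` with `⁅s, e⁆`
acts as a nontrivial scalar on the weight space. -/
lemma IsClassTwoOver.finrank_weightSpace_le_of_smul_commutatorWeight_ne (h : IsClassTwoOver A E)
    {χ : Weight A L} (hχ : weightSpace ρ A χ ≠ ⊥) {s : Γ} (hs : s • χ = χ) {e : E}
    (he : s • h.commutatorWeight χ e ≠ h.commutatorWeight χ e) :
    finrank L (weightSpace ρ A χ) ≤ 4 * displacementRank ρ s := by
  rw [h.smul_commutatorWeight hs, Ne, h.commutatorWeight_eq_iff (ρ := ρ) hχ, conjPerm_apply,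
    ← commutatorElement_def] at he
  have hmem : ⁅s, (e : Γ)⁆ ∈ E := commutator_le_right ⊤ E (commutator_mem_commutator trivial e.2)
  rw [h.mem_weightRadical_iff hχ ⟨_, hmem⟩, not_forall] at he
  obtain ⟨f, hf⟩ := he
  let a : A := ⟨⁅(f : Γ)⁻¹, ⁅s, (e : Γ)⁆⁆, h.commutatorElement_mem (E.inv_mem f.2) hmem⟩
  have ha : χ a ≠ 1 := hf
  have hcomm := displacementRank_commutatorElement_le ρ (f : Γ)⁻¹ ⁅s, (e : Γ)⁆
  have hswap : displacementRank ρ ⁅s, (e : Γ)⁆ ≤ 2 * displacementRank ρ s := by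
    rw [← commutatorElement_inv (e : Γ) s]
    exact (displacementRank_inv_le ρ _).trans (displacementRank_commutatorElement_le ρ _ s)
  calc finrank L (weightSpace ρ A χ) ≤ displacementRank ρ ⁅(f : Γ)⁻¹, ⁅s, (e : Γ)⁆⁆ :=
        Submodule.finrank_mono (weightSpace_le_range_sub_one ha)
    _ ≤ 4 * displacementRank ρ s := by linarith

variable [Finite Γ] [Group.IsSolvable Γ] [IsAlgClosed L] {S : Set Γ} {c : ℕ}

lemma IsClassTwoOver.smul_commutatorWeight_eq_of_displacementRank_le (h : IsClassTwoOver A E)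
    (D : ProjectionFamily (weightSpace ρ A)) (hE : (Nat.card E : L) ≠ 0) (hS : closure S = ⊤)
    (hc : ∀ s ∈ S, displacementRank ρ s ≤ c) {χ : Weight A L} (hχ : weightSpace ρ A χ ≠ ⊥)
    {K : Subgroup Γ} (hK : ∀ x ∈ K, x • χ = χ) :
    ∀ x ∈ iteratedDerived K ((4 * c) ^ 2).factorial, ∀ e,
      x • h.commutatorWeight χ e = h.commutatorWeight χ e := by
  by_cases hall : ∀ s ∈ S, s • χ = χ ∧ ∀ e, s • h.commutatorWeight χ e = h.commutatorWeight χ e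
  · intro x _ e
    have hle : closure S ≤ MulAction.stabilizer Γ (h.commutatorWeight χ e) :=
      (closure_le _).2 fun s hs ↦ (hall s hs).2 e
    exact hle (hS ▸ mem_top x)
  · refine h.smul_commutatorWeight_eq_of_mem_iteratedDerived hχ hE ?_ hK
    push Not at hall
    obtain ⟨s, hs, hmoved⟩ := hall
    have hsc := hc s hs
    by_cases hsχ : s • χ = χ
    · obtain ⟨e, he⟩ := hmoved hsχ
      exact (h.finrank_weightSpace_le_of_smul_commutatorWeight_ne hχ hsχ he).trans (by linarith)
    · exact (finrank_weightSpace_le_of_smul_ne D hsχ).trans (by linarith)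

/-- A depth in the derived series at which a soluble linear group generated by elements of order
dividing `q` and displacement rank at most `c` centralizes its abelian normal subgroups. -/
def abelianDepth (q c : ℕ) : ℕ := (2 * (q * c) + 1).factorial

/-- A bound on the derived length of a soluble linear group generated by elements of order dividing
`q` and displacement rank at most `c`. -/
def boundedRankDepth (q c : ℕ) : ℕ := abelianDepth q c + ((4 * c) ^ 2).factorial + 2

variable {l : ℕ} [Fact l.Prime] [CharP L l] {q : ℕ}

lemma iteratedDerived_le_centralizer_of_displacementRank_le (hρ : Function.Injective ρ)
    (hΓ : HasTrivialPCore l Γ) (hS : closure S = ⊤) (hq : 0 < q) (hSq : ∀ s ∈ S, s ^ q = 1)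
    (hc : ∀ s ∈ S, displacementRank ρ s ≤ c) (C : Subgroup Γ) [C.Normal] [IsMulCommutative C] :
    iteratedDerived ⊤ (abelianDepth q c) ≤ centralizer (C : Set Γ) := by
  obtain ⟨D⟩ := nonempty_projectionFamily_weightSpace (ρ := ρ) (hΓ.card_ne_zero L C)
  rw [← hS]
  refine fun x hx ↦ mem_centralizer_iff.2 fun a ha ↦ Eq.symm ?_
  refine iteratedDerived_commute_of_card_moved_weights_le hρ D (fun s hs X hX ↦ ?_) x hx a ha
  refine (D.card_le_mul_finrank_range (g := ρ s) (τ := MulAction.toPermHom Γ (Weight C L) s)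
    (fun _ _ hv ↦ map_mem_weightSpace s hv) hq ?_ X hX).trans (Nat.mul_le_mul_left _ (hc s hs))
  rw [← map_pow, hSq s hs, map_one]

theorem iteratedDerived_eq_bot_of_displacementRank_le (hρ : Function.Injective ρ)
    (hΓ : HasTrivialPCore l Γ) (hS : closure S = ⊤) (hq : 0 < q) (hSq : ∀ s ∈ S, s ^ q = 1)
    (hc : ∀ s ∈ S, displacementRank ρ s ≤ c) :
    iteratedDerived (⊤ : Subgroup Γ) (boundedRankDepth q c) = ⊥ := by
  set K := iteratedDerived (⊤ : Subgroup Γ) (abelianDepth q c)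
  set P := iteratedDerived K ((4 * c) ^ 2).factorial
  have hPK : P ≤ K := iteratedDerived_le K _
  have hcent (C : Subgroup Γ) (_ : C.Normal) (_ : IsMulCommutative C) :
      K ≤ centralizer (C : Set Γ) :=
    iteratedDerived_le_centralizer_of_displacementRank_le hρ hΓ hS hq hSq hc C
  have hdepth : iteratedDerived ⊤ (boundedRankDepth q c) = ⁅⁅P, P⁆, ⁅P, P⁆⁆ := by
    rw [boundedRankDepth, iteratedDerived_succ, iteratedDerived_succ, iteratedDerived_add]
  rw [hdepth]
  refine commutator_self_eq_bot_of_forall_isClassTwoOver (P := P)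
    (fun C hC hC' ↦ hPK.trans (hcent C hC hC')) fun E _ _ h ↦ ⟨1, le_rfl, ?_⟩
  have := h.isNilpotent
  obtain ⟨D⟩ := nonempty_projectionFamily_weightSpace (ρ := ρ)
    (hΓ.card_ne_zero L (relCenter ⁅P, P⁆))
  refine h.iteratedCommutator_le_relCenter hρ D fun χ hχ ↦ ?_
  have hχ := (D.mem_support χ).1 hχ
  have hfix (x : Γ) (hx : x ∈ K) : x • χ = χ := smul_weight_eq_of_commute (fun a ha ↦
    (mem_centralizer_iff.1 (hcent _ inferInstance inferInstance hx) a ha).symm) χ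
  exact h.commutator_le_weightRadical hχ (fun x hx ↦ hfix x (hPK hx))
    (h.smul_commutatorWeight_eq_of_displacementRank_le D (hΓ.card_ne_zero L E) hS hc hχ hfix)

end SmallDisplacementRank

/-! ### The conjugation representation of an elementary abelian normal subgroup -/

section BaseChange

variable {K : Type*} [Field K] (L : Type*) [Field L] [Algebra K L] {V : Type*} [AddCommGroup V]
  [Module K V] [FiniteDimensional K V] (f : Module.End K V)

lemma finrank_range_baseChange :
    finrank L (LinearMap.range (f.baseChange L)) = finrank K (LinearMap.range f) := by
  have hsurj : Function.Surjective (f.rangeRestrict.baseChange L) :=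
    LinearMap.lTensor_surjective L f.surjective_rangeRestrict
  have hinj : Function.Injective ((LinearMap.range f).subtype.baseChange L) :=
    Module.Flat.lTensor_preserves_injective_linearMap _ (Submodule.injective_subtype _)
  have hfac : f.baseChange L =
      (LinearMap.range f).subtype.baseChange L ∘ₗ f.rangeRestrict.baseChange L := by
    rw [← LinearMap.baseChange_comp]; rfl
  rw [hfac, LinearMap.range_comp, LinearMap.range_eq_top.2 hsurj, Submodule.map_top,
    LinearMap.finrank_range_of_inj hinj, Module.finrank_baseChange]

lemma finrank_ker_baseChange :
    finrank L (LinearMap.ker (f.baseChange L)) = finrank K (LinearMap.ker f) := by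
  have h₁ := LinearMap.finrank_range_add_finrank_ker f
  have h₂ := LinearMap.finrank_range_add_finrank_ker (f.baseChange L)
  rw [finrank_range_baseChange, Module.finrank_baseChange] at h₂
  omega

end BaseChange

section ConjRep

open scoped IsMulCommutative

variable {Γ : Type*} [Group Γ] (W : Subgroup Γ) [W.Normal] [IsMulCommutative W] (l : ℕ)
  [Module (ZMod l) (Additive W)]

/-- The representation over `ZMod l` afforded by the conjugation action of a group on an
elementary abelian normal subgroup `W` of exponent `l`, written additively. -/
def conjRep : Γ →* Module.End (ZMod l) (Additive W) where
  toFun x := ((MulAut.conjNormal x : MulAut W) : W →* W).toAdditive.toZModLinearMap l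
  map_one' := by ext; simp
  map_mul' x y := by ext; simp

lemma conjRep_apply_eq_iff (x : Γ) (w : W) :
    conjRep W l x (Additive.ofMul w) = Additive.ofMul w ↔ x * w = w * x := by
  change Additive.ofMul (MulAut.conjNormal x w) = Additive.ofMul w ↔ _
  rw [EmbeddingLike.apply_eq_iff_eq, Subtype.ext_iff, MulAut.conjNormal_apply,
    mul_inv_eq_iff_eq_mul]

lemma conjRep_eq_one_iff {x : Γ} : conjRep W l x = 1 ↔ x ∈ centralizer (W : Set Γ) := by
  refine ⟨fun h w hw ↦ ((conjRep_apply_eq_iff W l x ⟨w, hw⟩).1 (by rw [h]; rfl)).symm,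
    fun h ↦ LinearMap.ext fun v ↦ (conjRep_apply_eq_iff W l x v.toMul).2 (h _ v.toMul.2).symm⟩

variable [Fact l.Prime]

lemma pow_finrank_ker_conjRep_sub_one [Finite W] (x : Γ) :
    l ^ finrank (ZMod l) (LinearMap.ker (conjRep W l x - 1)) =
      Nat.card ↥(centralizer {x} ⊓ W) := by
  have hmem (w : W) : Additive.ofMul w ∈ LinearMap.ker (conjRep W l x - 1) ↔
      (w : Γ) ∈ centralizer {x} ⊓ W := by
    rw [LinearMap.mem_ker, LinearMap.sub_apply, sub_eq_zero, Module.End.one_apply,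
      conjRep_apply_eq_iff, mem_inf, mem_centralizer_singleton_iff, eq_comm, and_iff_left w.2]
  rw [← Nat.card_congr ((Equiv.subtypeEquiv Additive.ofMul fun w ↦ (hmem w).symm).symm.trans
      (Equiv.subtypeSubtypeEquivSubtype (α := Γ) (p := (· ∈ W))
        (q := (· ∈ centralizer {x} ⊓ W)) fun h ↦ h.2)),
    Module.natCard_eq_pow_finrank (K := ZMod l), Nat.card_zmod]

variable (L : Type*) [Field L] [Algebra (ZMod l) L]

/-- The faithful representation over `L` of the group induced by conjugation on the elementary
abelian normal subgroup `W`, obtained from `conjRep` by extension of scalars. -/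
noncomputable def faithfulConjRep :
    Γ ⧸ centralizer (W : Set Γ) →* Module.End L (L ⊗[ZMod l] Additive W) :=
  QuotientGroup.lift _
    ((Module.End.baseChangeHom (ZMod l) L (Additive W) : _ →* _).comp (conjRep W l))
    fun x hx ↦ by
      rw [MonoidHom.mem_ker, MonoidHom.comp_apply, (conjRep_eq_one_iff W l).2 hx, map_one]

lemma faithfulConjRep_sub_one (x : Γ) :
    faithfulConjRep W l L x - 1 = (conjRep W l x - 1).baseChange L := by
  have h : (conjRep W l x - 1).baseChange L =
      Module.End.baseChangeHom (ZMod l) L (Additive W) (conjRep W l x - 1) := rfl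
  rw [h, map_sub, map_one]
  rfl

variable [Finite W]

lemma faithfulConjRep_injective : Function.Injective (faithfulConjRep W l L) := by
  refine (injective_iff_map_eq_one _).2 fun y hy ↦ ?_
  obtain ⟨x, rfl⟩ := QuotientGroup.mk_surjective y
  have hrange := finrank_range_baseChange L (conjRep W l x - 1)
  rw [← faithfulConjRep_sub_one, sub_eq_zero.2 hy, LinearMap.range_zero, finrank_bot, eq_comm,
    Submodule.finrank_eq_zero, LinearMap.range_eq_bot, sub_eq_zero] at hrange
  exact (QuotientGroup.eq_one_iff x).2 ((conjRep_eq_one_iff W l).1 hrange)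

lemma pow_finrank_ker_faithfulConjRep_sub_one (x : Γ) :
    l ^ finrank L (LinearMap.ker (faithfulConjRep W l L x - 1)) =
      Nat.card ↥(centralizer {x} ⊓ W) := by
  rw [faithfulConjRep_sub_one, finrank_ker_baseChange, pow_finrank_ker_conjRep_sub_one]

lemma pow_displacementRank_faithfulConjRep (x : Γ) :
    l ^ displacementRank (faithfulConjRep W l L) x = (centralizer {x}).relIndex W := by
  have hcard : (centralizer {x}).relIndex W * Nat.card ↥(centralizer {x} ⊓ W) = Nat.card W := by
    rw [← inf_relIndex_right, ← relIndex_bot_left, ← relIndex_bot_left, mul_comm]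
    exact relIndex_mul_relIndex _ _ _ bot_le inf_le_right
  have hdim : l ^ finrank L (L ⊗[ZMod l] Additive W) = Nat.card W := by
    have h := Module.natCard_eq_pow_finrank (K := ZMod l) (V := Additive W)
    rw [Nat.card_zmod] at h
    rw [Module.finrank_baseChange, ← h]
    rfl
  rw [← hdim, ← pow_finrank_ker_faithfulConjRep_sub_one W l L,
    ← LinearMap.finrank_range_add_finrank_ker (faithfulConjRep W l L x - 1), pow_add] at hcard
  exact (Nat.eq_of_mul_eq_mul_right (Nat.pow_pos (Fact.out (p := l.Prime)).pos) hcard).symm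

end ConjRep

/-! ### Groups acting on chief factors -/

section MinimalNormal

variable {Γ : Type*} [Group Γ] {W : Subgroup Γ}

lemma IsChiefFactor.eq_of_le {F : Subgroup Γ} (hW : IsChiefFactor ⊥ W) (hF : F.Normal)
    (hle : F ≤ W) (hne : F ≠ ⊥) : F = W :=
  (hW.eq_or_eq F hF bot_le hle).resolve_left hne

lemma IsChiefFactor.commutator_le [Group.IsSolvable Γ] {M₁ M₀ : Subgroup Γ}
    (h : IsChiefFactor M₁ M₀) : ⁅M₀, M₀⁆ ≤ M₁ := by
  have := h.normal_bot
  have := h.normal_top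
  obtain ⟨E, hE, hle, hnot, hEM, hEE⟩ := exists_normal_commutator_le h.lt.not_ge
  rcases h.eq_or_eq E hE hle (hEM.trans (sup_le h.lt.le le_rfl)) with rfl | rfl
  · exact (hnot le_rfl).elim
  · exact hEE

lemma IsChiefFactor.isMulCommutative [Group.IsSolvable Γ] (hW : IsChiefFactor ⊥ W) :
    IsMulCommutative W :=
  commutator_self_eq_bot_iff.1 (le_bot_iff.1 hW.commutator_le)

section Module

open scoped IsMulCommutative

lemma IsChiefFactor.exists_nonempty_module [Finite Γ] [IsMulCommutative W]
    (hW : IsChiefFactor ⊥ W) :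
    ∃ l : ℕ, l.Prime ∧ Nonempty (Module (ZMod l) (Additive W)) := by
  have := hW.normal_top
  have hcard : Nat.card W ≠ 1 := fun h ↦ hW.lt.ne' (card_eq_one.1 h)
  obtain ⟨l, hl, hdvd⟩ := Nat.exists_prime_and_dvd hcard
  have : Fact l.Prime := ⟨hl⟩
  obtain ⟨w, hw⟩ := exists_prime_orderOf_dvd_card' l hdvd
  let K : Subgroup W := (powMonoidHom l : W →* W).ker
  have hK : K.Characteristic := characteristic_iff_le_comap.2 fun f x hx ↦ by
    rw [mem_comap, MonoidHom.mem_ker, powMonoidHom_apply] at *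
    simpa using congrArg f hx
  have hwK : w ∈ K := by
    rw [MonoidHom.mem_ker, powMonoidHom_apply, ← hw, pow_orderOf_eq_one]
  have hw1 : w ≠ 1 := fun h ↦ hl.one_lt.ne (by rw [← hw, h, orderOf_one])
  have hKW : K.map W.subtype = W := hW.eq_of_le inferInstance (map_subtype_le K) fun h ↦
    hw1 (Subtype.ext ((Subgroup.eq_bot_iff_forall _).1 h w (mem_map_of_mem W.subtype hwK)))
  refine ⟨l, hl, ⟨AddCommGroup.zmodModule fun v ↦ ?_⟩⟩
  have hv : (v.toMul : Γ) ∈ K.map W.subtype := by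
    rw [hKW]
    exact v.toMul.2
  obtain ⟨w, hwK, hwv⟩ := hv
  obtain rfl : w = v.toMul := Subtype.ext hwv
  exact hwK

variable {l : ℕ} [Fact l.Prime]

lemma dvd_card_of_module [IsMulCommutative W] [Module (ZMod l) (Additive W)] [Finite W]
    (hW : W ≠ ⊥) : l ∣ Nat.card W := by
  obtain ⟨w, hw⟩ := ne_bot_iff_exists_ne_one.1 hW
  have hpow : w ^ l = 1 := ZModModule.char_nsmul_eq_zero l (Additive.ofMul w)
  exact orderOf_eq_prime hpow hw ▸ orderOf_dvd_natCard w

lemma IsChiefFactor.hasTrivialPCore [Finite Γ] [W.Normal] [IsMulCommutative W]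
    [Module (ZMod l) (Additive W)] (hW : IsChiefFactor ⊥ W) :
    HasTrivialPCore l (Γ ⧸ centralizer (W : Set Γ)) := by
  intro P hP hPl
  let θ : Γ ⧸ centralizer (W : Set Γ) →* MulAut W := QuotientGroup.lift _ MulAut.conjNormal
    fun x hx ↦ MulEquiv.ext fun w ↦ Subtype.ext <| by
      rw [MulAut.conjNormal_apply, ← hx w w.2, mul_inv_cancel_right, MulAut.one_apply]
  let _ : MulAction P W := MulAction.compHom W (θ.comp P.subtype)
  obtain ⟨w, hw, hw1⟩ := hPl.exists_fixed_point_of_prime_dvd_card_of_fixed_point W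
    (dvd_card_of_module hW.lt.ne') (a := 1) fun x ↦ map_one (θ x)
  let P' := P.comap (QuotientGroup.mk' (centralizer (W : Set Γ)))
  have hwP' : (w : Γ) ∈ W ⊓ centralizer (P' : Set Γ) :=
    ⟨w.2, fun x hx ↦ mul_inv_eq_iff_eq_mul.1 (congrArg Subtype.val (hw ⟨x, hx⟩))⟩
  have hP'W : W ⊓ centralizer (P' : Set Γ) = W := hW.eq_of_le inferInstance inf_le_left
    fun h ↦ hw1 (Subtype.ext ((Subgroup.eq_bot_iff_forall _).1 h w hwP').symm)
  refine (Subgroup.eq_bot_iff_forall _).2 fun y hy ↦ ?_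
  obtain ⟨x, rfl⟩ := QuotientGroup.mk_surjective y
  exact (QuotientGroup.eq_one_iff x).2 (le_centralizer_iff.1 (inf_eq_left.1 hP'W) hy)

end Module

theorem IsChiefFactor.iteratedDerived_le_centralizer [Finite Γ] [Group.IsSolvable Γ]
    (hW : IsChiefFactor ⊥ W) {S : Set Γ} (hS : closure S = ⊤) {q : ℕ} (hq : 0 < q)
    (hSq : ∀ s ∈ S, s ^ q = 1) {c : ℕ} (hc : ∀ s ∈ S, (centralizer {s}).relIndex W ≤ c) :
    iteratedDerived (⊤ : Subgroup Γ) (boundedRankDepth q c) ≤ centralizer W := by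
  have := hW.normal_top
  have := hW.isMulCommutative
  obtain ⟨l, hl, ⟨hmod⟩⟩ := hW.exists_nonempty_module
  have : Fact l.Prime := ⟨hl⟩
  let L := AlgebraicClosure (ZMod l)
  have : CharP L l := charP_of_injective_algebraMap (algebraMap (ZMod l) L).injective l
  let π := QuotientGroup.mk' (centralizer (W : Set Γ))
  have hπ : Function.Surjective π := QuotientGroup.mk'_surjective _
  have hπS : closure (π '' S) = ⊤ := by
    rw [← MonoidHom.map_closure, hS, map_top_of_surjective π hπ]
  have hbot : iteratedDerived (⊤ : Subgroup (Γ ⧸ centralizer (W : Set Γ)))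
      (boundedRankDepth q c) = ⊥ := by
    refine iteratedDerived_eq_bot_of_displacementRank_le (faithfulConjRep_injective W l L)
      (hW.hasTrivialPCore (l := l)) hπS hq ?_ ?_
    · rintro _ ⟨s, hs, rfl⟩
      rw [← map_pow, hSq s hs, map_one]
    · rintro _ ⟨s, hs, rfl⟩
      exact ((Nat.lt_pow_self hl.one_lt).le.trans
        (pow_displacementRank_faithfulConjRep W l L s).le).trans (hc s hs)
  rw [← map_top_of_surjective π hπ, ← map_iteratedDerived, Subgroup.map_eq_bot_iff,
    QuotientGroup.ker_mk'] at hbot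
  exact hbot

end MinimalNormal

section ChiefFactor

variable {Γ : Type*} [Group Γ]

lemma commutator_le_iff_map_mk_le_centralizer {N A B : Subgroup Γ} [N.Normal] :
    ⁅A, B⁆ ≤ N ↔ B.map (QuotientGroup.mk' N) ≤ centralizer (A.map (QuotientGroup.mk' N)) := by
  rw [← commutator_eq_bot_iff_le_centralizer, ← map_commutator, Subgroup.map_eq_bot_iff,
    QuotientGroup.ker_mk', commutator_comm]

lemma relIndex_eq_card_map_mk (N A : Subgroup Γ) [N.Normal] :
    N.relIndex A = Nat.card (A.map (QuotientGroup.mk' N)) := by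
  rw [← relIndex_ker, QuotientGroup.ker_mk']

lemma IsChiefFactor.map_mk {M₁ M₀ : Subgroup Γ} [M₁.Normal] (h : IsChiefFactor M₁ M₀) :
    IsChiefFactor ⊥ (M₀.map (QuotientGroup.mk' M₁)) := by
  have hsurj := QuotientGroup.mk'_surjective M₁
  refine ⟨inferInstance, h.normal_top.map _ hsurj, bot_lt_iff_ne_bot.2 fun hbot ↦ ?_,
    fun F hF _ hle ↦ ?_⟩
  · rw [Subgroup.map_eq_bot_iff, QuotientGroup.ker_mk'] at hbot
    exact h.lt.not_ge hbot
  · have hFle := comap_mono (f := QuotientGroup.mk' M₁) hle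
    rw [comap_map_eq, QuotientGroup.ker_mk', sup_eq_left.2 h.lt.le] at hFle
    have hleF : M₁ ≤ F.comap (QuotientGroup.mk' M₁) := QuotientGroup.le_comap_mk' M₁ F
    rw [← map_comap_eq_self_of_surjective hsurj F]
    refine (h.eq_or_eq _ inferInstance hleF hFle).imp (fun hF₁ ↦ ?_) (fun hF₀ ↦ by rw [hF₀])
    rw [hF₁, Subgroup.map_eq_bot_iff, QuotientGroup.ker_mk']

/-- The subgroup of all elements commuting with `x` modulo the normal subgroup `N`. -/
def centralizerMod (N : Subgroup Γ) [N.Normal] (x : Γ) : Subgroup Γ :=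
  (centralizer {(x : Γ ⧸ N)}).comap (QuotientGroup.mk' N)

lemma mem_centralizerMod {N : Subgroup Γ} [N.Normal] {x y : Γ} :
    y ∈ centralizerMod N x ↔ (y * x)⁻¹ * (x * y) ∈ N := by
  rw [centralizerMod, mem_comap, mem_centralizer_singleton_iff]
  exact QuotientGroup.eq

lemma centralizerMod_mono {N N' : Subgroup Γ} [N.Normal] [N'.Normal] (h : N ≤ N') (x : Γ) :
    centralizerMod N x ≤ centralizerMod N' x :=
  fun _ hy ↦ mem_centralizerMod.2 (h (mem_centralizerMod.1 hy))

lemma comap_centralizerMod {Γ' : Type*} [Group Γ'] (f : Γ →* Γ') (N : Subgroup Γ') [N.Normal]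
    (x : Γ) : (centralizerMod N (f x)).comap f = centralizerMod (N.comap f) x := by
  ext y
  simp only [mem_comap, mem_centralizerMod, map_mul, map_inv]

lemma relIndex_centralizerMod_inf (N A : Subgroup Γ) [N.Normal] (x : Γ) :
    N.relIndex (centralizerMod N x ⊓ A) =
      Nat.card ↥(centralizer {(x : Γ ⧸ N)} ⊓ A.map (QuotientGroup.mk' N)) := by
  rw [relIndex_eq_card_map_mk]
  congr 2
  refine le_antisymm ((map_inf_le _ _ _).trans (inf_le_inf_right _ (map_comap_le _ _))) ?_
  rintro _ ⟨hx, a, ha, rfl⟩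
  exact mem_map_of_mem _ ⟨hx, ha⟩

open scoped IsMulCommutative in
lemma IsChiefFactor.exists_prime_pow_mem [Finite Γ] [Group.IsSolvable Γ] {M₁ M₀ : Subgroup Γ}
    (h : IsChiefFactor M₁ M₀) :
    ∃ r : ℕ, r.Prime ∧ r ∣ M₁.relIndex M₀ ∧ ∀ x ∈ M₀, x ^ r ∈ M₁ := by
  have := h.normal_bot
  have := h.map_mk.isMulCommutative
  obtain ⟨r, hr, ⟨hmod⟩⟩ := h.map_mk.exists_nonempty_module
  have : Fact r.Prime := ⟨hr⟩
  refine ⟨r, hr, ?_, fun x hx ↦ (QuotientGroup.eq_one_iff _).1 ?_⟩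
  · rw [relIndex_eq_card_map_mk]
    exact dvd_card_of_module h.map_mk.lt.ne'
  · have hpow : (⟨x, mem_map_of_mem _ hx⟩ : M₀.map (QuotientGroup.mk' M₁)) ^ r = 1 :=
      ZModModule.char_nsmul_eq_zero r (Additive.ofMul _)
    exact congrArg Subtype.val hpow

lemma iteratedDerived_le_centralizer_of_card_le [Group.IsSolvable Γ] {W : Subgroup Γ} [Finite W]
    [W.Normal] {m : ℕ} (hm : Nat.card W ≤ m) :
    iteratedDerived (⊤ : Subgroup Γ) m.factorial ≤ centralizer W := by
  let _ : MulAction Γ W := MulAction.compHom W (MulAut.conjNormal : Γ →* MulAut W)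
  intro x hx w hw
  have hfix := iteratedDerived_factorial_smul_eq (T := (Set.univ : Set W)) Set.finite_univ
    (by rwa [Set.ncard_univ]) (fun _ _ _ _ ↦ Set.mem_univ _) x hx ⟨w, hw⟩ (Set.mem_univ _)
  exact (mul_inv_eq_iff_eq_mul.1 (congrArg Subtype.val hfix)).symm

variable [Finite Γ] [Group.IsSolvable Γ]

lemma IsChiefFactor.commutator_iteratedDerived_le {M₁ M₀ : Subgroup Γ} [M₁.Normal]
    (h : IsChiefFactor M₁ M₀) {S : Set Γ} (hS : closure S = ⊤) {q : ℕ} (hq : 0 < q)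
    (hSq : ∀ s ∈ S, s ^ q = 1) {c : ℕ} (hc : ∀ s ∈ S, (centralizerMod M₁ s).relIndex M₀ ≤ c) :
    ⁅M₀, iteratedDerived (⊤ : Subgroup Γ) (boundedRankDepth q c)⁆ ≤ M₁ := by
  have hsurj := QuotientGroup.mk'_surjective M₁
  rw [commutator_le_iff_map_mk_le_centralizer, map_iteratedDerived,
    map_top_of_surjective _ hsurj]
  refine h.map_mk.iteratedDerived_le_centralizer (S := QuotientGroup.mk' M₁ '' S) ?_ hq ?_ ?_
  · rw [← MonoidHom.map_closure, hS, map_top_of_surjective _ hsurj]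
  · rintro _ ⟨s, hs, rfl⟩
    rw [← map_pow, hSq s hs, map_one]
  · rintro _ ⟨s, hs, rfl⟩
    exact (relIndex_comap _ _ _).symm.trans_le (hc s hs)

lemma exists_iteratedCommutator_iteratedDerived_le {B E : Subgroup Γ} [B.Normal] [E.Normal]
    (hBE : B ≤ E) {S : Set Γ} (hS : closure S = ⊤) {q : ℕ} (hq : 0 < q)
    (hSq : ∀ s ∈ S, s ^ q = 1) {c : ℕ} (hc : ∀ s ∈ S, (centralizerMod B s).relIndex E ≤ c) :
    ∃ i, iteratedCommutator E (iteratedDerived (⊤ : Subgroup Γ) (boundedRankDepth q c)) i ≤ B := by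
  refine exists_iteratedCommutator_le _ hBE fun M₁ M₀ h hB hE ↦ ?_
  have := h.normal_bot
  refine h.commutator_iteratedDerived_le hS hq hSq fun s hs ↦ ?_
  exact (relIndex_le_of_le_left (centralizerMod_mono hB s) index_ne_zero_of_finite).trans
    ((relIndex_le_of_le_right hE index_ne_zero_of_finite).trans (hc s hs))

lemma commutator_iteratedDerived_le_of_relIndex_le {N A : Subgroup Γ} [N.Normal]
    [A.Normal] {m : ℕ} (hm : N.relIndex A ≤ m) :
    ⁅A, iteratedDerived (⊤ : Subgroup Γ) m.factorial⁆ ≤ N := by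
  have hsurj := QuotientGroup.mk'_surjective N
  have := (inferInstance : A.Normal).map _ hsurj
  rw [commutator_le_iff_map_mk_le_centralizer, map_iteratedDerived,
    map_top_of_surjective _ hsurj]
  exact iteratedDerived_le_centralizer_of_card_le (relIndex_eq_card_map_mk N A ▸ hm)

end ChiefFactor

/-! ### Groups generated by powers of elements with few fixed points -/

section FewFixedPoints

variable {Γ : Type*} [Group Γ] {L : Type*} [Field L] {M : Type*} [AddCommGroup M] [Module L M]

/-- The element `s` is the `p ^ n`-th power of an element whose order divides `p ^ (n + 1)` and
whose fixed-point space has dimension at most `d`. -/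
def IsPowOfFewFixedPoints (ρ : Γ →* Module.End L M) (p n d : ℕ) (s : Γ) : Prop :=
  ∃ g : Γ, g ^ p ^ (n + 1) = 1 ∧ finrank L (LinearMap.ker (ρ g - 1)) ≤ d ∧ g ^ p ^ n = s

/-- A bound for the index, in a class-two subgroup over `A`, of the elements whose commutator
weight at a fixed weight of `A` is preserved by the `p ^ n`-th power of an element of order
dividing `q = p ^ (n + 1)` with at most `d`-dimensional fixed-point space. -/
def commutatorIndexBound (q d : ℕ) : ℕ := 16 * q ^ 2 * (d + 1) ^ 2

/-- For `N` generated by elements as in `IsPowOfFewFixedPoints`, with `q = p ^ (n + 1)`, a depth in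
the derived series of `N` at which the nilpotent residual becomes abelian. -/
def fixedPointDepth (p q d : ℕ) : ℕ :=
  abelianDepth q d + (d ^ 2).factorial + boundedRankDepth p (commutatorIndexBound q d)

variable {ρ : Γ →* Module.End L M} {p n d : ℕ}

lemma IsPowOfFewFixedPoints.pow_eq_one {s : Γ} (hs : IsPowOfFewFixedPoints ρ p n d s) :
    s ^ p = 1 := by
  obtain ⟨g, hg, -, rfl⟩ := hs
  rw [← pow_mul, ← pow_succ, hg]

variable [FiniteDimensional L M] {A E : Subgroup Γ} [A.Normal]

lemma finrank_weightSpace_le_or_exists_pow_smul_eq (D : ProjectionFamily (weightSpace ρ A))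
    (hp : p.Prime) {g : Γ} (hg : g ^ p ^ (n + 1) = 1) (χ : Weight A L) :
    (g ^ p ^ n • χ ≠ χ ∧ finrank L (weightSpace ρ A χ) ≤ finrank L (LinearMap.ker (ρ g - 1))) ∨
    ∃ j ≤ n, g ^ p ^ j • χ = χ ∧
      finrank L ↥(LinearMap.ker (ρ g ^ p ^ j - 1) ⊓ weightSpace ρ A χ) ≤
        finrank L (LinearMap.ker (ρ g - 1)) := by
  let τ := MulAction.toPermHom Γ (Weight A L)
  have hτ (k : ℕ) : (τ g ^ k) χ = g ^ k • χ := by rw [← map_pow]; rfl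
  have key := D.finrank_le_or_exists_pow_fixes (g := ρ g) (τ := τ g)
    (fun _ _ hv ↦ map_mem_weightSpace g hv) hp n.add_one_pos (by rw [← map_pow, hg, map_one])
    (by rw [← map_pow, hg, map_one]) χ
  simpa only [hτ, Nat.add_sub_cancel, Nat.lt_add_one_iff] using key

lemma IsPowOfFewFixedPoints.finrank_weightSpace_le (D : ProjectionFamily (weightSpace ρ A))
    (hp : p.Prime) {s : Γ} (hs : IsPowOfFewFixedPoints ρ p n d s) {χ : Weight A L}
    (hsχ : s • χ ≠ χ) : finrank L (weightSpace ρ A χ) ≤ d := by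
  obtain ⟨g, hg, hgd, rfl⟩ := hs
  rcases finrank_weightSpace_le_or_exists_pow_smul_eq D hp hg χ with ⟨-, h⟩ | ⟨j, hj, hjχ, -⟩
  · exact h.trans hgd
  · refine (hsχ ?_).elim
    obtain ⟨b, rfl⟩ := Nat.exists_eq_add_of_le hj
    have hmem : g ^ p ^ j ∈ MulAction.stabilizer Γ χ := hjχ
    rw [pow_add, pow_mul]
    exact pow_mem hmem (p ^ b)

variable [E.Normal] [Finite Γ] [IsAlgClosed L]

lemma IsClassTwoOver.card_le_mul_card_smul_commutatorWeight_eq (h : IsClassTwoOver A E)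
    (hE : (Nat.card E : L) ≠ 0) (D : ProjectionFamily (weightSpace ρ A)) {χ : Weight A L}
    (hχ : weightSpace ρ A χ ≠ ⊥) (hp : p.Prime) (hpL : (p : L) ≠ 0) {s : Γ}
    (hs : IsPowOfFewFixedPoints ρ p n d s) (hsχ : s • χ = χ) :
    Nat.card E ≤ commutatorIndexBound (p ^ (n + 1)) d *
      Nat.card {e : E // h.commutatorWeight χ (conjPerm E s e) = h.commutatorWeight χ e} := by
  obtain ⟨g, hg, hgd, rfl⟩ := hs
  obtain ⟨h', -⟩ | ⟨j, hj, hjχ, hfin⟩ := finrank_weightSpace_le_or_exists_pow_smul_eq D hp hg χ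
  · exact (h' hsχ).elim
  obtain ⟨b, rfl⟩ := Nat.exists_eq_add_of_le hj
  rw [← map_pow] at hfin
  set g₁ := g ^ p ^ j
  have hg₁ : g₁ ^ p ^ (b + 1) = 1 := by rw [← pow_mul, ← pow_add, ← add_assoc, hg]
  have hρg₁ : ρ g₁ ^ p ^ (b + 1) = 1 := by rw [← map_pow, hg₁, map_one]
  have hstable := apply_mem_weightSpace_of_smul_eq (ρ := ρ) hjχ
  have : Nontrivial (weightSpace ρ A χ) := Submodule.nontrivial_iff_ne_bot.2 hχ
  have key := (h.isConjPairing χ (h.map_mem_weightSpace (ρ := ρ) χ)).card_le_mul_card_fixed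
    (σ := MulAut.conjNormal g₁) (g := restrictUnit hρg₁ (pow_pos hp.pos _).ne' hstable) hE
    (fun f ↦ Units.ext (LinearMap.ext fun v ↦ Subtype.ext ?_)) hp b.add_one_pos hpL
    (by rw [← map_pow, hg₁, map_one]) (Units.pow_ofPowEqOne _ _)
  · have hpow : g ^ p ^ (j + b) = g₁ ^ p ^ b := by rw [pow_add, pow_mul]
    have hfinrank : finrank L (LinearMap.ker ((ρ g₁).restrict hstable - 1)) ≤ d :=
      (finrank_ker_restrict_sub_one hstable).trans_le (hfin.trans hgd)
    rw [← map_pow, Nat.add_sub_cancel] at key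
    rw [hpow]
    refine key.trans ?_
    unfold commutatorIndexBound
    gcongr 16 * ?_ ^ 2 * (?_ + 1) ^ 2 * _
    · exact Nat.pow_le_pow_right hp.pos (by omega)
    · exact hfinrank
  · change ρ g₁ (ρ f v) = ρ (g₁ * f * g₁⁻¹) (ρ g₁ v)
    rw [← Module.End.mul_apply, ← Module.End.mul_apply, ← map_mul, ← map_mul,
      inv_mul_cancel_right]

lemma IsClassTwoOver.relIndex_centralizerMod_weightRadical_le (h : IsClassTwoOver A E)
    (hE : (Nat.card E : L) ≠ 0) (D : ProjectionFamily (weightSpace ρ A)) {χ : Weight A L}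
    (hχ : weightSpace ρ A χ ≠ ⊥) (hp : p.Prime) (hpL : (p : L) ≠ 0) {N : Subgroup Γ} (hEN : E ≤ N)
    (hN : ∀ x ∈ N, x • χ = χ) [((h.weightRadical ρ χ).subgroupOf N).Normal] {s : N}
    (hs : IsPowOfFewFixedPoints ρ p n d (s : Γ)) :
    (centralizerMod ((h.weightRadical ρ χ).subgroupOf N) s).relIndex (E.subgroupOf N) ≤
      commutatorIndexBound (p ^ (n + 1)) d := by
  set H := centralizerMod ((h.weightRadical ρ χ).subgroupOf N) s
  have hmem (e : {e : E // h.commutatorWeight χ (conjPerm E s e) = h.commutatorWeight χ e}) :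
      (⟨e.1, hEN e.1.2⟩ : N) ∈ H := by
    refine mem_centralizerMod.2 (mem_subgroupOf.2 ?_)
    have hrad := h.conj_mem_weightRadical (hN _ (N.inv_mem (N.mul_mem (hEN e.1.2) s.2)))
      ((h.commutatorWeight_eq_iff (ρ := ρ) hχ _ _).1 e.2)
    convert hrad using 1
    simp only [conjPerm_apply, Subgroup.coe_mul, Subgroup.coe_inv]
    group
  have hcard : Nat.card {e : E // h.commutatorWeight χ (conjPerm E s e) = h.commutatorWeight χ e} ≤
      Nat.card (H.subgroupOf (E.subgroupOf N)) := by
    refine Nat.card_le_card_of_injective (fun e ↦ ⟨⟨⟨e.1, hEN e.1.2⟩, e.1.2⟩, hmem e⟩)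
      fun e e' h ↦ ?_
    exact Subtype.ext (Subtype.ext (congrArg (fun x ↦ (x.1.1.1 : Γ)) h))
  refine Nat.le_of_mul_le_mul_right ?_ (Nat.card_pos (α := H.subgroupOf (E.subgroupOf N)))
  calc H.relIndex (E.subgroupOf N) * Nat.card (H.subgroupOf (E.subgroupOf N))
      = Nat.card (E.subgroupOf N) := index_mul_card _
    _ = Nat.card E := Nat.card_congr (subgroupOfEquivOfLe hEN).toEquiv
    _ ≤ _ := h.card_le_mul_card_smul_commutatorWeight_eq hE D hχ hp hpL hs (hN s s.2)
    _ ≤ _ := Nat.mul_le_mul_left _ hcard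

variable [Group.IsSolvable Γ] {S : Set Γ}

lemma IsClassTwoOver.exists_iteratedCommutator_le_weightRadical (h : IsClassTwoOver A E)
    (hE : (Nat.card E : L) ≠ 0) (D : ProjectionFamily (weightSpace ρ A)) {χ : Weight A L}
    (hχ : weightSpace ρ A χ ≠ ⊥) (hp : p.Prime) (hpL : (p : L) ≠ 0)
    (hS : ∀ s ∈ S, IsPowOfFewFixedPoints ρ p n d s) (hES : E ≤ closure S)
    (hfix : ∀ s ∈ S, s • χ = χ) :
    ∃ i, iteratedCommutator E (iteratedDerived (closure S)
      (boundedRankDepth p (commutatorIndexBound (p ^ (n + 1)) d))) i ≤ h.weightRadical ρ χ := by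
  have hN : closure S ≤ MulAction.stabilizer Γ χ := (closure_le _).2 hfix
  have hRE := h.weightRadical_le ρ χ
  have hnormal : ((h.weightRadical ρ χ).subgroupOf (closure S)).Normal :=
    ⟨fun e he x ↦ h.conj_mem_weightRadical (hN x.2) he⟩
  obtain ⟨i, hi⟩ := exists_iteratedCommutator_iteratedDerived_le
    (B := (h.weightRadical ρ χ).subgroupOf (closure S)) (E := E.subgroupOf (closure S))
    (comap_mono hRE) closure_closure_coe_preimage hp.pos
    (fun s hs ↦ Subtype.ext (hS s hs).pow_eq_one)
    fun s hs ↦ h.relIndex_centralizerMod_weightRadical_le hE D hχ hp hpL hES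
      (fun x hx ↦ hN hx) (hS s hs)
  refine ⟨i, ?_⟩
  have hmap := map_mono (f := (closure S).subtype) hi
  rw [map_iteratedCommutator, map_iteratedDerived, subgroupOf_map_subtype, subgroupOf_map_subtype,
    inf_eq_left.2 hES, ← MonoidHom.range_eq_map, range_subtype] at hmap
  exact hmap.trans inf_le_left

lemma IsClassTwoOver.exists_iteratedCommutator_le_weightRadical_of_le (h : IsClassTwoOver A E)
    (hE : (Nat.card E : L) ≠ 0) (D : ProjectionFamily (weightSpace ρ A)) {χ : Weight A L}
    (hχ : weightSpace ρ A χ ≠ ⊥) (hp : p.Prime) (hpL : (p : L) ≠ 0)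
    (hS : ∀ s ∈ S, IsPowOfFewFixedPoints ρ p n d s) (hES : E ≤ closure S) {K P : Subgroup Γ}
    (hK : ∀ x ∈ K, x • χ = χ) (hPK : P ≤ iteratedDerived K (d ^ 2).factorial)
    (hPS : P ≤ iteratedDerived (closure S)
      (boundedRankDepth p (commutatorIndexBound (p ^ (n + 1)) d))) :
    ∃ i, iteratedCommutator E P i ≤ h.weightRadical ρ χ := by
  by_cases hfix : ∀ s ∈ S, s • χ = χ
  · obtain ⟨i, hi⟩ := h.exists_iteratedCommutator_le_weightRadical hE D hχ hp hpL hS hES hfix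
    exact ⟨i, (iteratedCommutator_mono E hPS i).trans hi⟩
  · push Not at hfix
    obtain ⟨s, hs, hsχ⟩ := hfix
    have hP := h.smul_commutatorWeight_eq_of_mem_iteratedDerived hχ hE
      ((hS s hs).finrank_weightSpace_le D hp hsχ) hK
    exact ⟨1, h.commutator_le_weightRadical hχ
      (fun x hx ↦ hK x (iteratedDerived_le K _ (hPK hx))) fun x hx ↦ hP x (hPK hx)⟩

variable {l : ℕ} [Fact l.Prime] [CharP L l]

lemma iteratedDerived_le_centralizer_of_isPowOfFewFixedPoints (hρ : Function.Injective ρ)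
    (hΓ : HasTrivialPCore l Γ) (hp : p.Prime) (hS : ∀ s ∈ S, IsPowOfFewFixedPoints ρ p n d s)
    (C : Subgroup Γ) [C.Normal] [IsMulCommutative C] :
    iteratedDerived (closure S) (abelianDepth (p ^ (n + 1)) d) ≤ centralizer (C : Set Γ) := by
  obtain ⟨D⟩ := nonempty_projectionFamily_weightSpace (ρ := ρ) (hΓ.card_ne_zero L C)
  refine fun x hx ↦ mem_centralizer_iff.2 fun a ha ↦ Eq.symm ?_
  refine iteratedDerived_commute_of_card_moved_weights_le hρ D (fun s hs X hX ↦ ?_) x hx a ha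
  obtain ⟨g, hg, hgd, rfl⟩ := hS s hs
  refine (D.card_le_mul_finrank_ker (g := ρ g) (τ := MulAction.toPermHom Γ (Weight C L) g)
    (a := n + 1) (fun _ _ hv ↦ map_mem_weightSpace g hv) hp ?_ ?_ X
      fun χ hχ ↦ ⟨(hX χ hχ).1, ?_⟩).trans (Nat.mul_le_mul_left _ hgd)
  · rw [← map_pow, hg, map_one]
  · rw [← map_pow, hg, map_one]
  · rw [← map_pow]
    exact (hX χ hχ).2

theorem commutator_nilpotentResidual_eq_bot (hρ : Function.Injective ρ) (hΓ : HasTrivialPCore l Γ)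
    (hp : p.Prime) (hpL : (p : L) ≠ 0) (hS : ∀ s ∈ S, IsPowOfFewFixedPoints ρ p n d s)
    [(closure S).Normal] :
    ⁅nilpotentResidual (iteratedDerived (closure S) (fixedPointDepth p (p ^ (n + 1)) d)),
      nilpotentResidual (iteratedDerived (closure S) (fixedPointDepth p (p ^ (n + 1)) d))⁆ = ⊥ := by
  set N := closure S
  set P := iteratedDerived N (fixedPointDepth p (p ^ (n + 1)) d)
  set K := iteratedDerived N (abelianDepth (p ^ (n + 1)) d)
  have hPK : P ≤ iteratedDerived K (d ^ 2).factorial := by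
    rw [← iteratedDerived_add]
    exact iteratedDerived_antitone N (Nat.le_add_right _ _)
  have hPN : P ≤ iteratedDerived N
      (boundedRankDepth p (commutatorIndexBound (p ^ (n + 1)) d)) :=
    iteratedDerived_antitone N (Nat.le_add_left _ _)
  have hcent (C : Subgroup Γ) (_ : C.Normal) (_ : IsMulCommutative C) :
      K ≤ centralizer (C : Set Γ) :=
    iteratedDerived_le_centralizer_of_isPowOfFewFixedPoints hρ hΓ hp hS C
  refine commutator_self_eq_bot_of_forall_isClassTwoOver (P := P)
    (fun C hC hC' ↦ (hPK.trans (iteratedDerived_le K _)).trans (hcent C hC hC'))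
    fun E _ hED h ↦ ?_
  have := h.isNilpotent
  obtain ⟨D⟩ := nonempty_projectionFamily_weightSpace (ρ := ρ)
    (hΓ.card_ne_zero L (relCenter (nilpotentResidual P)))
  have hEN : E ≤ N := hED.trans ((nilpotentResidual_le P).trans (iteratedDerived_le N _))
  have hrad (χ) (hχ : χ ∈ D.support) : ∃ i, iteratedCommutator E P i ≤ h.weightRadical ρ χ :=
    h.exists_iteratedCommutator_le_weightRadical_of_le (hΓ.card_ne_zero L E) D
      ((D.mem_support χ).1 hχ) hp hpL hS hEN (fun x hx ↦ smul_weight_eq_of_commute (fun a ha ↦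
        (mem_centralizer_iff.1 (hcent _ inferInstance inferInstance hx) a ha).symm) χ) hPK hPN
  choose! i hi using hrad
  exact ⟨D.support.sup i, iInf_le _ _, h.iteratedCommutator_le_relCenter hρ D fun χ hχ ↦
    (iteratedCommutator_antitone E P (Finset.le_sup hχ)).trans (hi χ hχ)⟩

end FewFixedPoints

/-! ### Elements of prime power order acting on `p'`-chief factors -/

section ResidualCommutator

variable {Γ Δ : Type*} [Group Γ] [Group Δ]

/-- The derived subgroup of the nilpotent residual of the `k`-th derived subgroup of `N`. -/
def residualCommutator (N : Subgroup Γ) (k : ℕ) : Subgroup Γ :=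
  ⁅nilpotentResidual (iteratedDerived N k), nilpotentResidual (iteratedDerived N k)⁆

instance residualCommutator_normal (N : Subgroup Γ) [N.Normal] (k : ℕ) :
    (residualCommutator N k).Normal := by
  unfold residualCommutator
  infer_instance

lemma map_residualCommutator_le (f : Γ →* Δ) (N : Subgroup Γ) (k : ℕ) :
    (residualCommutator N k).map f ≤ residualCommutator (N.map f) k := by
  rw [residualCommutator, map_commutator, residualCommutator, ← map_iteratedDerived]
  exact Subgroup.commutator_mono (map_nilpotentResidual_le _ _) (map_nilpotentResidual_le _ _)

lemma NilpotentChain.residualCommutator [Finite Γ] (N : Subgroup Γ) [N.Normal] (k : ℕ) :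
    NilpotentChain (residualCommutator N k) N (k + (1 + 1)) :=
  (NilpotentChain.iteratedDerived N k).trans inferInstance <|
    (NilpotentChain.nilpotentResidual _).trans inferInstance <|
      .one (n := 1) (commutator_le_self _) le_rfl

end ResidualCommutator

section FixedPoints

variable {Γ : Type*} [Group Γ] {p n m : ℕ} {g : Γ}

lemma finrank_ker_conj_sub_one_le {L M : Type*} [Field L] [AddCommGroup M] [Module L M]
    [FiniteDimensional L M] (ρ : Representation L Γ M) (y g : Γ) :
    finrank L (LinearMap.ker (ρ (y * g * y⁻¹) - 1)) ≤ finrank L (LinearMap.ker (ρ g - 1)) := by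
  have hle : LinearMap.ker (ρ (y * g * y⁻¹) - 1) ≤ (LinearMap.ker (ρ g - 1)).map (ρ y) := by
    intro v hv
    refine ⟨ρ y⁻¹ v, ?_, ρ.self_inv_apply y v⟩
    rw [SetLike.mem_coe, LinearMap.mem_ker, LinearMap.sub_apply, Module.End.one_apply,
      sub_eq_zero] at *
    conv_rhs => rw [← hv]
    simp only [map_mul, Module.End.mul_apply, ρ.inv_self_apply]
  exact (Submodule.finrank_mono hle).trans (Submodule.finrank_map_le _ _)

lemma isPowOfFewFixedPoints_of_mem_conjugatesOfSet {L M : Type*} [Field L] [AddCommGroup M]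
    [Module L M] [FiniteDimensional L M] {ρ : Representation L Γ M} (hg : g ^ p ^ (n + 1) = 1)
    (hm : finrank L (LinearMap.ker (ρ g - 1)) ≤ m) {s : Γ}
    (hs : s ∈ Group.conjugatesOfSet {g ^ p ^ n}) : IsPowOfFewFixedPoints ρ p n m s := by
  obtain ⟨_, rfl, hconj⟩ := Group.mem_conjugatesOfSet_iff.1 hs
  obtain ⟨y, rfl⟩ := isConj_iff.1 hconj
  refine ⟨y * g * y⁻¹, ?_, (finrank_ker_conj_sub_one_le ρ y g).trans hm, conj_pow⟩
  rw [conj_pow, hg, mul_one, mul_inv_cancel]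

variable [Finite Γ] [Group.IsSolvable Γ]

lemma IsChiefFactor.residualCommutator_le_centralizer {W : Subgroup Γ} (hW : IsChiefFactor ⊥ W)
    (hp : p.Prime) (hpW : ¬ p ∣ Nat.card W) (hg : g ^ p ^ (n + 1) = 1)
    (hm : Nat.card ↥(centralizer {g} ⊓ W) ≤ m) :
    residualCommutator (normalClosure {g ^ p ^ n}) (fixedPointDepth p (p ^ (n + 1)) m) ≤
      centralizer (W : Set Γ) := by
  have := hW.normal_top
  have := hW.isMulCommutative
  obtain ⟨l, hl, ⟨hmod⟩⟩ := hW.exists_nonempty_module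
  have : Fact l.Prime := ⟨hl⟩
  let L := AlgebraicClosure (ZMod l)
  have : CharP L l := charP_of_injective_algebraMap (algebraMap (ZMod l) L).injective l
  have hpL : (p : L) ≠ 0 := by
    rw [Ne, CharP.cast_eq_zero_iff L l, Nat.prime_dvd_prime_iff_eq hl hp]
    rintro rfl
    exact hpW (dvd_card_of_module hW.lt.ne')
  let π := QuotientGroup.mk' (centralizer (W : Set Γ))
  have hfinrank : finrank L (LinearMap.ker (faithfulConjRep W l L (π g) - 1)) ≤ m :=
    ((Nat.lt_pow_self hl.one_lt).le.trans
      (pow_finrank_ker_faithfulConjRep_sub_one W l L g).le).trans hm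
  have hπg : π g ^ p ^ (n + 1) = 1 := by rw [← map_pow, hg, map_one]
  have : (closure (Group.conjugatesOfSet {π g ^ p ^ n})).Normal := normalClosure_normal
  have hbot : residualCommutator (normalClosure {π g ^ p ^ n})
      (fixedPointDepth p (p ^ (n + 1)) m) = ⊥ :=
    commutator_nilpotentResidual_eq_bot (faithfulConjRep_injective W l L)
      (hW.hasTrivialPCore (l := l)) hp hpL fun _ hs ↦
        isPowOfFewFixedPoints_of_mem_conjugatesOfSet hπg hfinrank hs
  have hmap := map_residualCommutator_le π (normalClosure {g ^ p ^ n})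
    (fixedPointDepth p (p ^ (n + 1)) m)
  rw [map_normalClosure _ _ (QuotientGroup.mk'_surjective _), Set.image_singleton, map_pow, hbot,
    le_bot_iff, Subgroup.map_eq_bot_iff, QuotientGroup.ker_mk'] at hmap
  exact hmap

lemma IsChiefFactor.commutator_residualCommutator_le {M₁ M₀ : Subgroup Γ} [M₁.Normal]
    (h : IsChiefFactor M₁ M₀) (hp : p.Prime) (hpM : ¬ p ∣ M₁.relIndex M₀)
    (hg : g ^ p ^ (n + 1) = 1)
    (hm : M₁.relIndex (centralizerMod M₁ g ⊓ M₀) ≤ m) :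
    ⁅M₀, residualCommutator (normalClosure {g ^ p ^ n}) (fixedPointDepth p (p ^ (n + 1)) m)⁆ ≤
      M₁ := by
  rw [commutator_le_iff_map_mk_le_centralizer]
  refine (map_residualCommutator_le _ _ _).trans ?_
  rw [map_normalClosure _ _ (QuotientGroup.mk'_surjective _), Set.image_singleton, map_pow]
  refine h.map_mk.residualCommutator_le_centralizer hp (relIndex_eq_card_map_mk M₁ M₀ ▸ hpM) ?_
    (relIndex_centralizerMod_inf M₁ M₀ g ▸ hm)
  rw [← map_pow, hg, map_one]

end FixedPoints

section CentralizingPPrimeChiefFactors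

variable {Γ : Type*} [Group Γ] {p : ℕ}

/-- The subgroup `Y` centralizes every chief factor of `Γ` inside `Y` whose order is not
divisible by `p`. -/
def CentralizesPPrimeChiefFactors (p : ℕ) (Y : Subgroup Γ) : Prop :=
  ∀ M₁ M₀, IsChiefFactor M₁ M₀ → M₀ ≤ Y → ¬ p ∣ M₁.relIndex M₀ → ⁅M₀, Y⁆ ≤ M₁

lemma exists_maximal_normal_isPGroup [Finite Γ] (p : ℕ) (D : Subgroup Γ) :
    ∃ P, Maximal (fun P : Subgroup Γ ↦ P.Normal ∧ P ≤ D ∧ IsPGroup p P) P :=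
  (Set.toFinite {P : Subgroup Γ | P.Normal ∧ P ≤ D ∧ IsPGroup p P}).exists_maximal
    ⟨⊥, inferInstance, bot_le, .of_bot⟩

lemma not_dvd_card_of_le_map_mk [Finite Γ] [Fact p.Prime] {D P : Subgroup Γ} [P.Normal]
    (hP : Maximal (fun P : Subgroup Γ ↦ P.Normal ∧ P ≤ D ∧ IsPGroup p P) P)
    {E : Subgroup (Γ ⧸ P)} [E.Normal] [Group.IsNilpotent E]
    (hE : E ≤ D.map (QuotientGroup.mk' P)) : ¬ p ∣ Nat.card E := by
  refine not_dvd_card_of_isNilpotent E fun Q hQ hQE hQp ↦ ?_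
  have hQD : Q.comap (QuotientGroup.mk' P) ≤ D := by
    refine (comap_mono (hQE.trans hE)).trans_eq ?_
    rw [comap_map_eq, QuotientGroup.ker_mk', sup_eq_left.2 hP.prop.2.1]
  have hker : IsPGroup p (QuotientGroup.mk' P).ker := by
    rw [QuotientGroup.ker_mk']
    exact hP.prop.2.2
  have hle := hP.2 ⟨inferInstance, hQD, hQp.comap_of_ker_isPGroup _ hker⟩
    (QuotientGroup.le_comap_mk' P Q)
  refine (Subgroup.eq_bot_iff_forall _).2 fun z hz ↦ ?_
  obtain ⟨x, rfl⟩ := QuotientGroup.mk_surjective z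
  exact (QuotientGroup.eq_one_iff x).2 (hle hz)

variable [Finite Γ] {Y : Subgroup Γ} [Y.Normal]

lemma CentralizesPPrimeChiefFactors.commutator_le (hY : CentralizesPPrimeChiefFactors p Y)
    {P E : Subgroup Γ} [P.Normal] [E.Normal] (hPE : P ≤ E) (hEY : E ≤ Y)
    (hpE : ¬ p ∣ P.relIndex E) : ⁅E, nilpotentResidual Y⁆ ≤ P := by
  obtain ⟨i, hi⟩ := exists_iteratedCommutator_le Y hPE fun M₁ M₀ h hPM₁ hM₀E ↦
    hY M₁ M₀ h (hM₀E.trans hEY) fun hdvd ↦ hpE <| hdvd.trans <|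
      (relIndex_dvd_of_le_left M₀ hPM₁).trans <|
        Dvd.intro _ (relIndex_mul_relIndex P M₀ E (hPM₁.trans h.lt.le) hM₀E)
  exact (commutator_nilpotentResidual_le E Y i).trans hi

lemma CentralizesPPrimeChiefFactors.commutator_nilpotentResidual_le [Group.IsSolvable Γ]
    [Fact p.Prime] (hY : CentralizesPPrimeChiefFactors p Y) {P : Subgroup Γ} [P.Normal]
    (hP : Maximal (fun P : Subgroup Γ ↦ P.Normal ∧ P ≤ nilpotentResidual Y ∧ IsPGroup p P) P) :
    ⁅nilpotentResidual Y, nilpotentResidual Y⁆ ≤ P := by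
  set D := nilpotentResidual Y
  have hsurj := QuotientGroup.mk'_surjective P
  have : (D.map (QuotientGroup.mk' P)).Normal := Subgroup.Normal.map inferInstance _ hsurj
  rw [commutator_le_iff_map_mk_le_centralizer]
  by_cases hD : D.map (QuotientGroup.mk' P) ≤ relCenter (D.map (QuotientGroup.mk' P))
  · exact hD.trans inf_le_right
  obtain ⟨E, hE, hED, hnot, hclass⟩ := exists_isClassTwoOver_relCenter hD
  have := hclass.isNilpotent
  have hEY : E.comap (QuotientGroup.mk' P) ≤ Y := by
    refine ((comap_mono hED).trans_eq ?_).trans (nilpotentResidual_le Y)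
    rw [comap_map_eq, QuotientGroup.ker_mk', sup_eq_left.2 hP.prop.2.1]
  have hcomm := hY.commutator_le (QuotientGroup.le_comap_mk' P E) hEY <| by
    rw [relIndex_eq_card_map_mk, map_comap_eq_self_of_surjective hsurj]
    exact not_dvd_card_of_le_map_mk hP hED
  rw [commutator_le_iff_map_mk_le_centralizer, map_comap_eq_self_of_surjective hsurj,
    le_centralizer_iff] at hcomm
  exact (hnot (le_inf hED hcomm)).elim

lemma CentralizesPPrimeChiefFactors.nilpotentChain [Group.IsSolvable Γ] (hp : p.Prime)
    (hY : CentralizesPPrimeChiefFactors p Y) : NilpotentChain ⊥ Y 3 := by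
  have : Fact p.Prime := ⟨hp⟩
  obtain ⟨P, hP⟩ := exists_maximal_normal_isPGroup p (nilpotentResidual Y)
  have := hP.prop.1
  have : Group.IsNilpotent P := hP.prop.2.2.isNilpotent
  obtain ⟨k, hk⟩ := P.isNilpotent_iff_lowerCentralSeries.1 this
  exact (NilpotentChain.nilpotentResidual Y).trans inferInstance <|
    (NilpotentChain.one (n := 1) hP.prop.2.1 (hY.commutator_nilpotentResidual_le hP)).trans
      inferInstance (.one bot_le hk.le)

end CentralizingPPrimeChiefFactors

/-! ### Elements with few fixed points on `p'`-chief factors -/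

section FixedPointsBounded

variable {X : Type*} [Group X] {p m n : ℕ}

/-- The element `g` has at most `m` fixed points on every chief factor `M₀ / M₁` of `X` of order
prime to `p` that is covered by the derived subgroup. -/
def FixedPointsBounded (p m : ℕ) (g : X) : Prop :=
  ∀ (M₁ M₀ : Subgroup X) [M₁.Normal], IsChiefFactor M₁ M₀ → M₀ ≤ M₁ ⊔ ⁅(⊤ : Subgroup X), ⊤⁆ →
    ¬ p ∣ M₁.relIndex M₀ → M₁.relIndex (centralizerMod M₁ g ⊓ M₀) ≤ m

section Surjective

variable {Z : Type*} [Group Z] {f : X →* Z}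

lemma IsChiefFactor.comap (hf : Function.Surjective f) {M₁ M₀ : Subgroup Z}
    (h : IsChiefFactor M₁ M₀) : IsChiefFactor (M₁.comap f) (M₀.comap f) := by
  have := h.normal_bot
  have := h.normal_top
  refine ⟨inferInstance, inferInstance, (comap_lt_comap_of_surjective hf).2 h.lt,
    fun F hF hle hge ↦ ?_⟩
  have hF_eq : (F.map f).comap f = F :=
    comap_map_eq_self ((ker_le_comap f M₁).trans hle)
  rw [← hF_eq]
  refine (h.eq_or_eq (F.map f) (hF.map f hf) ?_ (map_le_iff_le_comap.2 hge)).imp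
    (congrArg (Subgroup.comap f)) (congrArg (Subgroup.comap f))
  rw [← map_comap_eq_self_of_surjective hf M₁]
  exact map_mono hle

lemma FixedPointsBounded.map (hf : Function.Surjective f) {g : X}
    (hg : FixedPointsBounded p m g) : FixedPointsBounded p m (f g) := by
  intro M₁ M₀ _ h hle hpM
  have hrel (K : Subgroup Z) : (M₁.comap f).relIndex (K.comap f) = M₁.relIndex K := by
    rw [relIndex_comap, map_comap_eq_self_of_surjective hf]
  rw [← hrel, comap_inf, comap_centralizerMod]
  refine hg _ _ (h.comap hf) ?_ (hrel M₀ ▸ hpM)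
  refine (comap_mono hle).trans_eq ?_
  rw [← map_top_of_surjective f hf, ← map_commutator, ← comap_sup_eq f _ _ hf, comap_map_eq,
    ← sup_assoc, sup_right_comm, sup_eq_left.2 (ker_le_comap f M₁)]

end Surjective

variable [Finite X] [Group.IsSolvable X] {g : X}

lemma FixedPointsBounded.centralizesPPrimeChiefFactors_iteratedDerived
    (h : FixedPointsBounded p m (1 : X)) :
    CentralizesPPrimeChiefFactors p (iteratedDerived (⊤ : Subgroup X) (m.factorial + 1)) := by
  intro M₁ M₀ hM hle hpM
  have := hM.normal_bot
  have := hM.normal_top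
  have htop : centralizerMod M₁ (1 : X) = ⊤ :=
    eq_top_iff.2 fun x _ ↦ mem_centralizerMod.2 (by simp [M₁.one_mem])
  have hcard := h M₁ M₀ hM ((hle.trans (Subgroup.commutator_mono le_top le_top)).trans le_sup_right)
    hpM
  rw [htop, top_inf_eq] at hcard
  exact (Subgroup.commutator_mono le_rfl (iteratedDerived_antitone _ (Nat.le_succ _))).trans
    (commutator_iteratedDerived_le_of_relIndex_le hcard)

lemma FixedPointsBounded.centralizesPPrimeChiefFactors_residualCommutator
    (h : FixedPointsBounded p m g) (hp : p.Prime) (hg : g ^ p ^ (n + 1) = 1) :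
    CentralizesPPrimeChiefFactors p
      (residualCommutator (normalClosure {g ^ p ^ n}) (fixedPointDepth p (p ^ (n + 1)) m)) := by
  intro M₁ M₀ hM hle hpM
  have := hM.normal_bot
  exact hM.commutator_residualCommutator_le hp hpM hg <| h M₁ M₀ hM
    ((hle.trans (Subgroup.commutator_mono le_top le_top)).trans le_sup_right) hpM

/-- A bound for the length of a chain with nilpotent factors in a group having an element of
order dividing `p ^ n` with at most `m` fixed points on chief factors of order prime to `p`. -/
def chainLengthBound (p m : ℕ) : ℕ → ℕ
  | 0 => m.factorial + 1 + 3
  | n + 1 => chainLengthBound p m n + (fixedPointDepth p (p ^ (n + 1)) m + (1 + 1) + 3)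

theorem FixedPointsBounded.nilpotentChain (h : FixedPointsBounded p m g) (hp : p.Prime)
    (hg : g ^ p ^ n = 1) : NilpotentChain (⊥ : Subgroup X) ⊤ (chainLengthBound p m n) := by
  induction n generalizing X with
  | zero =>
    obtain rfl : g = 1 := by rwa [pow_zero, pow_one] at hg
    exact (NilpotentChain.iteratedDerived ⊤ _).trans inferInstance
      (h.centralizesPPrimeChiefFactors_iteratedDerived.nilpotentChain hp)
  | succ n ih =>
    let N := normalClosure {g ^ p ^ n}
    have hquot := (ih (h.map (QuotientGroup.mk'_surjective N)) <| by
      rw [← map_pow]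
      exact (QuotientGroup.eq_one_iff _).2 (subset_normalClosure rfl)).comap (QuotientGroup.mk' N)
    rw [Subgroup.comap_top, MonoidHom.comap_bot, QuotientGroup.ker_mk'] at hquot
    exact hquot.trans inferInstance <|
      (NilpotentChain.residualCommutator N _).trans inferInstance
        ((h.centralizesPPrimeChiefFactors_residualCommutator hp hg).nilpotentChain hp)

end FixedPointsBounded

/-! ### The semidirect product with a cyclic group of automorphisms -/

section Semidirect

open SemidirectProduct

variable {G : Type*} [Group G] (φ : MulAut G)

/-- The semidirect product of `G` with the cyclic group generated by its automorphism `φ`. -/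
abbrev AutSemidirect : Type _ := G ⋊[(zpowers φ).subtype] zpowers φ

/-- The automorphism `φ` as an element of its semidirect product with `G`. -/
def autElement : AutSemidirect φ := inr ⟨φ, mem_zpowers φ⟩

lemma inl_apply_eq_conj (a : G) :
    (inl (φ a) : AutSemidirect φ) = autElement φ * inl a * (autElement φ)⁻¹ := by
  have := inl_aut (φ := (zpowers φ).subtype) ⟨φ, mem_zpowers φ⟩ a
  rwa [map_inv] at this

lemma autElement_pow_eq_one {φ : MulAut G} {k : ℕ} (hφ : φ ^ k = 1) : autElement φ ^ k = 1 := by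
  rw [autElement, ← map_pow, SubmonoidClass.mk_pow]
  simp only [hφ]
  exact map_one inr

lemma commutator_top_le_range_inl :
    ⁅(⊤ : Subgroup (AutSemidirect φ)), ⊤⁆ ≤ (inl : G →* AutSemidirect φ).range := by
  rw [range_inl_eq_ker_rightHom, Subgroup.commutator_le]
  intro a _ b _
  rw [MonoidHom.mem_ker, map_commutatorElement, commutatorElement_eq_one_iff_mul_comm]
  exact IsMulCommutative.is_comm.comm (rightHom a : zpowers φ) (rightHom b)

variable {φ}

lemma inv_mul_apply_mem_comap_inl {M : Subgroup (AutSemidirect φ)} [M.Normal] {a : G}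
    (ha : inl a ∈ centralizerMod M (autElement φ)) : a⁻¹ * φ a ∈ M.comap inl := by
  have hconj := ‹M.Normal›.conj_mem _ (mem_centralizerMod.1 ha) (autElement φ)
  rw [mem_comap, map_mul, map_inv, inl_apply_eq_conj]
  convert hconj using 1
  group

lemma relIndex_comap_inl_of_le_sup {M C : Subgroup (AutSemidirect φ)} [M.Normal] (hMC : M ≤ C)
    (hC : C ≤ M ⊔ ⁅(⊤ : Subgroup (AutSemidirect φ)), ⊤⁆) :
    (M.comap inl).relIndex (C.comap inl) = M.relIndex C := by
  rw [relIndex_comap, ← relIndex_sup_right]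
  congr 1
  refine le_antisymm (sup_le (map_comap_le _ _) hMC) fun c hc ↦ ?_
  obtain ⟨x, hx, y, hy, rfl⟩ := mem_sup_of_normal_left.1 (hC hc)
  obtain ⟨a, rfl⟩ := commutator_top_le_range_inl φ hy
  refine mul_mem (mem_sup_right hx) (mem_sup_left (mem_map_of_mem inl ?_))
  exact (C.mul_mem_cancel_left (hMC hx)).1 hc

variable [Finite G]

lemma phiInvariant_comap_inl (M : Subgroup (AutSemidirect φ)) [hM : M.Normal] :
    PhiInvariant φ (M.comap inl) := by
  refine eq_of_le_of_card_ge ?_ (card_map_of_injective φ.injective).ge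
  rintro _ ⟨a, ha, rfl⟩
  rw [mem_comap, MulEquiv.coe_toMonoidHom, inl_apply_eq_conj]
  exact hM.conj_mem _ ha _

lemma relIndex_le_sectionFixedCard {A B K : Subgroup G} (hK : K ≤ A)
    (hfix : ∀ a ∈ K, a⁻¹ * φ a ∈ B) : B.relIndex K ≤ sectionFixedCard φ A B := by
  let ι := quotientSubgroupOfEmbeddingOfLE B hK
  have hι (x : K ⧸ B.subgroupOf K) : ∃ a : A, QuotientGroup.mk a = ι x ∧ (a : G)⁻¹ * φ a ∈ B := by
    obtain ⟨a, rfl⟩ := QuotientGroup.mk_surjective x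
    exact ⟨⟨a, hK a.2⟩, rfl, hfix a a.2⟩
  exact Nat.card_le_card_of_injective (fun x ↦ ⟨ι x, hι x⟩)
    fun _ _ h ↦ ι.injective (congrArg Subtype.val h)

variable {p m n : ℕ} [Group.IsSolvable G]

instance : Finite (AutSemidirect φ) :=
  .of_equiv _ (equivProd (φ := (zpowers φ).subtype)).symm

instance : Group.IsSolvable (AutSemidirect φ) :=
  Group.isSolvable_of_ker_le_range inl rightHom range_inl_eq_ker_rightHom.ge

lemma IsChiefFactor.isElemAbelianPPrimeSection_comap_inl {M₁ M₀ : Subgroup (AutSemidirect φ)}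
    (h : IsChiefFactor M₁ M₀) (hp : ¬ p ∣ M₁.relIndex M₀) :
    IsElemAbelianPPrimeSection p (M₀.comap inl) (M₁.comap inl) := by
  obtain ⟨r, hr, hdvd, hpow⟩ := h.exists_prime_pow_mem
  have := h.normal_bot
  refine ⟨comap_mono h.lt.le, fun a _ b hb ↦ Subgroup.Normal.conj_mem inferInstance b hb a, r, hr,
    fun hrp ↦ hp (hrp ▸ hdvd), fun a ha b hb ↦ ?_, fun a ha ↦ ?_⟩
  · have hcomm := h.commutator_le (commutator_mem_commutator (M₀.inv_mem ha) (M₀.inv_mem hb))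
    rw [commutatorElement_def, inv_inv, inv_inv] at hcomm
    simpa only [mem_comap, map_mul, map_inv] using hcomm
  · rw [mem_comap, map_pow]
    exact hpow _ ha

lemma fixedPointsBounded_autElement
    (h : ∀ A B : Subgroup G, PhiInvariant φ A → PhiInvariant φ B →
      IsElemAbelianPPrimeSection p A B → sectionFixedCard φ A B ≤ m) :
    FixedPointsBounded p m (autElement φ) := by
  intro M₁ M₀ _ hM hle hpM
  have := hM.normal_top
  have hM₁ : M₁ ≤ centralizerMod M₁ (autElement φ) := QuotientGroup.le_comap_mk' M₁ _
  rw [← relIndex_comap_inl_of_le_sup (le_inf hM₁ hM.lt.le) (inf_le_right.trans hle)]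
  exact (relIndex_le_sectionFixedCard (comap_mono inf_le_right) fun a ha ↦
    inv_mul_apply_mem_comap_inl ha.1).trans
      (h _ _ (phiInvariant_comap_inl M₀) (phiInvariant_comap_inl M₁)
        (hM.isElemAbelianPPrimeSection_comap_inl hpM))

theorem fittingHeightLE_chainLengthBound (hp : p.Prime) (hφ : φ ^ p ^ n = 1)
    (h : ∀ A B : Subgroup G, PhiInvariant φ A → PhiInvariant φ B →
      IsElemAbelianPPrimeSection p A B → sectionFixedCard φ A B ≤ m) :
    FittingHeightLE G (chainLengthBound p m n) := by
  have hchain := ((fixedPointsBounded_autElement h).nilpotentChain hp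
    (autElement_pow_eq_one hφ)).comap (inl : G →* AutSemidirect φ)
  rw [Subgroup.comap_top, MonoidHom.comap_bot, (MonoidHom.ker_eq_bot_iff _).2 inl_injective]
    at hchain
  exact hchain.fittingHeightLE

/-- A bound for the Fitting height in terms of `(p ^ n, m)`, whose first entry determines `p` as
its least prime factor and `n` as a logarithm, except that `p` is lost when `n = 0`, where
`chainLengthBound` does not depend on it. -/
def fittingHeightBound (x : ℕ × ℕ) : ℕ :=
  chainLengthBound x.1.minFac x.2 (Nat.log x.1.minFac x.1)

lemma fittingHeightBound_pow (hp : p.Prime) (n m : ℕ) :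
    fittingHeightBound (p ^ n, m) = chainLengthBound p m n := by
  rcases Nat.eq_zero_or_pos n with rfl | hn
  · simp [fittingHeightBound, chainLengthBound]
  · rw [fittingHeightBound, hp.pow_minFac hn.ne', Nat.log_pow hp.one_lt]

end Semidirect

end AlmostFixedPointFree

theorem fittingHeight_bounded_of_almost_fixed_point_free_on_pPrime_sections :
    ∃ f : ℕ × ℕ → ℕ, ∀ (p n m : ℕ), p.Prime →
      ∀ (G : Type) [Group G] [Finite G], IsSolvable G →
        ∀ φ : MulAut G, orderOf φ = p ^ n →
          (∀ A B : Subgroup G, PhiInvariant φ A → PhiInvariant φ B →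
            IsElemAbelianPPrimeSection p A B → sectionFixedCard φ A B ≤ m) →
          FittingHeightLE G (f (p ^ n, m)) := by
  refine ⟨AlmostFixedPointFree.fittingHeightBound, fun p n m hp G _ _ hG φ hφ h ↦ ?_⟩
  have : Group.IsSolvable G := hG
  rw [AlmostFixedPointFree.fittingHeightBound_pow hp]
  exact AlmostFixedPointFree.fittingHeightLE_chainLengthBound hp (hφ ▸ pow_orderOf_eq_one φ) h
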